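/- For every n ≥ 2, the restriction of the Dehornoy ordering <_D to the dual braid monoid B_n^{+*} is a strict well-order on B_n^{+*} (i.e. the relation <_D restricted to B_n^{+*} is trichotomous, transitive and well-founded), and its order type, as an ordinal, is ω^{ω^{n−2}}. -/

import Mathlib

/-- The defining relations of the braid group on `n` strands, inside the free group on
generators indexed by `ℕ`.  Generator `i` corresponds to the Artin generator `σ_i`
(for `1 ≤ i ≤ n-1`); generators with index `0` or `≥ n` are killed. -/
def braidRels (n : ℕ) : Set (FreeGroup ℕ) :=
  {r | (∃ i j : ℕ, 1 ≤ i ∧ i + 2 ≤ j ∧ j ≤ n - 1 ∧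
          r = FreeGroup.of i * FreeGroup.of j * (FreeGroup.of i)⁻¹ * (FreeGroup.of j)⁻¹) ∨
       (∃ i : ℕ, 1 ≤ i ∧ i + 1 ≤ n - 1 ∧
          r = FreeGroup.of i * FreeGroup.of (i+1) * FreeGroup.of i *
              (FreeGroup.of (i+1) * FreeGroup.of i * FreeGroup.of (i+1))⁻¹) ∨
       (∃ i : ℕ, (i = 0 ∨ n ≤ i) ∧ r = FreeGroup.of i)}

/-- The braid group `B_n` on `n` strands. -/
abbrev Braid (n : ℕ) := PresentedGroup (braidRels n)

/-- The Artin generator `σ_i` of `B_n`. -/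
def genσ (n i : ℕ) : Braid n := PresentedGroup.of i

/-- The band generator `a_{i,j} = (σ_{j-1} ⋯ σ_{i+1}) σ_i (σ_{i+1}⁻¹ ⋯ σ_{j-1}⁻¹)`. -/
def band (n i j : ℕ) : Braid n :=
  (((List.range' (i+1) (j-1-i)).reverse.map (genσ n)).prod) * genσ n i *
    (((List.range' (i+1) (j-1-i)).reverse.map (genσ n)).prod)⁻¹

/-- The dual braid monoid `B_n^{+*}`: the submonoid of `B_n` generated by the band
generators `a_{i,j}`, `1 ≤ i < j ≤ n`. -/
def dualMonoid (n : ℕ) : Submonoid (Braid n) :=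
  Submonoid.closure {x | ∃ i j : ℕ, 1 ≤ i ∧ i < j ∧ j ≤ n ∧ x = band n i j}

/-- The submonoid `B_I^{+*}` generated by the band generators `a_{i,j}` with `i, j ∈ I`. -/
def dualMonoidOn (n : ℕ) (I : Set ℕ) : Submonoid (Braid n) :=
  Submonoid.closure {x | ∃ i j : ℕ, i ∈ I ∧ j ∈ I ∧ 1 ≤ i ∧ i < j ∧ j ≤ n ∧ x = band n i j}

/-- Evaluation of a word in the letters `σ_i^{±1}` (a letter is a pair of an index and a
sign, `true` meaning positive). -/
def evalWord (n : ℕ) (w : List (ℕ × Bool)) : Braid n :=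
  (w.map (fun p => if p.2 then genσ n p.1 else (genσ n p.1)⁻¹)).prod

/-- `γ` is `σ_i`-positive: it is represented by a word in the letters `σ_1^{±1}, …,
σ_{n-1}^{±1}` containing at least one `σ_i`, no `σ_i⁻¹`, and no `σ_j^{±1}` with `j < i`. -/
def SigmaPositive (n i : ℕ) (γ : Braid n) : Prop :=
  ∃ w : List (ℕ × Bool),
    (∀ p ∈ w, 1 ≤ p.1 ∧ p.1 ≤ n - 1) ∧
    (i, true) ∈ w ∧ (i, false) ∉ w ∧
    (∀ p ∈ w, i ≤ p.1) ∧
    evalWord n w = γ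

/-- The Dehornoy ordering on `B_n`: `α <_D β` iff `α⁻¹β` is `σ_i`-positive for some `i`. -/
def dehornoyLt (n : ℕ) (α β : Braid n) : Prop :=
  ∃ i : ℕ, 1 ≤ i ∧ i ≤ n - 1 ∧ SigmaPositive n i (α⁻¹ * β)

/-!
The braid `σ_i` acts on a free product of copies of `ℤ/2`, one for each natural number, by the
automorphism sending the `i`-th generator `p` to `p q p` and the next generator `q` to `p`. The
action preserves an ordering of the reduced words by their first difference, and a `σ_i`-positive
braid moves the one-letter word `i` downwards. Hence `<_D` is a strict order, and an inequality
between braids can be read off from their action on the word `1`. It is a total order: any braid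
compares two divisors of a positive braid, and the graph of these divisors, whose edges are labelled
by generators, is acyclic and has confluence properties coming from least common multiples; an
induction on the labels joins any two vertices by a path reading a `σ_i`-positive word, in one of
the two directions.

For the upper bound, every braid `β a β⁻¹` with `a` a generator moves words downwards, so that `<_D`
extends the ordering of braids by insertion of quasipositive factors. For this ordering the maximal
order type of the monoid generated by the bands `a_{i,j}`, with `i` and `j` in the same block of a
partition of `{1, …, n}`, is bounded by induction on the partition, in the manner of Higman's lemma:
bands whose edges form a connected graph have products lying above any given element of the monoid,
so a word avoiding an element is a bounded product of words in fewer bands, and the types of the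
factors are combined by the natural sum.

For the lower bound, positive words indexed by ordinals are built by descending induction on
their smallest letter: words for the ordinals below `τ` with letters greater than `l` serve as
base-`τ` digits separated by the letter `l`, which yields words for the ordinals below `τ ^ ω`.
Comparing the images of the word `1` shows that they are increasing.
-/

namespace Dehornoy

/-! ### The action of braids on reduced words -/

section Words

variable {α : Type*}

/-- Reduced words in the free product of copies of `ℤ/2` indexed by `α`: no letter is repeated
immediately. -/
def Reduced (w : List α) : Prop := w.IsChain (· ≠ ·)

theorem reduced_cons_iff {a : α} {w : List α} :
    Reduced (a :: w) ↔ w.head? ≠ some a ∧ Reduced w := by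
  cases w <;> simp [Reduced, eq_comm]

theorem Reduced.of_cons {a : α} {w : List α} (h : Reduced (a :: w)) : Reduced w :=
  (reduced_cons_iff.1 h).2

theorem Reduced.head?_ne {a : α} {w : List α} (h : Reduced (a :: w)) : w.head? ≠ some a :=
  (reduced_cons_iff.1 h).1

theorem reduced_nil : Reduced ([] : List α) := List.isChain_nil

theorem Reduced.of_append {u v : List α} (h : Reduced (u ++ v)) : Reduced v :=
  h.right_of_append

variable [DecidableEq α]

/-- Left multiplication by the involution `a` on reduced words of the free product of copies of
`ℤ/2`. -/
def cancelCons (a : α) : List α → List α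
  | [] => [a]
  | b :: w => if a = b then w else a :: b :: w

theorem cancelCons_of_head?_ne {a : α} {w : List α} (h : w.head? ≠ some a) :
    cancelCons a w = a :: w := by
  cases w with
  | nil => rfl
  | cons b w => exact if_neg fun hab => h (congrArg some hab.symm)

theorem cancelCons_cons_self (a : α) (w : List α) : cancelCons a (a :: w) = w := if_pos rfl

theorem Reduced.cancelCons {a : α} {w : List α} (h : Reduced w) : Reduced (cancelCons a w) := by
  by_cases ha : w.head? = some a
  · obtain ⟨t, rfl⟩ := List.head?_eq_some_iff.1 ha
    simpa only [cancelCons_cons_self] using h.of_cons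
  · rw [cancelCons_of_head?_ne ha]
    exact reduced_cons_iff.2 ⟨ha, h⟩

theorem Reduced.cancelCons_cancelCons {a : α} {w : List α} (h : Reduced w) :
    Dehornoy.cancelCons a (Dehornoy.cancelCons a w) = w := by
  by_cases ha : w.head? = some a
  · obtain ⟨t, rfl⟩ := List.head?_eq_some_iff.1 ha
    rw [cancelCons_cons_self, cancelCons_of_head?_ne h.head?_ne]
  · rw [cancelCons_of_head?_ne ha, cancelCons_cons_self]

theorem mem_of_mem_cancelCons {a b : α} {w : List α} (h : b ∈ cancelCons a w) :
    b = a ∨ b ∈ w := by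
  cases w with
  | nil => simpa [cancelCons] using h
  | cons c w =>
    rw [cancelCons] at h
    split_ifs at h <;> simp_all

theorem cancelCons_append {a : α} {u v : List α} (h : v.head? ≠ some a) :
    cancelCons a (u ++ v) = cancelCons a u ++ v := by
  cases u with
  | nil => exact cancelCons_of_head?_ne h
  | cons b u => simp only [List.cons_append, cancelCons]; split_ifs <;> rfl

/-- Left multiplication by the image of the letter `a` under `twist p q`. -/
def twistLetter (p q a : α) (w : List α) : List α :=
  if a = p then cancelCons p (cancelCons q (cancelCons p w))
  else if a = q then cancelCons p w
  else cancelCons a w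

/-- The action on reduced words of the automorphism of the free product of copies of `ℤ/2` that
sends `p` to `p q p`, sends `q` to `p`, and fixes the other generators. -/
def twist (p q : α) (w : List α) : List α := w.foldr (twistLetter p q) []

theorem twist_nil (p q : α) : twist p q [] = [] := rfl

theorem twist_cons (p q a : α) (w : List α) :
    twist p q (a :: w) = twistLetter p q a (twist p q w) := rfl

theorem twist_cons_left (p q : α) (w : List α) :
    twist p q (p :: w) = cancelCons p (cancelCons q (cancelCons p (twist p q w))) :=
  if_pos rfl

theorem twist_cons_right {p q : α} (hpq : p ≠ q) (w : List α) :
    twist p q (q :: w) = cancelCons p (twist p q w) :=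
  (if_neg hpq.symm).trans (if_pos rfl)

theorem Reduced.twistLetter {p q a : α} {w : List α} (h : Reduced w) :
    Reduced (twistLetter p q a w) := by
  unfold Dehornoy.twistLetter
  split_ifs
  exacts [h.cancelCons.cancelCons.cancelCons, h.cancelCons, h.cancelCons]

theorem reduced_twist (p q : α) : ∀ w : List α, Reduced (twist p q w)
  | [] => reduced_nil
  | _ :: w => (reduced_twist p q w).twistLetter

theorem Reduced.twistLetter_twistLetter {p q a : α} {w : List α} (h : Reduced w) :
    Dehornoy.twistLetter p q a (Dehornoy.twistLetter p q a w) = w := by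
  unfold Dehornoy.twistLetter
  split_ifs
  · rw [h.cancelCons.cancelCons.cancelCons_cancelCons, h.cancelCons.cancelCons_cancelCons,
      h.cancelCons_cancelCons]
  all_goals exact h.cancelCons_cancelCons

theorem twist_cancelCons (p q a : α) (w : List α) :
    twist p q (cancelCons a w) = twistLetter p q a (twist p q w) := by
  by_cases ha : w.head? = some a
  · obtain ⟨t, rfl⟩ := List.head?_eq_some_iff.1 ha
    rw [cancelCons_cons_self, twist_cons, (reduced_twist p q t).twistLetter_twistLetter]
  · rw [cancelCons_of_head?_ne ha, twist_cons]

theorem twist_twist_swap {p q : α} (hpq : p ≠ q) {w : List α} (h : Reduced w) :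
    twist q p (twist p q w) = w := by
  induction w with
  | nil => rfl
  | cons a w ih =>
    have hw := h.of_cons
    have hcons : twist q p (twist p q (a :: w)) = cancelCons a w := by
      rw [twist_cons]
      by_cases hp : a = p
      · simp [twistLetter, twist_cancelCons, ih hw, hp, hpq, Reduced.cancelCons_cancelCons,
          Reduced.cancelCons, hw]
      by_cases hq : a = q
      · simp [twistLetter, twist_cancelCons, ih hw, hq, hpq, hpq.symm]
      · simp [twistLetter, twist_cancelCons, ih hw, hp, hq]
    rw [hcons, cancelCons_of_head?_ne h.head?_ne]

theorem twist_comm {p q r s : α} (hpr : p ≠ r) (hps : p ≠ s) (hqr : q ≠ r) (hqs : q ≠ s)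
    (w : List α) : twist p q (twist r s w) = twist r s (twist p q w) := by
  induction w with
  | nil => rfl
  | cons a w ih =>
    simp only [twist_cons, twistLetter]
    split_ifs <;> simp_all [twist_cancelCons, twistLetter, eq_comm]

theorem twist_braid {p q r : α} (hpq : p ≠ q) (hpr : p ≠ r) (hqr : q ≠ r) (w : List α) :
    twist p q (twist q r (twist p q w)) = twist q r (twist p q (twist q r w)) := by
  induction w with
  | nil => rfl
  | cons a w ih =>
    have hred : Reduced (twist q r (twist p q (twist q r w))) := reduced_twist ..
    simp only [twist_cons, twistLetter]
    by_cases hp : a = p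
    · subst hp
      simp (maxDischargeDepth := 4) [twist_cancelCons, twistLetter, ih,
        Reduced.cancelCons_cancelCons, Reduced.cancelCons, hred, hpq, hpq.symm, hpr, hpr.symm,
        hqr.symm]
    by_cases hq : a = q
    · subst hq
      simp [twist_cancelCons, twistLetter, ih, hpq, hpq.symm, hpr, hpr.symm, hqr.symm]
    by_cases hr : a = r
    · subst hr
      simp [twist_cancelCons, twistLetter, ih, hpq, hpq.symm, hpr, hpr.symm, hqr.symm]
    simp [twist_cancelCons, twistLetter, ih, hp, hq, hr]

variable (α) in
/-- The underlying set of the free product of copies of `ℤ/2` indexed by `α`. -/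
@[ext]
structure ReducedWord where
  word : List α
  reduced : Reduced word

/-- `twist p q` as a permutation of the reduced words. -/
def twistPerm {p q : α} (hpq : p ≠ q) : Equiv.Perm (ReducedWord α) where
  toFun w := ⟨twist p q w.word, reduced_twist p q _⟩
  invFun w := ⟨twist q p w.word, reduced_twist q p _⟩
  left_inv w := ReducedWord.ext (twist_twist_swap hpq w.reduced)
  right_inv w := ReducedWord.ext (twist_twist_swap hpq.symm w.reduced)

end Words

section BraidAction

theorem genσ_eq_one {n i : ℕ} (h : i = 0 ∨ n ≤ i) : genσ n i = 1 :=
  PresentedGroup.one_of_mem (rels := braidRels n) (Or.inr (Or.inr ⟨i, h, rfl⟩))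

theorem genσ_comm (n : ℕ) {i j : ℕ} (hij : i + 2 ≤ j) :
    genσ n i * genσ n j = genσ n j * genσ n i := by
  by_cases hi : i = 0
  · rw [genσ_eq_one (.inl hi), one_mul, mul_one]
  by_cases hj : n ≤ j
  · rw [genσ_eq_one (.inr hj), one_mul, mul_one]
  have hrel : genσ n i * genσ n j * (genσ n i)⁻¹ * (genσ n j)⁻¹ = 1 :=
    PresentedGroup.one_of_mem (rels := braidRels n)
      (Or.inl ⟨i, j, by omega, hij, by omega, rfl⟩)
  rwa [mul_inv_eq_one, mul_inv_eq_iff_eq_mul] at hrel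

theorem genσ_braid {n i : ℕ} (hi : 1 ≤ i) (hin : i + 1 < n) :
    genσ n i * genσ n (i + 1) * genσ n i = genσ n (i + 1) * genσ n i * genσ n (i + 1) := by
  have hrel : genσ n i * genσ n (i + 1) * genσ n i *
      (genσ n (i + 1) * genσ n i * genσ n (i + 1))⁻¹ = 1 :=
    PresentedGroup.one_of_mem (rels := braidRels n)
      (Or.inr (Or.inl ⟨i, hi, by omega, rfl⟩))
  rwa [mul_inv_eq_one] at hrel

theorem exists_braidHom {G : Type*} [Group G] (n : ℕ) (f : ℕ → G)
    (hcomm : ∀ i j, 1 ≤ i → i + 2 ≤ j → j < n → f i * f j = f j * f i)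
    (hbraid : ∀ i, 1 ≤ i → i + 1 < n →
      f i * f (i + 1) * f i = f (i + 1) * f i * f (i + 1)) :
    ∃ φ : Braid n →* G, ∀ i, 1 ≤ i → i < n → φ (genσ n i) = f i := by
  let g : ℕ → G := fun i => if 1 ≤ i ∧ i < n then f i else 1
  have hgf : ∀ i, 1 ≤ i → i < n → g i = f i := fun i h1 h2 => if_pos ⟨h1, h2⟩
  have hg : ∀ r ∈ braidRels n, FreeGroup.lift g r = 1 := by
    rintro r (⟨i, j, h1, h2, h3, rfl⟩ | ⟨i, h1, h2, rfl⟩ | ⟨i, h, rfl⟩)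
    · simp only [map_mul, map_inv, FreeGroup.lift_apply_of, hgf i h1 (by omega),
        hgf j (by omega) (by omega)]
      rw [hcomm i j h1 h2 (by omega)]
      group
    · simp only [map_mul, map_inv, FreeGroup.lift_apply_of, hgf i h1 (by omega),
        hgf (i + 1) (by omega) (by omega)]
      rw [hbraid i h1 (by omega)]
      group
    · rw [FreeGroup.lift_apply_of]
      exact if_neg (by omega)
  exact ⟨PresentedGroup.toGroup hg, fun i h1 h2 =>
    (PresentedGroup.toGroup.of hg).trans (hgf i h1 h2)⟩

theorem exists_braidAction (n : ℕ) : ∃ φ : Braid n →* Equiv.Perm (ReducedWord ℕ),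
    ∀ i, 1 ≤ i → i < n → φ (genσ n i) = twistPerm (Nat.succ_ne_self i).symm := by
  refine exists_braidHom n (fun i => twistPerm (Nat.succ_ne_self i).symm) ?_ ?_
  · intro i j _ hij _
    ext w : 2
    exact twist_comm (by omega) (by omega) (by omega) (by omega) w.word
  · intro i _ _
    ext w : 2
    exact twist_braid (by omega) (by omega) (by omega) w.word

/-- The Artin-type action of the braid group `B_n` on the free product of copies of `ℤ/2`: the
generator `σ_i` acts by `twist i (i + 1)`. -/
noncomputable def braidAction (n : ℕ) : Braid n →* Equiv.Perm (ReducedWord ℕ) :=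
  (exists_braidAction n).choose

theorem word_braidAction_genσ {n i : ℕ} (hi : 1 ≤ i) (hin : i < n) (w : ReducedWord ℕ) :
    (braidAction n (genσ n i) w).word = twist i (i + 1) w.word := by
  rw [braidAction, (exists_braidAction n).choose_spec i hi hin]
  rfl

end BraidAction

/-! ### The order on reduced words -/

section CyclicOrder

/-- The strict cyclic order on `ℕ`: going upwards from `e` and passing from `∞` to `0`, one meets
`a` strictly before `b`. -/
def CyclicLT (e a b : ℕ) : Prop := (e < a ∧ a < b) ∨ (a < b ∧ b < e) ∨ (b < e ∧ e < a)

theorem CyclicLT.trans {e a b c : ℕ} (hab : CyclicLT e a b) (hbc : CyclicLT e b c) :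
    CyclicLT e a c := by
  unfold CyclicLT at *; omega

theorem CyclicLT.ne {e a b : ℕ} (h : CyclicLT e a b) : a ≠ b := by
  unfold CyclicLT at h; omega

/-- The ordering of words by their first difference, the two differing letters being compared in
the cyclic order based at the letter preceding them. The letter `e` stands before both words, and
the letter `0` serves as an end marker. -/
def WordLT : ℕ → List ℕ → List ℕ → Prop
  | _, [], [] => False
  | e, [], b :: _ => CyclicLT e 0 b
  | e, a :: _, [] => CyclicLT e a 0
  | e, a :: u, b :: v => if a = b then WordLT a u v else CyclicLT e a b

theorem wordLT_irrefl : ∀ (e : ℕ) (u : List ℕ), ¬WordLT e u u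
  | _, [] => id
  | e, a :: u => by simpa [WordLT] using wordLT_irrefl a u

theorem WordLT.trans : ∀ {u v w : List ℕ} {e : ℕ}, WordLT e u v → WordLT e v w → WordLT e u w
  | [], [], _, _, h, _ => h.elim
  | _, [], [], _, _, h => h.elim
  | [], _ :: _, [], _, huv, hvw => absurd rfl (CyclicLT.trans huv hvw).ne
  | [], b :: v, c :: w, e, huv, hvw => by
    simp only [WordLT] at *
    split_ifs at hvw with hbc
    exacts [hbc ▸ huv, huv.trans hvw]
  | a :: u, [], c :: w, e, huv, hvw => by
    have hac : CyclicLT e a c := CyclicLT.trans huv hvw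
    simpa only [WordLT, if_neg hac.ne] using hac
  | a :: u, b :: v, [], e, huv, hvw => by
    simp only [WordLT] at *
    split_ifs at huv with hab
    exacts [hab ▸ hvw, huv.trans hvw]
  | a :: u, b :: v, c :: w, e, huv, hvw => by
    simp only [WordLT] at *
    by_cases hab : a = b
    · subst hab
      rw [if_pos rfl] at huv
      split_ifs at hvw ⊢
      exacts [huv.trans hvw, hvw]
    rw [if_neg hab] at huv
    by_cases hbc : b = c
    · subst hbc
      rwa [if_neg hab]
    rw [if_neg hbc] at hvw
    have hac := huv.trans hvw
    rwa [if_neg hac.ne]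

theorem wordLT_cons_cons_self {e a : ℕ} {u v : List ℕ} :
    WordLT e (a :: u) (a :: v) ↔ WordLT a u v := by
  simp [WordLT]

theorem wordLT_iff_of_headD_ne {e : ℕ} {u v : List ℕ} (h : u.headD 0 ≠ v.headD 0) :
    WordLT e u v ↔ CyclicLT e (u.headD 0) (v.headD 0) := by
  cases u <;> cases v <;> simp_all [WordLT]

theorem WordLT.of_headD {e d : ℕ} {u v : List ℕ} (h : WordLT e u v)
    (hcyc : CyclicLT e (u.headD 0) (v.headD 0) → CyclicLT d (u.headD 0) (v.headD 0)) :
    WordLT d u v := by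
  by_cases hne : u.headD 0 = v.headD 0
  · cases u <;> cases v <;> simp_all [WordLT]
  · exact (wordLT_iff_of_headD_ne hne).2 (hcyc ((wordLT_iff_of_headD_ne hne).1 h))

end CyclicOrder

section Blocks

/-- The word of length `k` alternating between the letters `p` and `p + 1`; it starts with `p`
if `s` is `false` and with `p + 1` if `s` is `true`. -/
def alternating (p : ℕ) : Bool → ℕ → List ℕ
  | _, 0 => []
  | s, k + 1 => (p + s.toNat) :: alternating p (!s) k

/-- `w` does not start with one of the letters `p` and `p + 1`. -/
def HeadAvoids (p : ℕ) (w : List ℕ) : Prop := ∀ a ∈ w.head?, a ≠ p ∧ a ≠ p + 1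

variable {p : ℕ} {w u v : List ℕ}

theorem headAvoids_nil : HeadAvoids p [] := by simp [HeadAvoids]

theorem headAvoids_cons_iff {a : ℕ} : HeadAvoids p (a :: w) ↔ a ≠ p ∧ a ≠ p + 1 := by
  simp [HeadAvoids]

theorem HeadAvoids.headD_ne (hw : HeadAvoids p w) (hp : 1 ≤ p) :
    w.headD 0 ≠ p ∧ w.headD 0 ≠ p + 1 := by
  cases w with
  | nil => simp only [List.headD_nil]; omega
  | cons a w => exact hw a rfl

theorem exists_eq_alternating_append (p : ℕ) {w : List ℕ} (hw : Reduced w) :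
    ∃ s k u, w = alternating p s k ++ u ∧ HeadAvoids p u := by
  induction w with
  | nil => exact ⟨true, 0, [], rfl, headAvoids_nil⟩
  | cons a w ih =>
    obtain ⟨s, k, u, rfl, hu⟩ := ih hw.of_cons
    by_cases ha : a ≠ p ∧ a ≠ p + 1
    · exact ⟨true, 0, _, rfl, headAvoids_cons_iff.2 ha⟩
    obtain ⟨t, rfl⟩ : ∃ t : Bool, a = p + t.toNat := by
      by_cases hp : a = p
      exacts [⟨false, hp⟩, ⟨true, not_not.1 fun h => ha ⟨hp, h⟩⟩]
    cases k with
    | zero => exact ⟨t, 1, u, rfl, hu⟩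
    | succ k =>
      have hst : s = !t := by
        have := hw.head?_ne
        cases s <;> cases t <;> simp_all [alternating]
      exact ⟨t, k + 2, u, by simp [alternating, hst], hu⟩

theorem cancelCons_alternating (hw : HeadAvoids p w) (s : Bool) (k : ℕ) :
    cancelCons (p + (!s).toNat) (alternating p s k ++ w) =
      alternating p (!s) (k + 1) ++ w := by
  rw [cancelCons_of_head?_ne]
  · simp [alternating]
  cases k with
  | zero =>
    intro h
    have := hw _ h
    cases s <;> simp_all
  | succ k => cases s <;> simp [alternating]

theorem cancelCons_alternating_true (hw : HeadAvoids p w) (k : ℕ) :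
    cancelCons p (alternating p true k ++ w) = alternating p false (k + 1) ++ w :=
  cancelCons_alternating hw true k

theorem cancelCons_alternating_false (hw : HeadAvoids p w) (k : ℕ) :
    cancelCons (p + 1) (alternating p false k ++ w) = alternating p true (k + 1) ++ w :=
  cancelCons_alternating hw false k

theorem twist_alternating_even (hw : HeadAvoids p (twist p (p + 1) w)) (s : Bool) (m : ℕ) :
    twist p (p + 1) (alternating p s (2 * m) ++ w) =
      alternating p s (2 * m) ++ twist p (p + 1) w := by
  induction m with
  | zero => rfl
  | succ m ih =>
    have hred : Reduced (twist p (p + 1) (alternating p s (2 * m) ++ w)) := reduced_twist ..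
    have hpq : p ≠ p + 1 := by omega
    cases s
    · change twist p (p + 1) (p :: (p + 1) :: (alternating p false (2 * m) ++ w)) = _
      rw [twist_cons_left, twist_cons_right hpq, hred.cancelCons_cancelCons, ih,
        cancelCons_alternating_false hw, cancelCons_alternating_true hw]
      rfl
    · change twist p (p + 1) ((p + 1) :: p :: (alternating p true (2 * m) ++ w)) = _
      rw [twist_cons_right hpq, twist_cons_left,
        hred.cancelCons.cancelCons.cancelCons_cancelCons, ih, cancelCons_alternating_true hw,
        cancelCons_alternating_false hw]
      rfl

/-- The effect of `twist p (p + 1)` on an alternating block, recorded by its first letter and its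
length: in the infinite dihedral group the rotations (even length) are fixed while the reflections
(odd length), which are linearly ordered like `ℤ`, are shifted by one step. -/
def twistBlock (b : Bool × ℕ) : Bool × ℕ :=
  if b.2 % 2 = 0 then b
  else if b.1 = false then (false, b.2 + 2)
  else if b.2 = 1 then (false, 1)
  else (true, b.2 - 2)

theorem twist_alternating_append (hw : HeadAvoids p (twist p (p + 1) w)) (s : Bool) (k : ℕ) :
    twist p (p + 1) (alternating p s k ++ w) =
      alternating p (twistBlock (s, k)).1 (twistBlock (s, k)).2 ++ twist p (p + 1) w := by
  have hpq : p ≠ p + 1 := by omega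
  rcases Nat.even_or_odd' k with ⟨m, rfl | rfl⟩
  · rw [twist_alternating_even hw]
    simp [twistBlock]
  cases s with
  | false =>
    change twist p (p + 1) (p :: (alternating p true (2 * m) ++ w)) = _
    rw [twist_cons_left, twist_alternating_even hw, cancelCons_alternating_true hw,
      cancelCons_alternating_false hw, cancelCons_alternating_true hw]
    simp [twistBlock, Nat.add_mod]
  | true =>
    change twist p (p + 1) ((p + 1) :: (alternating p false (2 * m) ++ w)) = _
    rw [twist_cons_right hpq, twist_alternating_even hw]
    cases m with
    | zero =>
      change cancelCons p (alternating p true 0 ++ _) = _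
      rw [cancelCons_alternating_true hw]
      simp [twistBlock]
    | succ m =>
      change cancelCons p (p :: (alternating p true (2 * m + 1) ++ _)) = _
      rw [cancelCons_cons_self]
      simp [twistBlock, Nat.add_mod, mul_add]

theorem twistBlock_snd_eq_zero_iff {b : Bool × ℕ} : (twistBlock b).2 = 0 ↔ b.2 = 0 := by
  unfold twistBlock
  split_ifs <;> simp <;> omega

/-- The position of an alternating block in the order `WordLT e`, for `e` outside `{p, p + 1}`:
first come the rotations starting with `p`, then the reflections, then the rotations starting
with `p + 1`. -/
def blockKey (b : Bool × ℕ) : ℤ ×ₗ ℤ :=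
  if b.2 % 2 = 0 then if b.1 then toLex (1, -b.2) else toLex (-1, b.2)
  else if b.1 then toLex (0, b.2) else toLex (0, -b.2)

theorem blockKey_injOn : Set.InjOn blockKey {b | b.2 ≠ 0} := by
  rintro ⟨s, k⟩ hk ⟨t, l⟩ hl h
  simp only [blockKey] at h
  cases s <;> cases t <;> split_ifs at h <;> simp_all

theorem twistBlock_injective : Function.Injective twistBlock := by
  rintro ⟨s, k⟩ ⟨t, l⟩ h
  unfold twistBlock at h
  cases s <;> cases t <;> split_ifs at h <;> simp_all <;> omega

/-- The map induced by `twistBlock` on the keys of blocks. -/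
def shiftKey (x : ℤ ×ₗ ℤ) : ℤ ×ₗ ℤ :=
  toLex ((ofLex x).1, if (ofLex x).1 = 0 then (ofLex x).2 - 2 else (ofLex x).2)

theorem shiftKey_strictMono : StrictMono shiftKey := by
  intro x y h
  rw [Prod.Lex.lt_iff] at h ⊢
  simp only [shiftKey, ofLex_toLex]
  split_ifs <;> omega

theorem shiftKey_eq_or_lt (x : ℤ ×ₗ ℤ) : shiftKey x = x ∨ shiftKey x < x := by
  by_cases h : (ofLex x).1 = 0
  · right
    simp [shiftKey, Prod.Lex.lt_iff, h]
  · left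
    simp [shiftKey, h]

theorem blockKey_twistBlock (b : Bool × ℕ) : blockKey (twistBlock b) = shiftKey (blockKey b) := by
  obtain ⟨s, k⟩ := b
  rcases Nat.even_or_odd' k with ⟨m, rfl | rfl⟩
  · cases s <;> simp [twistBlock, blockKey, shiftKey]
  cases s with
  | false => simp [twistBlock, blockKey, shiftKey, Nat.add_mod]; ring
  | true =>
    cases m with
    | zero => simp [twistBlock, blockKey, shiftKey]
    | succ m => simp [twistBlock, blockKey, shiftKey, Nat.add_mod, mul_add]; ring

theorem blockKey_twistBlock_lt_iff {b c : Bool × ℕ} :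
    blockKey (twistBlock b) < blockKey (twistBlock c) ↔ blockKey b < blockKey c := by
  simp only [blockKey_twistBlock, shiftKey_strictMono.lt_iff_lt]

theorem twistBlock_eq_or_blockKey_lt {b : Bool × ℕ} (hb : b.2 ≠ 0) :
    twistBlock b = b ∨ blockKey (twistBlock b) < blockKey b := by
  rw [blockKey_twistBlock]
  refine (shiftKey_eq_or_lt (blockKey b)).imp_left fun h => ?_
  exact blockKey_injOn (twistBlock_snd_eq_zero_iff.not.2 hb) hb (by rw [blockKey_twistBlock, h])

end Blocks

section Monotonicity

variable {p e : ℕ} {u v : List ℕ}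

theorem twist_cons_of_ne {a : ℕ} {w : List ℕ} (hw : Reduced (a :: w)) (hap : a ≠ p)
    (hap' : a ≠ p + 1) :
    twist p (p + 1) (a :: w) = a :: twist p (p + 1) w := by
  obtain ⟨s, k, u, rfl, hu⟩ := exists_eq_alternating_append p hw.of_cons
  have htwist : (twist p (p + 1) u).head? = u.head? := by
    cases u with
    | nil => rfl
    | cons b u =>
      have hb := headAvoids_cons_iff.1 hu
      rw [twist_cons_of_ne hw.of_cons.of_append hb.1 hb.2, List.head?_cons, List.head?_cons]
  have hu' : HeadAvoids p (twist p (p + 1) u) := by rwa [HeadAvoids, htwist]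
  rw [twist_cons, twistLetter, if_neg hap, if_neg hap', twist_alternating_append hu',
    cancelCons_of_head?_ne]
  cases hk : (twistBlock (s, k)).2 with
  | zero =>
    obtain rfl : k = 0 := twistBlock_snd_eq_zero_iff.1 hk
    rw [alternating, List.nil_append, htwist]
    exact hw.head?_ne
  | succ m => cases (twistBlock (s, k)).1 <;> simp [alternating, hap.symm, hap'.symm]
termination_by w.length
decreasing_by simp_all; omega

theorem HeadAvoids.head?_twist (hu : HeadAvoids p u) (hred : Reduced u) :
    (twist p (p + 1) u).head? = u.head? := by
  cases u with
  | nil => rfl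
  | cons b u =>
    have hb := headAvoids_cons_iff.1 hu
    rw [twist_cons_of_ne hred hb.1 hb.2, List.head?_cons, List.head?_cons]

theorem HeadAvoids.twist (hu : HeadAvoids p u) (hred : Reduced u) :
    HeadAvoids p (twist p (p + 1) u) := by
  rwa [HeadAvoids, hu.head?_twist hred]

theorem HeadAvoids.headD_twist (hu : HeadAvoids p u) (hred : Reduced u) :
    (Dehornoy.twist p (p + 1) u).headD 0 = u.headD 0 := by
  rw [List.headD_eq_head?_getD, hu.head?_twist hred, List.headD_eq_head?_getD]

theorem blockKey_succ_lt_succ_iff (s : Bool) (k l : ℕ) :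
    blockKey (s, k + 1) < blockKey (s, l + 1) ↔
      if k = 0 then l ≠ 0 ∧ s = true else if l = 0 then s = false
      else blockKey (!s, k) < blockKey (!s, l) := by
  rcases Nat.even_or_odd' k with ⟨m, rfl | rfl⟩ <;>
    rcases Nat.even_or_odd' l with ⟨m', rfl | rfl⟩ <;>
    cases s <;> simp [blockKey, Prod.Lex.toLex_lt_toLex, Nat.add_mod] <;> grind

theorem wordLT_base_iff (hp : 1 ≤ p) (hu : HeadAvoids p u) (hv : HeadAvoids p v) :
    WordLT (p + 1) u v ↔ WordLT p u v := by
  have hu0 := hu.headD_ne hp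
  have hv0 := hv.headD_ne hp
  constructor <;> intro h <;> refine h.of_headD ?_ <;> unfold CyclicLT <;> omega

theorem wordLT_alternating_append_same_iff {e : ℕ} (hp : 1 ≤ p) (hu : HeadAvoids p u)
    (hv : HeadAvoids p v) (s : Bool) (k l : ℕ) :
    WordLT e (alternating p s (k + 1) ++ u) (alternating p s (l + 1) ++ v) ↔
      blockKey (s, k + 1) < blockKey (s, l + 1) ∨ k = l ∧ WordLT p u v := by
  have hu0 := hu.headD_ne hp
  have hv0 := hv.headD_ne hp
  have hcons (e k l : ℕ) (s : Bool) :
      WordLT e (alternating p s (k + 1) ++ u) (alternating p s (l + 1) ++ v) ↔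
        WordLT (p + s.toNat) (alternating p (!s) k ++ u) (alternating p (!s) l ++ v) :=
    wordLT_cons_cons_self
  induction k generalizing e s l with
  | zero =>
    rw [hcons, blockKey_succ_lt_succ_iff]
    cases l with
    | zero => cases s <;> simp [alternating, wordLT_base_iff hp hu hv]
    | succ l =>
      rw [wordLT_iff_of_headD_ne] <;> cases s <;>
        simp [alternating, CyclicLT, -List.headD_eq_head?_getD] <;> omega
  | succ k ih =>
    rw [hcons, blockKey_succ_lt_succ_iff]
    cases l with
    | zero =>
      rw [wordLT_iff_of_headD_ne] <;> cases s <;>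
        simp [alternating, CyclicLT, -List.headD_eq_head?_getD] <;> omega
    | succ l => simp [ih]

theorem wordLT_alternating_append_iff (hp : 1 ≤ p) (hep : e ≠ p) (hep' : e ≠ p + 1)
    (hu : HeadAvoids p u) (hv : HeadAvoids p v) {b c : Bool × ℕ} (hb : b.2 ≠ 0) (hc : c.2 ≠ 0) :
    WordLT e (alternating p b.1 b.2 ++ u) (alternating p c.1 c.2 ++ v) ↔
      blockKey b < blockKey c ∨ b = c ∧ WordLT p u v := by
  obtain ⟨s, _ | k⟩ := b
  · exact absurd rfl hb
  obtain ⟨t, _ | l⟩ := c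
  · exact absurd rfl hc
  by_cases hst : s = t
  · subst hst
    rw [wordLT_alternating_append_same_iff hp hu hv]
    simp
  · rw [wordLT_iff_of_headD_ne (by cases s <;> cases t <;> simp_all [alternating])]
    cases s <;> cases t <;> simp_all [alternating, CyclicLT, blockKey] <;> split_ifs <;>
      simp [Prod.Lex.toLex_lt_toLex] <;> omega

theorem wordLT_alternating_append_right_iff (hp : 1 ≤ p) (hep' : e ≠ p + 1)
    (hu : HeadAvoids p u) {s : Bool} {k : ℕ} (hk : k ≠ 0) :
    WordLT e u (alternating p s k ++ v) ↔ CyclicLT e (u.headD 0) p := by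
  have hu0 := hu.headD_ne hp
  cases k with
  | zero => exact absurd rfl hk
  | succ k =>
    change WordLT e u ((p + s.toNat) :: _) ↔ _
    rw [wordLT_iff_of_headD_ne, List.headD_cons] <;> cases s <;>
      simp only [List.headD_cons, CyclicLT, Bool.toNat_false, Bool.toNat_true] <;> omega

theorem wordLT_alternating_append_left_iff (hp : 1 ≤ p) (hep : e ≠ p) (hep' : e ≠ p + 1)
    (hv : HeadAvoids p v) {s : Bool} {k : ℕ} (hk : k ≠ 0) :
    WordLT e (alternating p s k ++ u) v ↔ CyclicLT e p (v.headD 0) := by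
  have hv0 := hv.headD_ne hp
  cases k with
  | zero => exact absurd rfl hk
  | succ k =>
    change WordLT e ((p + s.toNat) :: _) v ↔ _
    rw [wordLT_iff_of_headD_ne, List.headD_cons] <;> cases s <;>
      simp only [List.headD_cons, CyclicLT, Bool.toNat_false, Bool.toNat_true] <;> omega

theorem wordLT_twist_iff_of_headAvoids (hu : HeadAvoids p u) (hv : HeadAvoids p v)
    (hur : Reduced u) (hvr : Reduced v)
    (ih : ∀ d u' v', d ≠ p → d ≠ p + 1 → Reduced u' → Reduced v' → u'.length < u.length →
      (WordLT d (twist p (p + 1) u') (twist p (p + 1) v') ↔ WordLT d u' v')) :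
    WordLT e (twist p (p + 1) u) (twist p (p + 1) v) ↔ WordLT e u v := by
  have htwist {a : ℕ} {w : List ℕ} (h : HeadAvoids p (a :: w)) (hr : Reduced (a :: w)) :
      twist p (p + 1) (a :: w) = a :: twist p (p + 1) w :=
    twist_cons_of_ne hr (headAvoids_cons_iff.1 h).1 (headAvoids_cons_iff.1 h).2
  rcases u with _ | ⟨a, u⟩ <;> rcases v with _ | ⟨b, v⟩
  · rfl
  · rw [htwist hv hvr]
    rfl
  · rw [htwist hu hur]
    rfl
  · rw [htwist hu hur, htwist hv hvr]
    obtain rfl | hab := eq_or_ne a b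
    · have ha := headAvoids_cons_iff.1 hu
      rw [wordLT_cons_cons_self, wordLT_cons_cons_self]
      exact ih a u v ha.1 ha.2 hur.of_cons hvr.of_cons (by simp)
    · simp only [WordLT, if_neg hab]

theorem wordLT_twist_iff (hp : 1 ≤ p) (hep : e ≠ p) (hep' : e ≠ p + 1) (hu : Reduced u)
    (hv : Reduced v) : WordLT e (twist p (p + 1) u) (twist p (p + 1) v) ↔ WordLT e u v := by
  induction hN : u.length using Nat.strong_induction_on generalizing e u v with
  | _ N ih =>
  subst hN
  obtain ⟨s, k, u, rfl, hua⟩ := exists_eq_alternating_append p hu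
  obtain ⟨t, l, v, rfl, hva⟩ := exists_eq_alternating_append p hv
  have hur : Reduced u := hu.of_append
  have hvr : Reduced v := hv.of_append
  have htail {d : ℕ} : WordLT d (twist p (p + 1) u) (twist p (p + 1) v) ↔ WordLT d u v :=
    wordLT_twist_iff_of_headAvoids hua hva hur hvr fun d u' v' h₁ h₂ h₃ h₄ hlt =>
      ih _ (by simp; omega) h₁ h₂ h₃ h₄ rfl
  have hua' := hua.twist hur
  have hva' := hva.twist hvr
  have hk := twistBlock_snd_eq_zero_iff (b := (s, k))
  have hl := twistBlock_snd_eq_zero_iff (b := (t, l))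
  rw [twist_alternating_append hua', twist_alternating_append hva']
  by_cases hk0 : k = 0 <;> by_cases hl0 : l = 0
  · subst hk0 hl0
    rw [hk.2 rfl, hl.2 rfl]
    exact htail
  · subst hk0
    rw [hk.2 rfl]
    refine (wordLT_alternating_append_right_iff hp hep' hua' (hl.not.2 hl0)).trans ?_
    rw [hua.headD_twist hur]
    exact (wordLT_alternating_append_right_iff hp hep' hua hl0).symm
  · subst hl0
    rw [hl.2 rfl]
    refine (wordLT_alternating_append_left_iff hp hep hep' hva' (hk.not.2 hk0)).trans ?_
    rw [hva.headD_twist hvr]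
    exact (wordLT_alternating_append_left_iff hp hep hep' hva hk0).symm
  · rw [wordLT_alternating_append_iff hp hep hep' hua' hva' (hk.not.2 hk0) (hl.not.2 hl0),
      blockKey_twistBlock_lt_iff, twistBlock_injective.eq_iff, htail]
    exact (wordLT_alternating_append_iff (b := (s, k)) (c := (t, l)) hp hep hep' hua hva hk0
      hl0).symm

theorem twist_eq_or_wordLT (hp : 1 ≤ p) (hep : e ≠ p) (hep' : e ≠ p + 1) (hu : Reduced u) :
    twist p (p + 1) u = u ∨ WordLT e (twist p (p + 1) u) u := by
  induction hN : u.length using Nat.strong_induction_on generalizing e u with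
  | _ N ih =>
  subst hN
  obtain ⟨s, k, u, rfl, hua⟩ := exists_eq_alternating_append p hu
  have hur : Reduced u := hu.of_append
  have hua' := hua.twist hur
  have htail {d : ℕ} : twist p (p + 1) u = u ∨ WordLT d (twist p (p + 1) u) u := by
    cases u with
    | nil => exact .inl rfl
    | cons a u =>
      have ha := headAvoids_cons_iff.1 hua
      rw [twist_cons_of_ne hur ha.1 ha.2, wordLT_cons_cons_self, List.cons.injEq]
      exact (ih _ (by simp; omega) ha.1 ha.2 hur.of_cons rfl).imp_left (.intro rfl)
  rw [twist_alternating_append hua']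
  by_cases hk : k = 0
  · subst hk
    exact htail
  · have hk' := twistBlock_snd_eq_zero_iff (b := (s, k)).not.2 hk
    rw [wordLT_alternating_append_iff (c := (s, k)) hp hep hep' hua' hua hk' hk]
    rcases twistBlock_eq_or_blockKey_lt (b := (s, k)) hk with heq | hlt
    · rw [heq]
      exact htail.imp (congrArg _) fun h => .inr ⟨rfl, h⟩
    · exact .inr (.inl hlt)

end Monotonicity

/-! ### Garside theory of the monoid of positive braids -/

section Generators

variable {k : ℕ} {i j : Fin k}

/-- The generators `i` and `j` of the braid monoid satisfy the braid relation of length three. -/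
def Adjacent (i j : Fin k) : Prop := i.1 + 1 = j.1 ∨ j.1 + 1 = i.1

/-- The generators `i` and `j` of the braid monoid are different and commute. -/
def Distant (i j : Fin k) : Prop := i.1 + 2 ≤ j.1 ∨ j.1 + 2 ≤ i.1

theorem Adjacent.symm (h : Adjacent i j) : Adjacent j i := Or.symm h

theorem Distant.symm (h : Distant i j) : Distant j i := Or.symm h

theorem Adjacent.ne (h : Adjacent i j) : i ≠ j := by
  rintro rfl; unfold Adjacent at h; omega

theorem Distant.ne (h : Distant i j) : i ≠ j := by
  rintro rfl; unfold Distant at h; omega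

theorem Adjacent.not_distant (h : Adjacent i j) : ¬Distant i j := by
  unfold Adjacent Distant at *; omega

theorem eq_or_distant_or_adjacent (i j : Fin k) : i = j ∨ Distant i j ∨ Adjacent i j := by
  rw [Fin.ext_iff]; unfold Distant Adjacent; omega

/-- The braid relations on words in `k` generators. -/
inductive BraidRel (k : ℕ) : FreeMonoid (Fin k) → FreeMonoid (Fin k) → Prop
  | distant (i j : Fin k) (h : Distant i j) :
      BraidRel k (FreeMonoid.of i * FreeMonoid.of j) (FreeMonoid.of j * FreeMonoid.of i)
  | adjacent (i j : Fin k) (h : Adjacent i j) :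
      BraidRel k (FreeMonoid.of i * (FreeMonoid.of j * FreeMonoid.of i))
        (FreeMonoid.of j * (FreeMonoid.of i * FreeMonoid.of j))

/-- The monoid of positive braids on `k + 1` strands. Its generators are numbered from `0`, so that
generator `i` corresponds to `σ_{i+1}`. -/
abbrev BraidMonoid (k : ℕ) := PresentedMonoid (BraidRel k)

end Generators

namespace BraidMonoid

variable {k : ℕ} {i j m : Fin k} {a b c x y : BraidMonoid k}

/-- The positive braid represented by a word in the generators. -/
def mk (w : FreeMonoid (Fin k)) : BraidMonoid k := PresentedMonoid.mk (BraidRel k) w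

/-- The generator `i` of the braid monoid. -/
def gen (i : Fin k) : BraidMonoid k := PresentedMonoid.of (BraidRel k) i

theorem mk_mul (u v : FreeMonoid (Fin k)) : mk (u * v) = mk u * mk v :=
  map_mul (PresentedMonoid.mk (BraidRel k)) u v

theorem mk_of (i : Fin k) : mk (FreeMonoid.of i) = gen i := rfl

theorem mk_one : mk (1 : FreeMonoid (Fin k)) = 1 := rfl

theorem mk_eq_mk_iff {u v : FreeMonoid (Fin k)} : mk u = mk v ↔ ConGen.Rel (BraidRel k) u v :=
  Con.eq (conGen (BraidRel k))

theorem mk_surjective : Function.Surjective (mk : FreeMonoid (Fin k) → BraidMonoid k) :=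
  PresentedMonoid.surjective_mk

@[elab_as_elim]
theorem induction_gen_mul {P : BraidMonoid k → Prop} (one : P 1)
    (gen_mul : ∀ i x, P x → P (gen i * x)) (x : BraidMonoid k) : P x := by
  obtain ⟨u, rfl⟩ := mk_surjective x
  induction u using FreeMonoid.recOn with
  | one => exact one
  | of_mul i u ih => exact gen_mul i _ ih

theorem gen_mul_gen (h : Distant i j) : gen i * gen j = gen j * gen i :=
  mk_eq_mk_iff.2 (ConGen.Rel.of _ _ (BraidRel.distant i j h))

theorem gen_mul_gen_mul_gen (h : Adjacent i j) :
    gen i * (gen j * gen i) = gen j * (gen i * gen j) :=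
  mk_eq_mk_iff.2 (ConGen.Rel.of _ _ (BraidRel.adjacent i j h))

theorem gen_mul_gen_mul (h : Distant i j) (x : BraidMonoid k) :
    gen i * (gen j * x) = gen j * (gen i * x) := by
  rw [← mul_assoc, gen_mul_gen h, mul_assoc]

theorem gen_mul_gen_mul_gen_mul (h : Adjacent i j) (x : BraidMonoid k) :
    gen i * (gen j * (gen i * x)) = gen j * (gen i * (gen j * x)) := by
  simpa only [mul_assoc] using congrArg (· * x) (gen_mul_gen_mul_gen h)

/-- The length of a positive braid: the common length of all words representing it. -/
def length (x : BraidMonoid k) : ℕ :=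
  (PresentedMonoid.lift (rels := BraidRel k) (fun _ => Multiplicative.ofAdd 1)
    (by rintro _ _ (_ | _) <;> rfl) x).toAdd

@[simp] theorem length_mul (x y : BraidMonoid k) : length (x * y) = length x + length y := by
  simp [length]

@[simp] theorem length_one : length (1 : BraidMonoid k) = 0 := by simp [length]

@[simp] theorem length_gen (i : Fin k) : length (gen i) = 1 := by simp [length, gen]

theorem length_mk (u : FreeMonoid (Fin k)) : length (mk u) = u.length := by
  induction u using FreeMonoid.recOn with
  | one => simp [mk_one]
  | of_mul i u ih => simp [mk_mul, mk_of, ih]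

/-- `gen i * a` and `gen j * b` are equal for the reason that both are the same multiple of the
least common right multiple of `gen i` and `gen j`. -/
structure LcmFactor (i : Fin k) (a : BraidMonoid k) (j : Fin k) (b : BraidMonoid k) : Prop where
  of_eq : i = j → a = b
  of_distant : Distant i j → ∃ z, a = gen j * z ∧ b = gen i * z
  of_adjacent : Adjacent i j → ∃ z, a = gen j * (gen i * z) ∧ b = gen i * (gen j * z)

theorem LcmFactor.symm (h : LcmFactor i a j b) : LcmFactor j b i a where
  of_eq e := (h.of_eq e.symm).symm
  of_distant f := (h.of_distant f.symm).imp fun _ => And.symm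
  of_adjacent f := (h.of_adjacent f.symm).imp fun _ => And.symm

theorem LcmFactor.mul_right (h : LcmFactor i a j b) (x : BraidMonoid k) :
    LcmFactor i (a * x) j (b * x) where
  of_eq e := by rw [h.of_eq e]
  of_distant f := by
    obtain ⟨z, rfl, rfl⟩ := h.of_distant f
    exact ⟨z * x, by simp only [mul_assoc], by simp only [mul_assoc]⟩
  of_adjacent f := by
    obtain ⟨z, rfl, rfl⟩ := h.of_adjacent f
    exact ⟨z * x, by simp only [mul_assoc], by simp only [mul_assoc]⟩

theorem LcmFactor.refl (i : Fin k) (a : BraidMonoid k) : LcmFactor i a i a :=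
  ⟨fun _ => rfl, fun f => absurd rfl f.ne, fun f => absurd rfl f.ne⟩

theorem LcmFactor.gen_mul_eq (h : LcmFactor i a j b) : gen i * a = gen j * b := by
  rcases eq_or_distant_or_adjacent i j with e | f | f
  · rw [h.of_eq e, e]
  · obtain ⟨z, rfl, rfl⟩ := h.of_distant f
    exact gen_mul_gen_mul f z
  · obtain ⟨z, rfl, rfl⟩ := h.of_adjacent f
    exact gen_mul_gen_mul_gen_mul f z

/-- Garside's theorem on common multiples of two generators, for multiples of length at most `N`:
every equality `gen i * x = gen j * y` comes from the least common multiple. -/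
def LcmUpTo (k N : ℕ) : Prop :=
  ∀ ⦃i : Fin k⦄ ⦃x : BraidMonoid k⦄ ⦃j : Fin k⦄ ⦃y : BraidMonoid k⦄, length x < N →
    gen i * x = gen j * y → LcmFactor i x j y

variable {N : ℕ}

theorem LcmUpTo.trans_distant_distant (hN : LcmUpTo k N) (ha : length a ≤ N)
    (h₁ : LcmFactor i a m c) (h₂ : LcmFactor m c j b) (him : Distant i m) (hmj : Distant m j) :
    LcmFactor i a j b := by
  obtain ⟨z, rfl, rfl⟩ := h₁.of_distant him
  obtain ⟨z', hz', rfl⟩ := h₂.of_distant hmj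
  simp only [length_mul, length_gen] at ha
  have hq := hN (by omega) hz'
  refine ⟨fun e => by rw [hq.of_eq e], fun f => ?_, fun f => ?_⟩
  · obtain ⟨w, rfl, rfl⟩ := hq.of_distant f
    exact ⟨gen m * w, gen_mul_gen_mul hmj _, (gen_mul_gen_mul him _).symm⟩
  · obtain ⟨w, rfl, rfl⟩ := hq.of_adjacent f
    refine ⟨gen m * w, ?_, ?_⟩
    · rw [gen_mul_gen_mul hmj, gen_mul_gen_mul him]
    · rw [gen_mul_gen_mul him.symm, gen_mul_gen_mul hmj]

theorem LcmUpTo.trans_adjacent_distant (hN : LcmUpTo k N) (ha : length a ≤ N)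
    (h₁ : LcmFactor i a m c) (h₂ : LcmFactor m c j b) (him : Adjacent i m) (hmj : Distant m j) :
    LcmFactor i a j b := by
  obtain ⟨z, rfl, rfl⟩ := h₁.of_adjacent him
  obtain ⟨z', hz', rfl⟩ := h₂.of_distant hmj
  simp only [length_mul, length_gen] at ha
  have hq := hN (by simp only [length_mul, length_gen]; omega) hz'
  refine ⟨fun e => ?_, fun f => ?_, fun f => ?_⟩
  · subst e
    exact absurd hmj.symm him.not_distant
  · obtain ⟨w, hw, rfl⟩ := hq.of_distant f
    obtain ⟨v, rfl, rfl⟩ := (hN (by omega) hw).of_distant hmj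
    refine ⟨gen m * (gen i * v), ?_, ?_⟩
    · rw [gen_mul_gen_mul f, gen_mul_gen_mul hmj]
    · rw [gen_mul_gen_mul_gen_mul him]
  · obtain ⟨w, hw, rfl⟩ := hq.of_adjacent f
    obtain ⟨v, rfl, hv⟩ := (hN (by omega) hw).of_distant hmj
    simp only [length_mul, length_gen] at ha
    have hw_length := congrArg length hw
    simp only [length_mul, length_gen] at hw_length
    obtain ⟨u, rfl, rfl⟩ := (hN (by omega) hv).of_adjacent him
    refine ⟨gen m * (gen i * (gen j * u)), ?_, ?_⟩
    · rw [gen_mul_gen_mul_gen_mul him, gen_mul_gen_mul hmj.symm, gen_mul_gen_mul_gen_mul f,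
        gen_mul_gen_mul hmj.symm]
    · rw [gen_mul_gen_mul hmj.symm, gen_mul_gen_mul_gen_mul him.symm, gen_mul_gen_mul hmj.symm,
        gen_mul_gen_mul_gen_mul f]

theorem LcmUpTo.trans_adjacent_adjacent (hN : LcmUpTo k N) (ha : length a ≤ N)
    (h₁ : LcmFactor i a m c) (h₂ : LcmFactor m c j b) (him : Adjacent i m) (hmj : Adjacent m j) :
    LcmFactor i a j b := by
  obtain ⟨z, rfl, rfl⟩ := h₁.of_adjacent him
  obtain ⟨z', hz', rfl⟩ := h₂.of_adjacent hmj
  have hlen := congrArg length hz'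
  simp only [length_mul, length_gen] at ha hlen
  have hq := hN (by simp only [length_mul, length_gen]; omega) hz'
  refine ⟨fun e => ?_, fun f => ?_, fun f => ?_⟩
  · subst e
    rw [(hN (by omega) (hq.of_eq rfl)).of_eq rfl]
  · obtain ⟨w, hw, hw'⟩ := hq.of_distant f
    obtain ⟨v, rfl, rfl⟩ := (hN (by omega) hw).of_adjacent hmj
    obtain ⟨u, rfl, hu⟩ := (hN (by omega) hw').of_adjacent him.symm
    simp only [length_mul, length_gen] at ha hlen
    have hvu := (hN (by simp only [length_mul, length_gen]; omega) hu).of_eq rfl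
    obtain ⟨t, rfl, rfl⟩ := (hN (by omega) hvu).of_distant f.symm
    refine ⟨gen m * (gen j * (gen i * (gen m * t))), ?_, ?_⟩
    · rw [gen_mul_gen_mul f, gen_mul_gen_mul_gen_mul him, gen_mul_gen_mul_gen_mul hmj]
    · rw [gen_mul_gen_mul f.symm, gen_mul_gen_mul_gen_mul hmj.symm,
        gen_mul_gen_mul_gen_mul him.symm, gen_mul_gen_mul f]
  · unfold Adjacent at him hmj f; omega

theorem LcmUpTo.trans (hN : LcmUpTo k N) (ha : length a ≤ N)
    (h₁ : LcmFactor i a m c) (h₂ : LcmFactor m c j b) : LcmFactor i a j b := by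
  have hb : length b ≤ N := by
    have := congrArg length (h₁.gen_mul_eq.trans h₂.gen_mul_eq)
    simp only [length_mul, length_gen] at this
    omega
  rcases eq_or_distant_or_adjacent i m with rfl | him | him
  · rwa [h₁.of_eq rfl]
  all_goals rcases eq_or_distant_or_adjacent m j with rfl | hmj | hmj
  · rwa [← h₂.of_eq rfl]
  · exact hN.trans_distant_distant ha h₁ h₂ him hmj
  · exact (hN.trans_adjacent_distant hb h₂.symm h₁.symm hmj.symm him.symm).symm
  · rwa [← h₂.of_eq rfl]
  · exact hN.trans_adjacent_distant ha h₁ h₂ him hmj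
  · exact hN.trans_adjacent_adjacent ha h₁ h₂ him hmj

theorem LcmFactor.of_braidRel {u v : FreeMonoid (Fin k)} (h : BraidRel k (.of i * u) (.of j * v)) :
    LcmFactor i (BraidMonoid.mk u) j (BraidMonoid.mk v) := by
  generalize hU : FreeMonoid.of i * u = U at h
  generalize hV : FreeMonoid.of j * v = V at h
  obtain ⟨i', j', f⟩ | ⟨i', j', f⟩ := h <;>
    obtain ⟨rfl, rfl⟩ := List.cons.inj hU <;> obtain ⟨rfl, rfl⟩ := List.cons.inj hV
  · exact ⟨fun e => absurd e f.ne, fun _ => ⟨1, (mul_one _).symm, (mul_one _).symm⟩,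
      fun f' => absurd f f'.not_distant⟩
  · exact ⟨fun e => absurd e f.ne, fun f' => absurd f' f.not_distant,
      fun _ => ⟨1, by rw [mul_one]; rfl, by rw [mul_one]; rfl⟩⟩

theorem LcmUpTo.of_conGen (hN : LcmUpTo k N) {U V : FreeMonoid (Fin k)}
    (h : ConGen.Rel (BraidRel k) U V) (hU : U.length ≤ N + 1) {u v : FreeMonoid (Fin k)}
    (hu : U = .of i * u) (hv : V = .of j * v) : LcmFactor i (mk u) j (mk v) := by
  have hlen {U V} (h : ConGen.Rel (BraidRel k) U V) : U.length = V.length := by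
    rw [← length_mk, ← length_mk, mk_eq_mk_iff.2 h]
  induction h generalizing i j u v with
  | of U V h =>
    subst hu hv
    exact .of_braidRel h
  | refl U =>
    obtain ⟨rfl, rfl⟩ := List.cons.inj (hu.symm.trans hv)
    exact .refl ..
  | symm h ih => exact (ih (hlen h ▸ hU) hv hu).symm
  | @trans _ W _ h _ ih ih' =>
    cases W using FreeMonoid.casesOn with
    | one => exact absurd (hlen h) (by simp [hu])
    | of_mul m w =>
      refine hN.trans ?_ (ih hU hu rfl) (ih' (hlen h ▸ hU) rfl hv)
      rw [hu] at hU
      simpa [length_mk, add_comm 1] using hU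
  | @mul U₁ V₁ U₂ V₂ h₁ h₂ ih₁ ih₂ =>
    have hl := hlen h₁
    rw [FreeMonoid.length_mul] at hU
    cases U₁ using FreeMonoid.casesOn with
    | one =>
      obtain rfl : V₁ = 1 := FreeMonoid.length_eq_zero.1 (by simpa using hl.symm)
      rw [one_mul] at hu hv
      exact ih₂ (by omega) hu hv
    | of_mul i' w =>
      cases V₁ using FreeMonoid.casesOn with
      | one => simp at hl
      | of_mul j' w' =>
        rw [mul_assoc] at hu hv
        obtain ⟨rfl, rfl⟩ := List.cons.inj hu
        obtain ⟨rfl, rfl⟩ := List.cons.inj hv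
        change LcmFactor i' (mk (w * U₂)) j' (mk (w' * V₂))
        rw [mk_mul, mk_mul, ← mk_eq_mk_iff.2 h₂]
        exact (ih₁ (by omega) rfl rfl).mul_right _

theorem lcmUpTo (k : ℕ) : ∀ N, LcmUpTo k N
  | 0 => fun _ _ _ _ h => absurd h (Nat.not_lt_zero _)
  | N + 1 => by
    intro i x j y hx h
    obtain ⟨u, rfl⟩ := mk_surjective x
    obtain ⟨v, rfl⟩ := mk_surjective y
    rw [length_mk] at hx
    refine (lcmUpTo k N).of_conGen (mk_eq_mk_iff.1 h) ?_ rfl rfl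
    rw [FreeMonoid.length_mul, FreeMonoid.length_of]
    omega

theorem lcmFactor_of_gen_mul_eq (h : gen i * x = gen j * y) : LcmFactor i x j y :=
  lcmUpTo k _ (Nat.lt_succ_self _) h

end BraidMonoid

namespace BraidMonoid

variable {k : ℕ} {i j : Fin k} {x y : BraidMonoid k}

/-- The anti-homomorphism of the braid monoid that reads words backwards. -/
def reverseHom (k : ℕ) : BraidMonoid k →* (BraidMonoid k)ᵐᵒᵖ :=
  PresentedMonoid.lift (fun i => MulOpposite.op (gen i)) (by
    rintro _ _ (⟨i, j, h⟩ | ⟨i, j, h⟩)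
    · simp [← MulOpposite.op_mul, gen_mul_gen h]
    · simp [← MulOpposite.op_mul, mul_assoc, gen_mul_gen_mul_gen h])

/-- The positive braid represented by the reversed words. -/
def reverse (x : BraidMonoid k) : BraidMonoid k := (reverseHom k x).unop

@[simp] theorem reverse_mul (x y : BraidMonoid k) : reverse (x * y) = reverse y * reverse x := by
  simp [reverse]

@[simp] theorem reverse_gen (i : Fin k) : reverse (gen i) = gen i := by
  simp [reverse, reverseHom, gen]

@[simp] theorem reverse_one : reverse (1 : BraidMonoid k) = 1 := by simp [reverse]

theorem reverse_involutive : Function.Involutive (reverse : BraidMonoid k → BraidMonoid k) := by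
  intro x
  induction x using induction_gen_mul with
  | one => simp
  | gen_mul i x ih => simp [ih]

instance : IsLeftCancelMul (BraidMonoid k) where
  mul_left_cancel u := by
    induction u using induction_gen_mul with
    | one => exact isRegular_one.left
    | gen_mul i u ih =>
      refine IsLeftRegular.mul (fun x y h => ?_) ih
      exact (lcmFactor_of_gen_mul_eq h).of_eq rfl

instance : IsCancelMul (BraidMonoid k) where
  mul_right_cancel u x y h := by
    apply reverse_involutive.injective
    simpa using congrArg reverse h

/-- For `i ≠ j`, `a * gen i` and `b * gen j` are equal for the reason that both are the same
multiple of the least common left multiple of `gen i` and `gen j`. -/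
structure LcmCofactor (a : BraidMonoid k) (i : Fin k) (b : BraidMonoid k) (j : Fin k) : Prop where
  of_distant : Distant i j → ∃ z, a = z * gen j ∧ b = z * gen i
  of_adjacent : Adjacent i j → ∃ z, a = z * gen i * gen j ∧ b = z * gen j * gen i

theorem lcmCofactor_of_mul_gen_eq (h : x * gen i = y * gen j) : LcmCofactor x i y j := by
  have q : LcmFactor i (reverse x) j (reverse y) :=
    lcmFactor_of_gen_mul_eq (by simpa using congrArg reverse h)
  have eq_of_reverse_eq {a b : BraidMonoid k} (h : reverse a = b) : a = reverse b := by
    rw [← h, reverse_involutive]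
  refine ⟨fun f => ?_, fun f => ?_⟩
  · obtain ⟨z, hx, hy⟩ := q.of_distant f
    exact ⟨reverse z, by simpa using eq_of_reverse_eq hx, by simpa using eq_of_reverse_eq hy⟩
  · obtain ⟨z, hx, hy⟩ := q.of_adjacent f
    exact ⟨reverse z, by simpa using eq_of_reverse_eq hx, by simpa using eq_of_reverse_eq hy⟩

theorem finite_setOf_dvd (d : BraidMonoid k) : {u | u ∣ d}.Finite := by
  refine ((List.finite_length_le (Fin k) (length d)).image
    fun l => mk (FreeMonoid.ofList l)).subset ?_
  rintro u ⟨v, rfl⟩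
  obtain ⟨w, rfl⟩ := mk_surjective u
  exact ⟨w.toList, by simp [length_mk, FreeMonoid.length], by simp⟩

/-- The generator with number `i`, with the value `1` if there is no such generator. -/
def natGen (k i : ℕ) : BraidMonoid k := if h : i < k then gen ⟨i, h⟩ else 1

theorem natGen_val (i : Fin k) : natGen k i = gen i := by simp [natGen]

theorem natGen_mul_natGen {i j : ℕ} (h : i + 2 ≤ j) :
    natGen k i * natGen k j = natGen k j * natGen k i := by
  unfold natGen
  split_ifs
  · exact gen_mul_gen (Or.inl h)
  all_goals simp

theorem natGen_mul_natGen_mul_natGen {i : ℕ} (h : i + 1 < k) :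
    natGen k i * (natGen k (i + 1) * natGen k i) =
      natGen k (i + 1) * (natGen k i * natGen k (i + 1)) := by
  unfold natGen
  rw [dif_pos h, dif_pos (by omega : i < k)]
  exact gen_mul_gen_mul_gen (Or.inl rfl)

/-- The product of the `j` consecutive generators starting with number `i`. -/
def ascending (k i : ℕ) : ℕ → BraidMonoid k
  | 0 => 1
  | j + 1 => ascending k i j * natGen k (i + j)

theorem ascending_succ' (i : ℕ) : ∀ j, ascending k i (j + 1) = natGen k i * ascending k (i + 1) j
  | 0 => by simp [ascending]
  | j + 1 => by
    rw [ascending, ascending_succ', ascending, mul_assoc, add_right_comm i 1 j, add_assoc]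

theorem natGen_mul_ascending {m : ℕ} :
    ∀ {j : ℕ}, j + 1 ≤ m → natGen k m * ascending k 0 j = ascending k 0 j * natGen k m
  | 0, _ => by simp [ascending]
  | j + 1, h => by
    rw [ascending, zero_add, ← mul_assoc, natGen_mul_ascending (by omega), mul_assoc, mul_assoc,
      natGen_mul_natGen h]

theorem ascending_mul_natGen {i : ℕ} : ∀ {j : ℕ}, i + 1 < j → j ≤ k →
    ascending k 0 j * natGen k i = natGen k (i + 1) * ascending k 0 j
  | j + 1, h, hk => by
    rw [ascending, zero_add, mul_assoc]
    obtain rfl | hj := eq_or_ne j (i + 1)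
    · rw [ascending, zero_add, mul_assoc, natGen_mul_natGen_mul_natGen hk, ← mul_assoc,
        ← natGen_mul_ascending le_rfl, mul_assoc, mul_assoc]
    · rw [← natGen_mul_natGen (by omega), ← mul_assoc,
        ascending_mul_natGen (by omega) (by omega), mul_assoc]

/-- The Coxeter element, the product of all generators in increasing order. -/
def coxeter (k : ℕ) : BraidMonoid k := ascending k 0 k

theorem coxeter_mul_natGen {i : ℕ} (h : i + 1 < k) :
    coxeter k * natGen k i = natGen k (i + 1) * coxeter k :=
  ascending_mul_natGen h le_rfl

theorem coxeter_mul_ascending : ∀ {j : ℕ}, j + 1 ≤ k →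
    coxeter k * ascending k 0 j = ascending k 1 j * coxeter k
  | 0, _ => by simp [ascending]
  | j + 1, h => by
    rw [ascending, zero_add, ← mul_assoc, coxeter_mul_ascending (by omega), mul_assoc,
      coxeter_mul_natGen (by omega), ascending, mul_assoc, add_comm 1 j]

theorem coxeter_succ (j : ℕ) : coxeter (j + 1) = ascending (j + 1) 0 j * natGen (j + 1) j := by
  rw [coxeter, ascending, zero_add]

theorem coxeter_succ' (j : ℕ) : coxeter (j + 1) = natGen (j + 1) 0 * ascending (j + 1) 1 j :=
  ascending_succ' 0 j

theorem coxeter_sq_mul_natGen (j : ℕ) :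
    coxeter (j + 1) ^ 2 * natGen (j + 1) j = natGen (j + 1) 0 * coxeter (j + 1) ^ 2 :=
  calc coxeter (j + 1) ^ 2 * natGen (j + 1) j
    _ = natGen (j + 1) 0 * (ascending (j + 1) 1 j * coxeter (j + 1)) * natGen (j + 1) j := by
      rw [pow_two, ← mul_assoc (natGen _ _), ← coxeter_succ']
    _ = natGen (j + 1) 0 * (coxeter (j + 1) * (ascending (j + 1) 0 j * natGen (j + 1) j)) := by
      rw [← coxeter_mul_ascending le_rfl]; simp only [mul_assoc]
    _ = natGen (j + 1) 0 * coxeter (j + 1) ^ 2 := by rw [← coxeter_succ, pow_two]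

theorem coxeter_pow_mul_natGen {i : ℕ} : ∀ {m : ℕ}, i + m < k →
    coxeter k ^ m * natGen k i = natGen k (i + m) * coxeter k ^ m
  | 0, _ => by simp
  | m + 1, h => by
    rw [pow_succ', mul_assoc, coxeter_pow_mul_natGen (by omega), ← mul_assoc,
      coxeter_mul_natGen (by omega), mul_assoc, add_assoc]

/-- The central element `Δ²`, the full twist on `k + 1` strands. -/
def fullTwist (k : ℕ) : BraidMonoid k := coxeter k ^ (k + 1)

theorem fullTwist_eq (i m : ℕ) : fullTwist (i + m + 1) =
    coxeter (i + m + 1) ^ i * (coxeter (i + m + 1) ^ 2 * coxeter (i + m + 1) ^ m) := by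
  rw [fullTwist, ← pow_add, ← pow_add]
  congr 1
  omega

theorem commute_fullTwist_gen (i : Fin k) : Commute (fullTwist k) (gen i) := by
  obtain ⟨i, hi⟩ := i
  obtain ⟨m, rfl⟩ := Nat.exists_eq_add_of_lt hi
  rw [← natGen_val]
  set c := coxeter (i + m + 1)
  set g := natGen (i + m + 1)
  calc fullTwist (i + m + 1) * g i
    _ = c ^ i * (c ^ 2 * (c ^ m * g i)) := by rw [fullTwist_eq]; simp only [c, mul_assoc]
    _ = c ^ i * (c ^ 2 * g (i + m) * c ^ m) := by
      rw [coxeter_pow_mul_natGen (Nat.lt_succ_self _), mul_assoc]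
    _ = c ^ i * g 0 * (c ^ 2 * c ^ m) := by rw [coxeter_sq_mul_natGen]; simp only [g, c, mul_assoc]
    _ = g i * fullTwist (i + m + 1) := by
      rw [coxeter_pow_mul_natGen (by omega), fullTwist_eq, zero_add, mul_assoc]

theorem gen_dvd_fullTwist (i : Fin k) : gen i ∣ fullTwist k := by
  obtain ⟨i, hi⟩ := i
  obtain ⟨m, rfl⟩ := Nat.exists_eq_add_of_lt hi
  set c := coxeter (i + m + 1)
  refine ⟨c ^ i * (ascending _ 1 (i + m) * c ^ (m + 1)), ?_⟩
  have hc : c ^ i * natGen _ 0 = natGen _ i * c ^ i := by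
    simpa only [zero_add] using coxeter_pow_mul_natGen (k := i + m + 1) (i := 0) (m := i) (by omega)
  rw [← natGen_val, ← mul_assoc, ← hc, mul_assoc, ← mul_assoc (natGen _ _), ← coxeter_succ',
    fullTwist_eq, ← pow_add, ← pow_succ']
  congr 2
  omega

theorem commute_fullTwist (x : BraidMonoid k) : Commute (fullTwist k) x := by
  induction x using induction_gen_mul with
  | one => exact Commute.one_right _
  | gen_mul i x ih => exact (commute_fullTwist_gen i).mul_right ih

theorem exists_dvd_fullTwist_pow (x : BraidMonoid k) : ∃ N, x ∣ fullTwist k ^ N := by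
  induction x using induction_gen_mul with
  | one => exact ⟨0, one_dvd _⟩
  | gen_mul i x ih =>
    obtain ⟨N, x', h⟩ := ih
    obtain ⟨y, hy⟩ := gen_dvd_fullTwist i
    refine ⟨N + 1, x' * y, ?_⟩
    calc fullTwist k ^ (N + 1) = gen i * (y * fullTwist k ^ N) := by
          rw [pow_succ', hy, mul_assoc]
      _ = gen i * (fullTwist k ^ N * y) := by rw [((commute_fullTwist y).pow_left N).eq]
      _ = gen i * x * (x' * y) := by rw [h]; simp only [mul_assoc]

/-- The homomorphism from the monoid of positive braids to the braid group. -/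
def toBraid (n : ℕ) : BraidMonoid (n - 1) →* Braid n :=
  PresentedMonoid.lift (rels := BraidRel (n - 1)) (fun i : Fin (n - 1) => genσ n (i + 1)) (by
    have braid (i j : Fin (n - 1)) (f : i.1 + 1 = j) : genσ n (i + 1) *
        (genσ n (j + 1) * genσ n (i + 1)) = genσ n (j + 1) * (genσ n (i + 1) * genσ n (j + 1)) := by
      rw [← f, ← mul_assoc, genσ_braid (by omega) (by omega), mul_assoc]
    rintro _ _ (⟨i, j, f | f⟩ | ⟨i, j, f | f⟩) <;> simp only [map_mul, FreeMonoid.lift_eval_of]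
    · exact genσ_comm n (by omega)
    · exact (genσ_comm n (by omega)).symm
    · exact braid i j f
    · exact (braid j i f).symm)

@[simp] theorem toBraid_gen (n : ℕ) (i : Fin (n - 1)) : toBraid n (gen i) = genσ n (i + 1) := by
  simp [toBraid, gen]

end BraidMonoid

section Fractions

open BraidMonoid

variable {n : ℕ}

@[elab_as_elim]
theorem braid_induction {P : Braid n → Prop} (one : P 1)
    (gen : ∀ i, 1 ≤ i → i < n → P (genσ n i)) (inv_gen : ∀ i, 1 ≤ i → i < n → P (genσ n i)⁻¹)
    (mul : ∀ x y, P x → P y → P (x * y)) (β : Braid n) : P β := by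
  have gen_eq_one {i : ℕ} (h : ¬(1 ≤ i ∧ i < n)) : genσ n i = 1 := genσ_eq_one (by omega)
  induction β using PresentedGroup.induction_on with
  | _ w =>
    induction w using FreeGroup.induction_on with
    | C1 => exact one
    | of i =>
      change P (genσ n i)
      by_cases h : 1 ≤ i ∧ i < n
      · exact gen i h.1 h.2
      · rwa [gen_eq_one h]
    | inv_of i _ =>
      change P (genσ n i)⁻¹
      by_cases h : 1 ≤ i ∧ i < n
      · exact inv_gen i h.1 h.2
      · rwa [gen_eq_one h, inv_one]
    | mul x y hx hy => rw [map_mul]; exact mul _ _ hx hy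

theorem commute_toBraid_fullTwist (β : Braid n) : Commute (toBraid n (fullTwist (n - 1))) β := by
  have commute_gen (i : ℕ) (h : 1 ≤ i) (hin : i < n) :
      Commute (toBraid n (fullTwist (n - 1))) (genσ n i) := by
    simpa [Nat.sub_add_cancel h] using
      (commute_fullTwist (gen (⟨i - 1, by omega⟩ : Fin (n - 1)))).map (toBraid n)
  induction β using braid_induction with
  | one => exact Commute.one_right _
  | gen i h hin => exact commute_gen i h hin
  | inv_gen i h hin => exact (commute_gen i h hin).inv_right
  | mul x y hx hy => exact hx.mul_right hy

theorem exists_fullTwist_pow_mul_eq (β : Braid n) :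
    ∃ N b, toBraid n (fullTwist (n - 1)) ^ N * β = toBraid n b := by
  induction β using braid_induction with
  | one => exact ⟨0, 1, by simp⟩
  | gen i h hin =>
    exact ⟨0, BraidMonoid.gen ⟨i - 1, by omega⟩, by simp [Nat.sub_add_cancel h]⟩
  | inv_gen i h hin =>
    obtain ⟨y, hy⟩ := gen_dvd_fullTwist (⟨i - 1, by omega⟩ : Fin (n - 1))
    refine ⟨1, y, ?_⟩
    rw [pow_one, (commute_toBraid_fullTwist _).eq, hy, map_mul, toBraid_gen, Nat.sub_add_cancel h,
      inv_mul_cancel_left]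
  | mul x y hx hy =>
    obtain ⟨N, b, h⟩ := hx
    obtain ⟨N', b', h'⟩ := hy
    refine ⟨N + N', b * b', ?_⟩
    rw [map_mul, ← h, ← h', pow_add]
    exact ((commute_toBraid_fullTwist x).pow_left N').mul_mul_mul_comm _ _

theorem exists_inv_mul_eq (β : Braid n) :
    ∃ u v d : BraidMonoid (n - 1), u ∣ d ∧ v ∣ d ∧ (toBraid n u)⁻¹ * toBraid n v = β := by
  obtain ⟨N, b, hb⟩ := exists_fullTwist_pow_mul_eq β
  obtain ⟨N', hN'⟩ := exists_dvd_fullTwist_pow b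
  refine ⟨fullTwist (n - 1) ^ N, b, fullTwist (n - 1) ^ (N' + N), pow_dvd_pow _ (by omega),
    hN'.trans (pow_dvd_pow _ (by omega)), ?_⟩
  rw [← hb, map_pow, inv_mul_cancel_left]

end Fractions

/-! ### Braids moving a word downwards -/

section ActionOrder

variable {n i j : ℕ}

instance : PartialOrder (ReducedWord ℕ) where
  lt u v := WordLT 0 u.word v.word
  le u v := u = v ∨ WordLT 0 u.word v.word
  le_refl _ := .inl rfl
  le_trans u v w := by
    rintro (rfl | huv) (rfl | hvw)
    exacts [.inl rfl, .inr hvw, .inr huv, .inr (huv.trans hvw)]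
  lt_iff_le_not_ge u v := by
    refine ⟨fun h => ⟨.inr h, ?_⟩, ?_⟩
    · rintro (rfl | h')
      exacts [wordLT_irrefl _ _ h, wordLT_irrefl _ _ (h.trans h')]
    · rintro ⟨rfl | h, h'⟩
      exacts [(h' (.inl rfl)).elim, h]
  le_antisymm u v := by
    rintro (rfl | h) (h' | h')
    exacts [rfl, rfl, h'.symm, (wordLT_irrefl _ _ (h.trans h')).elim]

theorem ReducedWord.lt_iff {u v : ReducedWord ℕ} : u < v ↔ WordLT 0 u.word v.word := Iff.rfl

theorem braidAction_genσ_lt_iff (hi : 1 ≤ i) (hin : i < n) {u v : ReducedWord ℕ} :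
    braidAction n (genσ n i) u < braidAction n (genσ n i) v ↔ u < v := by
  rw [ReducedWord.lt_iff, word_braidAction_genσ hi hin, word_braidAction_genσ hi hin]
  exact wordLT_twist_iff hi (by omega) (by omega) u.reduced v.reduced

theorem braidAction_lt_iff (β : Braid n) {u v : ReducedWord ℕ} :
    braidAction n β u < braidAction n β v ↔ u < v := by
  induction β using braid_induction generalizing u v with
  | one => simp
  | gen i hi hin => exact braidAction_genσ_lt_iff hi hin
  | inv_gen i hi hin =>
    rw [← braidAction_genσ_lt_iff hi hin, ← Equiv.Perm.mul_apply, ← Equiv.Perm.mul_apply,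
      ← map_mul, mul_inv_cancel, map_one, Equiv.Perm.one_apply, Equiv.Perm.one_apply]
  | mul x y hx hy => rw [map_mul, Equiv.Perm.mul_apply, Equiv.Perm.mul_apply, hx, hy]

theorem braidAction_strictMono (β : Braid n) : StrictMono (braidAction n β) :=
  fun _ _ => (braidAction_lt_iff β).2

/-- The base point whose image detects the `σ_i`-positive braids. -/
def basePoint (i : ℕ) : ReducedWord ℕ := ⟨[i], List.isChain_singleton i⟩

theorem braidAction_genσ_basePoint_of_lt (hij : i < j) (hjn : j < n) :
    braidAction n (genσ n j) (basePoint i) = basePoint i := by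
  ext1
  rw [word_braidAction_genσ (by omega) hjn]
  simp [basePoint, twist, twistLetter, cancelCons, hij.ne, (show i ≠ j + 1 by omega)]

theorem braidAction_genσ_inv_basePoint_of_lt (hij : i < j) (hjn : j < n) :
    braidAction n (genσ n j)⁻¹ (basePoint i) = basePoint i := by
  rw [map_inv, Equiv.Perm.inv_eq_iff_eq, braidAction_genσ_basePoint_of_lt hij hjn]

theorem braidAction_genσ_basePoint_lt (hi : 1 ≤ i) (hin : i < n) :
    braidAction n (genσ n i) (basePoint i) < basePoint i := by
  rw [ReducedWord.lt_iff, word_braidAction_genσ hi hin]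
  simp [basePoint, twist, twistLetter, cancelCons, WordLT, CyclicLT]
  omega

end ActionOrder

section SigmaPositive

variable {n i j : ℕ}

/-- The letters allowed in a `σ_i`-positive word. -/
def IsNonnegLetter (n i : ℕ) (p : ℕ × Bool) : Prop :=
  (1 ≤ p.1 ∧ p.1 ≤ n - 1) ∧ i ≤ p.1 ∧ p ≠ (i, false)

/-- The `σ_i`-nonnegative braids: those represented by a word satisfying all the requirements for
`σ_i`-positivity, except that `σ_i` need not occur. -/
def sigmaNonneg (n i : ℕ) : Submonoid (Braid n) where
  carrier := {β | ∃ w, (∀ p ∈ w, IsNonnegLetter n i p) ∧ evalWord n w = β}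
  one_mem' := ⟨[], by simp, rfl⟩
  mul_mem' := by
    rintro _ _ ⟨u, hu, rfl⟩ ⟨v, hv, rfl⟩
    exact ⟨u ++ v, List.forall_mem_append.2 ⟨hu, hv⟩, by simp [evalWord]⟩

theorem evalWord_singleton_mem_sigmaNonneg {p : ℕ × Bool} (hp : IsNonnegLetter n i p) :
    evalWord n [p] ∈ sigmaNonneg n i :=
  ⟨[p], by simpa using hp, rfl⟩

theorem genσ_mem_sigmaNonneg (hj : 1 ≤ j) (hij : i ≤ j) (hjn : j < n) :
    genσ n j ∈ sigmaNonneg n i := by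
  simpa [evalWord] using evalWord_singleton_mem_sigmaNonneg (n := n) (i := i) (p := (j, true))
    ⟨⟨hj, by simp only; omega⟩, hij, by simp⟩

theorem genσ_inv_mem_sigmaNonneg (hij : i < j) (hjn : j < n) :
    (genσ n j)⁻¹ ∈ sigmaNonneg n i := by
  simpa [evalWord] using evalWord_singleton_mem_sigmaNonneg (n := n) (i := i) (p := (j, false))
    ⟨⟨by simp only; omega, by simp only; omega⟩, hij.le, by simp [hij.ne']⟩

theorem sigmaPositive_iff {β : Braid n} : SigmaPositive n i β ↔
    (1 ≤ i ∧ i < n) ∧ ∃ x ∈ sigmaNonneg n i, ∃ y ∈ sigmaNonneg n i, x * genσ n i * y = β := by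
  constructor
  · rintro ⟨w, hrange, hmem, hneg, hle, rfl⟩
    have hw : ∀ p ∈ w, IsNonnegLetter n i p := fun p hp =>
      ⟨hrange p hp, hle p hp, fun h => hneg (h ▸ hp)⟩
    have hi := hrange _ hmem
    obtain ⟨u, v, rfl⟩ := List.append_of_mem hmem
    exact ⟨⟨hi.1, by simp only at hi; omega⟩, _, ⟨u, fun p hp => hw p (by simp [hp]), rfl⟩,
      _, ⟨v, fun p hp => hw p (by simp [hp]), rfl⟩, by simp [evalWord, mul_assoc]⟩
  · rintro ⟨⟨hi, hin⟩, _, ⟨u, hu, rfl⟩, _, ⟨v, hv, rfl⟩, rfl⟩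
    have hw : ∀ p ∈ u ++ (i, true) :: v, IsNonnegLetter n i p := by
      refine List.forall_mem_append.2 ⟨hu, List.forall_mem_cons.2 ⟨?_, hv⟩⟩
      exact ⟨⟨hi, by simp only; omega⟩, le_rfl, by simp⟩
    exact ⟨_, fun p hp => (hw p hp).1, by simp, fun h => (hw _ h).2.2 rfl,
      fun p hp => (hw p hp).2.1, by simp [evalWord, mul_assoc]⟩

theorem sigmaPositive_genσ (hi : 1 ≤ i) (hin : i < n) : SigmaPositive n i (genσ n i) :=
  sigmaPositive_iff.2 ⟨⟨hi, hin⟩, 1, one_mem _, 1, one_mem _, by group⟩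

theorem sigmaPositive_mul_of_mem_sigmaNonneg_right {x y : Braid n} (hx : SigmaPositive n i x)
    (hy : y ∈ sigmaNonneg n i) : SigmaPositive n i (x * y) := by
  obtain ⟨hi, a, ha, b, hb, rfl⟩ := sigmaPositive_iff.1 hx
  exact sigmaPositive_iff.2 ⟨hi, a, ha, b * y, mul_mem hb hy, by group⟩

theorem sigmaPositive_mul_of_mem_sigmaNonneg_left {x y : Braid n} (hx : x ∈ sigmaNonneg n i)
    (hy : SigmaPositive n i y) : SigmaPositive n i (x * y) := by
  obtain ⟨hi, a, ha, b, hb, rfl⟩ := sigmaPositive_iff.1 hy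
  exact sigmaPositive_iff.2 ⟨hi, x * a, mul_mem hx ha, b, hb, by group⟩

theorem mem_sigmaNonneg_of_sigmaPositive {β : Braid n} (h : SigmaPositive n i β) :
    β ∈ sigmaNonneg n i := by
  obtain ⟨⟨hi, hin⟩, a, ha, b, hb, rfl⟩ := sigmaPositive_iff.1 h
  exact mul_mem (mul_mem ha (genσ_mem_sigmaNonneg hi le_rfl hin)) hb

theorem mem_sigmaNonneg_of_sigmaPositive_of_lt {β : Braid n} (hij : i < j)
    (h : SigmaPositive n j β) : β ∈ sigmaNonneg n i := by
  obtain ⟨w, hrange, -, -, hle, rfl⟩ := h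
  refine ⟨w, fun p hp => ⟨hrange p hp, hij.le.trans (hle p hp), ?_⟩, rfl⟩
  rintro rfl
  exact absurd (hle _ hp) hij.not_ge

theorem braidAction_basePoint_le {β : Braid n} (h : β ∈ sigmaNonneg n i) :
    braidAction n β (basePoint i) ≤ basePoint i := by
  obtain ⟨w, hw, rfl⟩ := h
  induction w with
  | nil => simp [evalWord]
  | cons p w ih =>
    rw [List.forall_mem_cons] at hw
    obtain ⟨hp, hw⟩ := hw
    obtain ⟨j, b⟩ := p
    have hletter : braidAction n (if b then genσ n j else (genσ n j)⁻¹) (basePoint i) ≤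
        basePoint i := by
      obtain ⟨⟨hj, hjn⟩, hij, hne⟩ := hp
      simp only at hj hjn hij
      rcases hij.eq_or_lt with rfl | hij
      · obtain rfl : b = true := by simpa using hne
        exact (braidAction_genσ_basePoint_lt hj (by omega)).le
      · cases b
        · exact (braidAction_genσ_inv_basePoint_of_lt hij (by omega)).le
        · exact (braidAction_genσ_basePoint_of_lt hij (by omega)).le
    calc braidAction n (evalWord n ((j, b) :: w)) (basePoint i)
      _ = braidAction n (if b then genσ n j else (genσ n j)⁻¹)
          (braidAction n (evalWord n w) (basePoint i)) := by
        rw [← Equiv.Perm.mul_apply, ← map_mul]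
        simp [evalWord]
      _ ≤ _ := (braidAction_strictMono _).monotone (ih hw)
      _ ≤ basePoint i := hletter

theorem braidAction_basePoint_lt {β : Braid n} (h : SigmaPositive n i β) :
    braidAction n β (basePoint i) < basePoint i := by
  obtain ⟨⟨hi, hin⟩, x, hx, y, hy, rfl⟩ := sigmaPositive_iff.1 h
  simp only [map_mul, Equiv.Perm.mul_apply]
  calc braidAction n x (braidAction n (genσ n i) (braidAction n y (basePoint i)))
    _ ≤ braidAction n x (braidAction n (genσ n i) (basePoint i)) :=
      (braidAction_strictMono x).monotone
        ((braidAction_strictMono _).monotone (braidAction_basePoint_le hy))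
    _ < braidAction n x (basePoint i) :=
      braidAction_strictMono x (braidAction_genσ_basePoint_lt hi hin)
    _ ≤ basePoint i := braidAction_basePoint_le hx

theorem not_sigmaPositive_one : ¬SigmaPositive n i 1 := fun h =>
  absurd (braidAction_basePoint_lt h) (by simp)

end SigmaPositive

/-! ### Comparison of braids along the divisor graph -/

section LabelledGraphs

open Relation

variable {V : Type*} {E : ℕ → V → V → Prop} {k : ℕ} {u v w : V}

/-- A step of level `k`: an edge labelled `k`, or an edge with a larger label traversed in either
direction. In the divisor graph of a braid it multiplies by a letter of a `σ_{k+1}`-nonnegative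
word. -/
def NonnegStep (E : ℕ → V → V → Prop) (k : ℕ) (u v : V) : Prop :=
  E k u v ∨ ∃ j, k < j ∧ (E j u v ∨ E j v u)

/-- The existence of a path made of steps of level `k`. -/
abbrev NonnegPath (E : ℕ → V → V → Prop) (k : ℕ) : V → V → Prop := ReflTransGen (NonnegStep E k)

/-- An edge with label at least `k`, traversed in either direction. -/
def Link (E : ℕ → V → V → Prop) (k : ℕ) (u v : V) : Prop := ∃ j, k ≤ j ∧ (E j u v ∨ E j v u)

/-- Connectedness by edges with label at least `k`. -/
abbrev Linked (E : ℕ → V → V → Prop) (k : ℕ) : V → V → Prop := ReflTransGen (Link E k)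

/-- The properties of the graph of divisors of a positive braid, with edges labelled by generators,
from which the comparison property is derived: they are lcm properties of the braid monoid, and
acyclicity. -/
structure IsBraidGraph (E : ℕ → V → V → Prop) : Prop where
  functional : ∀ {i u v w}, E i u v → E i u w → v = w
  square : ∀ {i j u v w}, i + 2 ≤ j → E i u v → E j u w → ∃ t, E j v t ∧ E i w t
  hexagon : ∀ {i u v w}, E i u v → E (i + 1) u w →
    ∃ v' w' t, E (i + 1) v v' ∧ E i v' t ∧ E i w w' ∧ E (i + 1) w' t
  exchange : ∀ {i j u v w}, i + 2 ≤ j → E j u v → E i v w → ∃ v', E i u v' ∧ E j v' w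
  acyclic : ∀ {k u v}, E k u v → ¬NonnegPath E k v u

instance : Std.Symm (Link E k) := ⟨fun _ _ ⟨j, hj, h⟩ => ⟨j, hj, h.symm⟩⟩

theorem Linked.symm (h : Linked E k u v) : Linked E k v u :=
  ReflTransGen.stdSymm.symm _ _ h

theorem Linked.nonnegPath (h : Linked E (k + 1) u v) : NonnegPath E k u v :=
  ReflTransGen.mono (fun _ _ ⟨j, hj, h⟩ => .inr ⟨j, hj, h⟩) _ _ h

theorem NonnegPath.linked_or_exists (h : NonnegPath E k u v) : Linked E (k + 1) u v ∨
    ∃ u' v', Linked E (k + 1) u u' ∧ E k u' v' ∧ NonnegPath E k v' v := by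
  induction h using ReflTransGen.head_induction_on with
  | refl => exact .inl .refl
  | head hstep hpath ih =>
    rcases hstep with hedge | hlink
    · exact .inr ⟨_, _, .refl, hedge, hpath⟩
    · rcases ih with h | ⟨u', v', hu', hedge, hv'⟩
      · exact .inl (h.head hlink)
      · exact .inr ⟨u', v', hu'.head hlink, hedge, hv'⟩

theorem nonnegStep_flip :
    NonnegStep (fun i => flip (E i)) k = flip (NonnegStep E k) := by
  ext u v
  simp only [NonnegStep, flip, or_comm (a := E _ v u)]

theorem nonnegPath_flip : NonnegPath (fun i => flip (E i)) k u v ↔ NonnegPath E k v u := by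
  rw [NonnegPath, nonnegStep_flip]
  exact reflTransGen_swap

theorem linked_flip : Linked (fun i => flip (E i)) k u v ↔ Linked E k u v := by
  have : Link (fun i => flip (E i)) k = Link E k := by
    ext u v
    simp only [Link, flip, or_comm]
  rw [Linked, this]

theorem IsBraidGraph.exists_edge_of_nonnegPath (hE : IsBraidGraph E)
    (hpath : NonnegPath E (k + 1) u w) (hedge : E k u v) :
    ∃ w', E k w w' ∧ NonnegPath E k v w' := by
  induction hpath using ReflTransGen.head_induction_on generalizing v with
  | refl => exact ⟨v, hedge, .refl⟩
  | head hstep _ ih =>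
    rcases hstep with hstep | ⟨j, hj, hstep | hstep⟩
    · obtain ⟨v₁, w₁, t, hv₁, hv₁t, hw₁, hw₁t⟩ := hE.hexagon hedge hstep
      obtain ⟨w', hw', hp⟩ := ih hw₁
      exact ⟨w', hw', ((hp.head (.inr ⟨k + 1, by omega, .inr hw₁t⟩)).head (.inl hv₁t)).head
        (.inr ⟨k + 1, by omega, .inl hv₁⟩)⟩
    · obtain ⟨t, hvt, ht⟩ := hE.square (by omega) hedge hstep
      obtain ⟨w', hw', hp⟩ := ih ht
      exact ⟨w', hw', hp.head (.inr ⟨j, by omega, .inl hvt⟩)⟩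
    · obtain ⟨t, ht, htv⟩ := hE.exchange (by omega) hstep hedge
      obtain ⟨w', hw', hp⟩ := ih ht
      exact ⟨w', hw', hp.head (.inr ⟨j, by omega, .inr htv⟩)⟩

theorem IsBraidGraph.wellFounded [Finite V] (hE : IsBraidGraph E) (k : ℕ) :
    WellFounded fun v u => ∃ a b, NonnegPath E k u a ∧ E k a b ∧ NonnegPath E k b v := by
  refine @Finite.wellFounded_of_trans_of_irrefl V _ _ ⟨?_⟩ ⟨?_⟩
  · rintro x y z ⟨a, b, hya, hab, hbx⟩ ⟨c, d, hzc, hcd, hdy⟩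
    exact ⟨c, d, hzc, hcd, hdy.trans ((hya.tail (.inl hab)).trans hbx)⟩
  · rintro x ⟨a, b, hxa, hab, hbx⟩
    exact hE.acyclic hab (hbx.trans hxa)

theorem IsBraidGraph.comparable_of_common_source [Finite V] (hE : IsBraidGraph E)
    (hk : ∀ u v, Linked E (k + 1) u v → NonnegPath E (k + 1) u v ∨ NonnegPath E (k + 1) v u)
    (hv : NonnegPath E k u v) (hw : NonnegPath E k u w) :
    NonnegPath E k v w ∨ NonnegPath E k w v := by
  induction u using (hE.wellFounded k).induction generalizing v w with
  | _ u ih =>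
    rcases hv.linked_or_exists with h | ⟨u₁, v₁, hu₁, hv₁, hv₁v⟩
    · exact .inl (h.symm.nonnegPath.trans hw)
    rcases hw.linked_or_exists with h | ⟨u₂, w₂, hu₂, hw₂, hw₂w⟩
    · exact .inr (h.symm.nonnegPath.trans hv)
    rcases hk u₁ u₂ (hu₁.symm.trans hu₂) with h | h
    · obtain ⟨w', hw', hp⟩ := hE.exists_edge_of_nonnegPath h hv₁
      obtain rfl := hE.functional hw' hw₂
      exact ih v₁ ⟨u₁, v₁, hu₁.nonnegPath, hv₁, .refl⟩ hv₁v (hp.trans hw₂w)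
    · obtain ⟨w', hw', hp⟩ := hE.exists_edge_of_nonnegPath h hw₂
      obtain rfl := hE.functional hw' hv₁
      exact ih w₂ ⟨u₂, w₂, hu₂.nonnegPath, hw₂, .refl⟩ (hp.trans hv₁v) hw₂w

theorem Link.comparable (h : Link E k u v) : NonnegPath E k u v ∨ NonnegPath E k v u := by
  obtain ⟨j, hj, h⟩ := h
  rcases hj.eq_or_lt with rfl | hj
  · exact h.imp (fun h => .single (.inl h)) (fun h => .single (.inl h))
  · exact .inl (.single (.inr ⟨j, hj, h⟩))

theorem IsBraidGraph.comparable_of_linked [Finite V] (hE : IsBraidGraph E)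
    (hE' : IsBraidGraph fun i => flip (E i)) {N : ℕ} (hN : ∀ i u v, E i u v → i < N) (m : ℕ)
    (hm : N ≤ m + k) (h : Linked E k u v) : NonnegPath E k u v ∨ NonnegPath E k v u := by
  induction m generalizing k u v with
  | zero =>
    refine .inl (ReflTransGen.mono ?_ _ _ h)
    rintro a b ⟨j, hj, h | h⟩
    all_goals exact absurd (hN _ _ _ h) (by omega)
  | succ m ih =>
    have hbelow : ∀ u v, Linked E (k + 1) u v →
        NonnegPath E (k + 1) u v ∨ NonnegPath E (k + 1) v u :=
      fun u v => ih (by omega)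
    have hbelow' := fun u v (h : Linked (fun i => flip (E i)) (k + 1) u v) =>
      (hbelow u v (linked_flip.1 h)).symm.imp nonnegPath_flip.2 nonnegPath_flip.2
    induction h with
    | refl => exact .inl .refl
    | tail _ hlink ih =>
      rcases ih with hp | hp <;> rcases hlink.comparable with hq | hq
      · exact .inl (hp.trans hq)
      · exact (hE'.comparable_of_common_source hbelow' (nonnegPath_flip.2 hp)
          (nonnegPath_flip.2 hq)).symm.imp nonnegPath_flip.1 nonnegPath_flip.1
      · exact hE.comparable_of_common_source hbelow hp hq
      · exact .inr (hq.trans hp)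

end LabelledGraphs

section Divisors

open BraidMonoid Relation

variable {k : ℕ} {d : BraidMonoid k}

/-- The left divisors of `d`. -/
abbrev Divisor (d : BraidMonoid k) := {u : BraidMonoid k // u ∣ d}

/-- The edges of the graph of left divisors of `d`: right multiplication by a generator. -/
def divisorEdge (d : BraidMonoid k) (i : ℕ) (u v : Divisor d) : Prop :=
  ∃ h : i < k, v.1 = u.1 * gen ⟨i, h⟩

instance : Finite (Divisor d) := (finite_setOf_dvd d).to_subtype

theorem divisorEdge_functional {i : ℕ} {u v w : Divisor d} (hv : divisorEdge d i u v)
    (hw : divisorEdge d i u w) : v = w := by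
  obtain ⟨_, hv⟩ := hv
  obtain ⟨_, hw⟩ := hw
  exact Subtype.ext (hv.trans hw.symm)

theorem exists_lcmFactor_of_divisorEdge {i j : ℕ} (hi : i < k) (hj : j < k) {u v w : Divisor d}
    (hv : v.1 = u.1 * gen ⟨i, hi⟩) (hw : w.1 = u.1 * gen ⟨j, hj⟩) :
    ∃ x y, d = v.1 * x ∧ d = w.1 * y ∧ LcmFactor ⟨i, hi⟩ x ⟨j, hj⟩ y := by
  obtain ⟨x, hx⟩ := v.2
  obtain ⟨y, hy⟩ := w.2
  refine ⟨x, y, hx, hy, lcmFactor_of_gen_mul_eq (mul_left_cancel (a := u.1) ?_)⟩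
  rw [← mul_assoc, ← mul_assoc, ← hv, ← hw, ← hx, ← hy]

theorem divisorEdge_square {i j : ℕ} {u v w : Divisor d} (hij : i + 2 ≤ j)
    (hv : divisorEdge d i u v) (hw : divisorEdge d j u w) :
    ∃ t, divisorEdge d j v t ∧ divisorEdge d i w t := by
  obtain ⟨hi, hv⟩ := hv
  obtain ⟨hj, hw⟩ := hw
  obtain ⟨x, y, hx, -, hlcm⟩ := exists_lcmFactor_of_divisorEdge hi hj hv hw
  obtain ⟨z, rfl, -⟩ := hlcm.of_distant (.inl hij)
  refine ⟨⟨v.1 * gen ⟨j, hj⟩, z, hx.trans (mul_assoc _ _ _).symm⟩, ⟨hj, rfl⟩, hi, ?_⟩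
  simp only [hv, hw, mul_assoc, gen_mul_gen (i := ⟨i, hi⟩) (j := ⟨j, hj⟩) (.inl hij)]

theorem divisorEdge_hexagon {i : ℕ} {u v w : Divisor d} (hv : divisorEdge d i u v)
    (hw : divisorEdge d (i + 1) u w) : ∃ v' w' t, divisorEdge d (i + 1) v v' ∧
      divisorEdge d i v' t ∧ divisorEdge d i w w' ∧ divisorEdge d (i + 1) w' t := by
  obtain ⟨hi, hv⟩ := hv
  obtain ⟨hj, hw⟩ := hw
  obtain ⟨x, y, hx, hy, hlcm⟩ := exists_lcmFactor_of_divisorEdge hi hj hv hw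
  obtain ⟨z, rfl, rfl⟩ := hlcm.of_adjacent (.inl rfl)
  refine ⟨⟨v.1 * gen ⟨i + 1, hj⟩, gen ⟨i, hi⟩ * z, by simp only [hx, mul_assoc]⟩,
    ⟨w.1 * gen ⟨i, hi⟩, gen ⟨i + 1, hj⟩ * z, by simp only [hy, mul_assoc]⟩,
    ⟨v.1 * gen ⟨i + 1, hj⟩ * gen ⟨i, hi⟩, z, by simp only [hx, mul_assoc]⟩,
    ⟨hj, rfl⟩, ⟨hi, rfl⟩, ⟨hi, rfl⟩, hj, ?_⟩
  simp only [hv, hw, mul_assoc, gen_mul_gen_mul_gen (i := ⟨i, hi⟩) (j := ⟨i + 1, hj⟩) (.inl rfl)]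

theorem divisorEdge_exchange {i j : ℕ} {u v w : Divisor d} (hij : i + 2 ≤ j ∨ j + 2 ≤ i)
    (hv : divisorEdge d j u v) (hw : divisorEdge d i v w) :
    ∃ v', divisorEdge d i u v' ∧ divisorEdge d j v' w := by
  obtain ⟨hj, hv⟩ := hv
  obtain ⟨hi, hw⟩ := hw
  have huw : w.1 = u.1 * gen ⟨i, hi⟩ * gen ⟨j, hj⟩ := by
    rw [hw, hv, mul_assoc, mul_assoc, gen_mul_gen (i := ⟨i, hi⟩) (j := ⟨j, hj⟩) hij]
  exact ⟨⟨_, (Dvd.intro _ huw.symm).trans w.2⟩, ⟨hi, rfl⟩, hj, huw⟩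

theorem divisorEdge_flip_functional {i : ℕ} {u v w : Divisor d} (hv : divisorEdge d i v u)
    (hw : divisorEdge d i w u) : v = w := by
  obtain ⟨_, hv⟩ := hv
  obtain ⟨_, hw⟩ := hw
  exact Subtype.ext (mul_right_cancel (hv.symm.trans hw))

theorem divisorEdge_flip_square {i j : ℕ} {u v w : Divisor d} (hij : i + 2 ≤ j)
    (hv : divisorEdge d i v u) (hw : divisorEdge d j w u) :
    ∃ t, divisorEdge d j t v ∧ divisorEdge d i t w := by
  obtain ⟨hi, hv⟩ := hv
  obtain ⟨hj, hw⟩ := hw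
  obtain ⟨z, hz, hz'⟩ := (lcmCofactor_of_mul_gen_eq (hv.symm.trans hw)).of_distant (.inl hij)
  exact ⟨⟨z, (Dvd.intro _ hz.symm).trans v.2⟩, ⟨hj, hz⟩, hi, hz'⟩

theorem divisorEdge_flip_hexagon {i : ℕ} {u v w : Divisor d} (hv : divisorEdge d i v u)
    (hw : divisorEdge d (i + 1) w u) : ∃ v' w' t, divisorEdge d (i + 1) v' v ∧
      divisorEdge d i t v' ∧ divisorEdge d i w' w ∧ divisorEdge d (i + 1) t w' := by
  obtain ⟨hi, hv⟩ := hv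
  obtain ⟨hj, hw⟩ := hw
  obtain ⟨z, hz, hz'⟩ := (lcmCofactor_of_mul_gen_eq (hv.symm.trans hw)).of_adjacent (.inl rfl)
  exact ⟨⟨_, (Dvd.intro _ hz.symm).trans v.2⟩, ⟨_, (Dvd.intro _ hz'.symm).trans w.2⟩,
    ⟨z, (Dvd.intro _ (hz.trans (mul_assoc _ _ _)).symm).trans v.2⟩, ⟨hj, hz⟩, ⟨hi, rfl⟩,
    ⟨hi, hz'⟩, hj, rfl⟩

theorem linked_of_eq_mul {x : BraidMonoid k} {u v : Divisor d} (h : v.1 = u.1 * x) :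
    Linked (divisorEdge d) 0 u v := by
  induction x using induction_gen_mul generalizing u v with
  | one => rw [Subtype.ext (h.trans (mul_one _))]
  | gen_mul i x ih =>
    rw [← mul_assoc] at h
    exact (ih (u := ⟨u.1 * gen i, (Dvd.intro _ h.symm).trans v.2⟩) h).head
      ⟨i, by omega, .inl ⟨i.2, rfl⟩⟩

end Divisors

section Comparison

open BraidMonoid Relation

variable {n k : ℕ} {d : BraidMonoid (n - 1)} {u v w : Divisor d}

/-- The braid leading from the divisor `u` to the divisor `v`. -/
def transition (u v : Divisor d) : Braid n := (toBraid n u.1)⁻¹ * toBraid n v.1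

theorem transition_self (u : Divisor d) : transition u u = 1 := inv_mul_cancel _

theorem transition_mul_transition (u v w : Divisor d) :
    transition u v * transition v w = transition u w := by
  simp only [transition]
  group

theorem transition_inv (u v : Divisor d) : (transition u v)⁻¹ = transition v u := by
  simp only [transition]
  group

theorem transition_of_divisorEdge (h : divisorEdge d k u v) :
    k + 1 < n ∧ transition u v = genσ n (k + 1) := by
  obtain ⟨hk, h⟩ := h
  exact ⟨by omega, by rw [transition, h, map_mul, inv_mul_cancel_left, toBraid_gen]⟩

theorem NonnegPath.transition_mem (h : NonnegPath (divisorEdge d) k u v) :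
    transition u v ∈ sigmaNonneg n (k + 1) := by
  induction h with
  | refl => exact transition_self u ▸ one_mem _
  | @tail a b _ hstep ih =>
    rw [← transition_mul_transition u a b]
    refine mul_mem ih ?_
    rcases hstep with h | ⟨j, hj, h | h⟩ <;> obtain ⟨hlt, h⟩ := transition_of_divisorEdge h
    · exact h ▸ genσ_mem_sigmaNonneg (by omega) le_rfl hlt
    · exact h ▸ genσ_mem_sigmaNonneg (by omega) (by omega) hlt
    · rw [← transition_inv, h]
      exact genσ_inv_mem_sigmaNonneg (by omega) hlt

theorem sigmaPositive_transition_of_divisorEdge (h : divisorEdge d k u v) :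
    SigmaPositive n (k + 1) (transition u v) := by
  obtain ⟨hlt, h⟩ := transition_of_divisorEdge h
  exact h ▸ sigmaPositive_genσ (by omega) hlt

theorem divisorEdge_acyclic (h : divisorEdge d k u v) : ¬NonnegPath (divisorEdge d) k v u := by
  intro hpath
  apply not_sigmaPositive_one (n := n) (i := k + 1)
  rw [← transition_self u, ← transition_mul_transition u v u]
  exact sigmaPositive_mul_of_mem_sigmaNonneg_right (sigmaPositive_transition_of_divisorEdge h)
    hpath.transition_mem

theorem isBraidGraph_divisorEdge (d : BraidMonoid (n - 1)) : IsBraidGraph (divisorEdge d) where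
  functional := divisorEdge_functional
  square := divisorEdge_square
  hexagon := divisorEdge_hexagon
  exchange hij := divisorEdge_exchange (.inl hij)
  acyclic := divisorEdge_acyclic

theorem isBraidGraph_flip_divisorEdge (d : BraidMonoid (n - 1)) :
    IsBraidGraph fun i => flip (divisorEdge d i) where
  functional := divisorEdge_flip_functional
  square := divisorEdge_flip_square
  hexagon := divisorEdge_flip_hexagon
  exchange hij hv hw := (divisorEdge_exchange (.inr hij) hw hv).imp fun _ h => h.symm
  acyclic h := fun hpath => divisorEdge_acyclic h (nonnegPath_flip.1 hpath)

theorem NonnegPath.sigmaPositive_or_linked (h : NonnegPath (divisorEdge d) k u v) :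
    SigmaPositive n (k + 1) (transition u v) ∨ Linked (divisorEdge d) (k + 1) u v := by
  refine h.linked_or_exists.symm.imp_left ?_
  rintro ⟨u', v', huu', hedge, hpath⟩
  rw [← transition_mul_transition u u' v, ← transition_mul_transition u' v' v]
  exact sigmaPositive_mul_of_mem_sigmaNonneg_left huu'.nonnegPath.transition_mem
    (sigmaPositive_mul_of_mem_sigmaNonneg_right (sigmaPositive_transition_of_divisorEdge hedge)
      hpath.transition_mem)

theorem Linked.eq_or_sigmaPositive (m : ℕ) (hm : n ≤ m + k) (h : Linked (divisorEdge d) k u v) :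
    u = v ∨ (∃ i, SigmaPositive n i (transition u v)) ∨
      ∃ i, SigmaPositive n i (transition v u) := by
  have hlt : ∀ i u v, divisorEdge d i u v → i < n := fun i u v h => by
    have := (transition_of_divisorEdge h).1
    omega
  induction m generalizing k u v with
  | zero =>
    left
    induction h with
    | refl => rfl
    | tail _ hlink _ =>
      obtain ⟨j, hj, h | h⟩ := hlink
      all_goals exact absurd (hlt _ _ _ h) (by omega)
  | succ m ih =>
    rcases (isBraidGraph_divisorEdge d).comparable_of_linked (isBraidGraph_flip_divisorEdge d) hlt
      n (by omega) h with hpath | hpath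
    · rcases hpath.sigmaPositive_or_linked with hpos | hlink
      · exact .inr (.inl ⟨_, hpos⟩)
      · exact ih (by omega) hlink
    · rcases hpath.sigmaPositive_or_linked with hpos | hlink
      · exact .inr (.inr ⟨_, hpos⟩)
      · exact ih (by omega) hlink.symm

theorem eq_one_or_sigmaPositive (β : Braid n) :
    β = 1 ∨ (∃ i, SigmaPositive n i β) ∨ ∃ i, SigmaPositive n i β⁻¹ := by
  obtain ⟨u, v, d, hu, hv, rfl⟩ := exists_inv_mul_eq β
  have hlink : Linked (divisorEdge d) 0 ⟨u, hu⟩ ⟨v, hv⟩ :=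
    (linked_of_eq_mul (u := ⟨1, one_dvd d⟩) (one_mul u).symm).symm.trans
      (linked_of_eq_mul (one_mul v).symm)
  have := hlink.eq_or_sigmaPositive n (by omega)
  rw [← transition_inv ⟨u, hu⟩] at this
  refine this.imp_left fun h => ?_
  obtain rfl : u = v := congrArg Subtype.val h
  exact inv_mul_cancel _

end Comparison

/-! ### The subword order -/

section Order

variable {n : ℕ} {α β γ : Braid n}

theorem dehornoyLt_iff : dehornoyLt n α β ↔ ∃ i, SigmaPositive n i (α⁻¹ * β) := by
  refine ⟨fun ⟨i, _, _, h⟩ => ⟨i, h⟩, fun ⟨i, h⟩ => ?_⟩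
  have hi := (sigmaPositive_iff.1 h).1
  exact ⟨i, hi.1, by omega, h⟩

theorem exists_sigmaPositive_mul {x y : Braid n} (hx : ∃ i, SigmaPositive n i x)
    (hy : ∃ i, SigmaPositive n i y) : ∃ i, SigmaPositive n i (x * y) := by
  obtain ⟨i, hx⟩ := hx
  obtain ⟨j, hy⟩ := hy
  rcases lt_trichotomy i j with hij | rfl | hij
  · exact ⟨i, sigmaPositive_mul_of_mem_sigmaNonneg_right hx
      (mem_sigmaNonneg_of_sigmaPositive_of_lt hij hy)⟩
  · exact ⟨i, sigmaPositive_mul_of_mem_sigmaNonneg_right hx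
      (mem_sigmaNonneg_of_sigmaPositive hy)⟩
  · exact ⟨j, sigmaPositive_mul_of_mem_sigmaNonneg_left
      (mem_sigmaNonneg_of_sigmaPositive_of_lt hij hx) hy⟩

theorem dehornoyLt_trans (hαβ : dehornoyLt n α β) (hβγ : dehornoyLt n β γ) :
    dehornoyLt n α γ := by
  rw [dehornoyLt_iff] at *
  simpa [mul_assoc] using exists_sigmaPositive_mul hαβ hβγ

theorem dehornoyLt_irrefl (α : Braid n) : ¬dehornoyLt n α α := by
  rw [dehornoyLt_iff, inv_mul_cancel]
  exact fun ⟨_, h⟩ => not_sigmaPositive_one h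

theorem dehornoyLt_trichotomous (α β : Braid n) :
    dehornoyLt n α β ∨ α = β ∨ dehornoyLt n β α := by
  rw [dehornoyLt_iff, dehornoyLt_iff, ← inv_mul_eq_one (a := α), ← inv_inv (β⁻¹ * α),
    mul_inv_rev, inv_inv]
  exact or_left_comm.1 (eq_one_or_sigmaPositive (α⁻¹ * β))

end Order

section Quasipositive

variable {n : ℕ} {α β γ : Braid n}

/-- The quasipositive braids: products of conjugates of the generators `σ_i`. They contain the
dual braid monoid, and unlike it they are stable under conjugation. -/
def quasipositive (n : ℕ) : Submonoid (Braid n) :=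
  Submonoid.closure (Group.conjugatesOfSet {x | ∃ i, (1 ≤ i ∧ i < n) ∧ genσ n i = x})

theorem mul_mul_inv_mem_quasipositive (hα : α ∈ quasipositive n) (β : Braid n) :
    β * α * β⁻¹ ∈ quasipositive n := by
  induction hα using Submonoid.closure_induction with
  | one => simp [one_mem]
  | mul x y _ _ hx hy => simpa using mul_mem hx hy
  | mem x hx => exact Submonoid.subset_closure (Group.conj_mem_conjugatesOfSet hx)

theorem braidAction_le_of_mem_quasipositive (hα : α ∈ quasipositive n) (w : ReducedWord ℕ) :
    braidAction n α w ≤ w := by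
  induction hα using Submonoid.closure_induction generalizing w with
  | one => simp
  | mul x y _ _ hx hy =>
    rw [map_mul, Equiv.Perm.mul_apply]
    exact (hx _).trans (hy _)
  | mem x hx =>
    obtain ⟨_, ⟨i, ⟨hi, hin⟩, rfl⟩, hconj⟩ := Group.mem_conjugatesOfSet_iff.1 hx
    obtain ⟨y, rfl⟩ := isConj_iff.1 hconj
    have hσ (v : ReducedWord ℕ) : braidAction n (genσ n i) v ≤ v := by
      rcases twist_eq_or_wordLT hi (e := 0) (by omega) (by omega) v.reduced with h | h
      · exact .inl (ReducedWord.ext (by rw [word_braidAction_genσ hi hin, h]))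
      · exact .inr (by rwa [word_braidAction_genσ hi hin])
    simpa using (braidAction_strictMono y).monotone (hσ (braidAction n y⁻¹ w))

theorem eq_one_or_sigmaPositive_of_mem_quasipositive (hα : α ∈ quasipositive n) :
    α = 1 ∨ ∃ i, SigmaPositive n i α := by
  rcases eq_one_or_sigmaPositive α with h | h | ⟨i, hi⟩
  · exact .inl h
  · exact .inr h
  · have hle := braidAction_le_of_mem_quasipositive hα (braidAction n α⁻¹ (basePoint i))
    have hlt := braidAction_basePoint_lt hi
    rw [← Equiv.Perm.mul_apply, ← map_mul, mul_inv_cancel, map_one, Equiv.Perm.one_apply] at hle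
    exact absurd hlt hle.not_gt

/-- The subword order: `α ≤ β` if `β` is obtained from `α` by inserting quasipositive factors.
Unlike `<_D`, it is compatible with multiplication on both sides. -/
instance : Preorder (Braid n) where
  le α β := α⁻¹ * β ∈ quasipositive n
  le_refl α := by simp [one_mem]
  le_trans α β γ hαβ hβγ := by simpa [mul_assoc] using mul_mem hαβ hβγ

theorem braid_le_iff : α ≤ β ↔ α⁻¹ * β ∈ quasipositive n := Iff.rfl

instance : MulLeftMono (Braid n) where
  elim α β γ h := by
    have h : β⁻¹ * γ ∈ quasipositive n := h
    change (α * β)⁻¹ * (α * γ) ∈ quasipositive n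
    rwa [mul_inv_rev, mul_assoc, inv_mul_cancel_left]

instance : MulRightMono (Braid n) where
  elim α β γ h := by
    have h : α⁻¹ * (β⁻¹ * γ) * α⁻¹⁻¹ ∈ quasipositive n := mul_mul_inv_mem_quasipositive h α⁻¹
    change (β * α)⁻¹ * (γ * α) ∈ quasipositive n
    simpa only [mul_inv_rev, inv_inv, mul_assoc] using h

theorem not_dehornoyLt_of_le (h : α ≤ β) : ¬dehornoyLt n β α := by
  intro hlt
  rcases eq_one_or_sigmaPositive_of_mem_quasipositive h with heq | hpos
  · exact dehornoyLt_irrefl β (inv_mul_eq_one.1 heq ▸ hlt)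
  · exact dehornoyLt_irrefl β (dehornoyLt_trans hlt (dehornoyLt_iff.2 hpos))

theorem le_mul_mul (hβ : 1 ≤ β) (hγ : 1 ≤ γ) : α ≤ β * α * γ := by
  simpa using mul_le_mul' (mul_le_mul' hβ (le_refl α)) hγ

theorem one_le_band (n i j : ℕ) : 1 ≤ band n i j := by
  rw [braid_le_iff, inv_one, one_mul]
  by_cases hi : i = 0 ∨ n ≤ i
  · simp [band, genσ_eq_one hi, one_mem]
  · exact Submonoid.subset_closure (Group.mem_conjugatesOfSet_iff.2
      ⟨_, ⟨i, by omega, rfl⟩, isConj_iff.2 ⟨_, rfl⟩⟩)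

end Quasipositive

section Band

variable {n i j k : ℕ}

theorem band_self_succ (n i : ℕ) : band n i (i + 1) = genσ n i := by
  simp [band]

theorem band_succ (hij : i < j) :
    band n i (j + 1) = genσ n j * band n i j * (genσ n j)⁻¹ := by
  obtain ⟨m, rfl⟩ := Nat.exists_eq_add_of_le' hij
  rw [band, band, show m + i.succ + 1 - 1 - i = m + 1 by omega,
    show m + i.succ - 1 - i = m by omega, List.range'_1_concat,
    show i + 1 + m = m + i.succ by omega]
  simp [mul_assoc]

theorem commute_genσ_band (hij : i < j) (hjk : j < k) : Commute (genσ n k) (band n i j) := by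
  induction j, hij using Nat.le_induction with
  | base =>
    rw [Nat.succ_eq_add_one, band_self_succ]
    exact (genσ_comm n (by omega)).symm
  | succ j hij ih =>
    have hσ : Commute (genσ n k) (genσ n j) := (genσ_comm n (by omega)).symm
    rw [band_succ hij]
    exact (hσ.mul_right (ih (by omega))).mul_right hσ.inv_right

theorem band_mul_band_comm (hij : i < j) (hjk : j < k) :
    band n j k * band n i j = band n i k * band n j k := by
  induction k, hjk using Nat.le_induction with
  | base => rw [Nat.succ_eq_add_one, band_self_succ, band_succ hij, inv_mul_cancel_right]
  | succ k hjk ih =>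
    rw [band_succ hjk, band_succ (hij.trans hjk)]
    have hc := (commute_genσ_band (n := n) hij hjk).inv_left.eq
    simp only [mul_assoc, hc, inv_mul_cancel_left]
    simp only [← mul_assoc (band n _ _), ih]

theorem band_braid (hi : 1 ≤ i) (hij : i < j) (hjn : j < n) :
    band n i j * genσ n j * band n i j = genσ n j * band n i j * genσ n j := by
  induction j, hij using Nat.le_induction with
  | base =>
    rw [Nat.succ_eq_add_one, band_self_succ]
    exact genσ_braid hi hjn
  | succ j hij ih =>
    have hc : Commute (genσ n (j + 1)) (band n i j) := commute_genσ_band hij j.lt_succ_self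
    have hσ := genσ_braid (n := n) (i := j) (by omega) hjn
    have hconj : band n i (j + 1) = (band n i j)⁻¹ * genσ n j * band n i j := by
      rw [band_succ hij, mul_inv_eq_iff_eq_mul, mul_assoc, mul_assoc, eq_inv_mul_iff_mul_eq,
        ← mul_assoc, ← mul_assoc]
      exact ih (by omega)
    rw [hconj]
    set a := band n i j
    set s := genσ n j
    set t := genσ n (j + 1)
    have hta : a * t * a⁻¹ = t := by rw [← hc.eq, mul_inv_cancel_right]
    have hat : a⁻¹ * t * a = t := by rw [mul_assoc, hc.eq, inv_mul_cancel_left]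
    calc a⁻¹ * s * a * t * (a⁻¹ * s * a)
      _ = a⁻¹ * s * (a * t * a⁻¹) * s * a := by group
      _ = a⁻¹ * (s * t * s) * a := by rw [hta]; group
      _ = (a⁻¹ * t * a) * (a⁻¹ * s * a) * (a⁻¹ * t * a) := by rw [hσ]; group
      _ = t * (a⁻¹ * s * a) * t := by rw [hat]

theorem band_mul_band_comm' (hi : 1 ≤ i) (hij : i < j) (hjk : j < k) (hkn : k ≤ n) :
    band n i j * band n i k = band n j k * band n i j := by
  induction k, hjk using Nat.le_induction with
  | base =>
    rw [Nat.succ_eq_add_one, band_self_succ, band_succ hij, ← mul_assoc, ← mul_assoc,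
      band_braid hi hij (by omega), mul_inv_cancel_right]
  | succ k hjk ih =>
    have hc := (commute_genσ_band (n := n) hij hjk).eq
    rw [band_succ hjk, band_succ (hij.trans hjk)]
    calc band n i j * (genσ n k * band n i k * (genσ n k)⁻¹)
      _ = genσ n k * (band n i j * band n i k) * (genσ n k)⁻¹ := by
        simp only [← mul_assoc, hc]
      _ = genσ n k * band n j k * (genσ n k)⁻¹ * (genσ n k * band n i j) * (genσ n k)⁻¹ := by
        rw [ih (by omega)]
        group
      _ = genσ n k * band n j k * (genσ n k)⁻¹ * band n i j := by
        rw [hc]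
        group

end Band

section EdgeBand

variable {n : ℕ}

/-- The band generator joining two strands, in whichever order they are given, and `1` on the
diagonal. Strands are numbered from `0` here, whereas `band` numbers them from `1`. -/
def edgeBand (i j : Fin n) : Braid n :=
  if i = j then 1 else band n (min i j + 1) (max i j + 1)

theorem edgeBand_self (i : Fin n) : edgeBand i i = 1 := if_pos rfl

theorem edgeBand_comm (i j : Fin n) : edgeBand i j = edgeBand j i := by
  simp only [edgeBand, min_comm, max_comm, eq_comm]

theorem edgeBand_of_lt {i j : Fin n} (hij : i < j) : edgeBand i j = band n (i + 1) (j + 1) := by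
  rw [edgeBand, if_neg hij.ne, min_eq_left hij.le, max_eq_right hij.le]

theorem one_le_edgeBand (i j : Fin n) : 1 ≤ edgeBand i j := by
  rw [edgeBand]
  split_ifs
  exacts [le_rfl, one_le_band _ _ _]

theorem edgeBand_mul_edgeBand_comm {i j k : Fin n} (hij : i < j) (hjk : j < k) :
    edgeBand j k * edgeBand i j = edgeBand i k * edgeBand j k ∧
      edgeBand i j * edgeBand i k = edgeBand j k * edgeBand i j := by
  rw [edgeBand_of_lt hij, edgeBand_of_lt hjk, edgeBand_of_lt (hij.trans hjk)]
  exact ⟨band_mul_band_comm (by simpa using hij) (by simpa using hjk),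
    band_mul_band_comm' (by omega) (by simpa using hij) (by simpa using hjk) (by omega)⟩

theorem edgeBand_le_mul_mul (i j k : Fin n) :
    edgeBand i k ≤ edgeBand i j * edgeBand j k * edgeBand i j := by
  have ha := one_le_edgeBand i j
  have hb := one_le_edgeBand j k
  rcases eq_or_ne i k with rfl | hik
  · rw [edgeBand_self]
    exact one_le_mul (one_le_mul ha hb) ha
  rcases eq_or_ne i j with rfl | hij
  · simp [edgeBand_self]
  rcases eq_or_ne j k with rfl | hjk
  · rw [edgeBand_self, mul_one]
    exact le_mul_of_one_le_right' ha
  rcases hij.lt_or_gt with hij | hij <;> rcases hjk.lt_or_gt with hjk | hjk <;>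
    rcases hik.lt_or_gt with hik | hik <;> try omega
  · refine (le_mul_mul ha hb).trans_eq ?_
    rw [mul_assoc, mul_assoc, (edgeBand_mul_edgeBand_comm hij hjk).1]
  · rw [edgeBand_comm j k] at hb ⊢
    refine (le_mul_mul hb ha).trans_eq ?_
    rw [(edgeBand_mul_edgeBand_comm hik hjk).1]
  · rw [edgeBand_comm j k, edgeBand_comm i k, mul_assoc,
      ← (edgeBand_mul_edgeBand_comm hik hij).1, ← mul_assoc]
    exact le_mul_of_one_le_left' (one_le_mul ha ha)
  · rw [edgeBand_comm i j] at ha ⊢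
    rw [(edgeBand_mul_edgeBand_comm hij hik).2, mul_assoc]
    exact le_mul_of_one_le_right' (one_le_mul ha ha)
  · rw [edgeBand_comm i j] at ha ⊢
    rw [edgeBand_comm i k, mul_assoc, (edgeBand_mul_edgeBand_comm hjk hik).2, ← mul_assoc]
    exact le_mul_mul ha hb
  · rw [edgeBand_comm i j] at ha ⊢
    rw [edgeBand_comm i k, edgeBand_comm j k, (edgeBand_mul_edgeBand_comm hjk hij).1, mul_assoc]
    exact le_mul_of_one_le_right' (one_le_mul ha ha)

end EdgeBand

/-! ### Maximal order types -/

open Ordinal Order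
open scoped Pointwise

universe u

section NaturalSum

variable {a a' b b' c o : Ordinal.{u}}

/-- The natural (Hessenberg) sum of ordinals: the least function that is strictly increasing in
both arguments. -/
noncomputable def naturalSum (a b : Ordinal.{u}) : Ordinal.{u} :=
  max (⨆ x : Set.Iio a, succ (naturalSum x.1 b)) (⨆ x : Set.Iio b, succ (naturalSum a x.1))
termination_by (a, b)
decreasing_by
  · exact Prod.Lex.left _ _ x.2
  · exact Prod.Lex.right _ x.2

theorem naturalSum_le_iff : naturalSum a b ≤ c ↔
    (∀ a' < a, naturalSum a' b < c) ∧ ∀ b' < b, naturalSum a b' < c := by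
  rw [naturalSum, max_le_iff, Ordinal.iSup_le_iff, Ordinal.iSup_le_iff]
  simp

theorem naturalSum_lt_naturalSum_left (h : a' < a) (b : Ordinal.{u}) :
    naturalSum a' b < naturalSum a b :=
  (naturalSum_le_iff.1 le_rfl).1 a' h

theorem naturalSum_lt_naturalSum_right (h : b' < b) (a : Ordinal.{u}) :
    naturalSum a b' < naturalSum a b :=
  (naturalSum_le_iff.1 le_rfl).2 b' h

theorem naturalSum_le_naturalSum (ha : a' ≤ a) (hb : b' ≤ b) :
    naturalSum a' b' ≤ naturalSum a b :=
  have hleft : StrictMono fun a => naturalSum a b' :=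
    fun _ _ h => naturalSum_lt_naturalSum_left h b'
  have hright : StrictMono (naturalSum a) := fun _ _ h => naturalSum_lt_naturalSum_right h a
  (hleft.monotone ha).trans (hright.monotone hb)

theorem mul_natCast_add_lt {k l : ℕ} (hkl : k < l) (ha : a < o) (b : Ordinal.{u}) :
    o * k + a < o * l + b :=
  calc o * k + a
    _ < o * k + o := (add_lt_add_iff_left _).2 ha
    _ = o * (k + 1 : ℕ) := by rw [Nat.cast_succ, mul_add_one]
    _ ≤ o * l := mul_le_mul_right (by exact_mod_cast hkl) o
    _ ≤ o * l + b := le_self_add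

theorem exists_eq_mul_natCast_add (h : a < o * ω) : ∃ (k : ℕ), ∃ x < o, a = o * k + x := by
  have ho : o ≠ 0 := by
    rintro rfl
    simp at h
  obtain ⟨k, hk⟩ := lt_omega0.1 ((lt_mul_iff_div_lt ho).1 h)
  exact ⟨k, a % o, mod_lt a ho, by rw [← hk, div_add_mod]⟩

theorem exists_eq_mul_natCast_add_of_lt {k : ℕ} {x : Ordinal.{u}} (hx : x < o)
    (ha : a < o * k + x) :
    ∃ (l : ℕ), ∃ y < o, a = o * l + y ∧ (l < k ∨ l = k ∧ y < x) := by
  have hkω : o * k + x ≤ o * ω :=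
    (mul_natCast_add_lt k.lt_succ_self hx 0).le.trans
      ((add_zero _).trans_le (mul_le_mul_right (natCast_lt_omega0 _).le o))
  obtain ⟨l, y, hy, rfl⟩ := exists_eq_mul_natCast_add (ha.trans_le hkω)
  refine ⟨l, y, hy, rfl, ?_⟩
  rcases lt_trichotomy l k with hlk | rfl | hkl
  · exact .inl hlk
  · exact .inr ⟨rfl, (add_lt_add_iff_left _).1 ha⟩
  · exact absurd ha (mul_natCast_add_lt hkl hx y).not_gt

theorem naturalSum_mul_natCast_add_le (ho : IsPrincipal naturalSum o) {k l : ℕ}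
    {x y : Ordinal.{u}} (hx : x < o) (hy : y < o) :
    naturalSum (o * k + x) (o * l + y) ≤ o * (k + l : ℕ) + naturalSum x y := by
  obtain ⟨a, ha⟩ : ∃ a, a = o * k + x := ⟨_, rfl⟩
  obtain ⟨b, hb⟩ : ∃ b, b = o * l + y := ⟨_, rfl⟩
  rw [← ha, ← hb]
  induction a, b using Prod.GameAdd.recursion (rα := (· < ·)) (rβ := (· < ·)) lt_wf lt_wf
    generalizing k l x y with | _ a b ih
  rw [naturalSum_le_iff]
  refine ⟨fun a' ha' => ?_, fun b' hb' => ?_⟩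
  · obtain ⟨k', x', hx', heq, hlt⟩ := exists_eq_mul_natCast_add_of_lt hx (ha ▸ ha')
    refine (ih a' b (.fst ha') hx' hy heq hb).trans_lt ?_
    rcases hlt with hk | ⟨rfl, hlt⟩
    · exact mul_natCast_add_lt (by omega) (ho hx' hy) _
    · exact (add_lt_add_iff_left _).2 (naturalSum_lt_naturalSum_left hlt y)
  · obtain ⟨l', y', hy', heq, hlt⟩ := exists_eq_mul_natCast_add_of_lt hy (hb ▸ hb')
    refine (ih a b' (.snd hb') hx hy' ha heq).trans_lt ?_
    rcases hlt with hl | ⟨rfl, hlt⟩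
    · exact mul_natCast_add_lt (by omega) (ho hx hy') _
    · exact (add_lt_add_iff_left _).2 (naturalSum_lt_naturalSum_right hlt x)

theorem isPrincipal_naturalSum_mul_omega0 (ho : IsPrincipal naturalSum o) :
    IsPrincipal naturalSum (o * ω) := by
  intro a b ha hb
  obtain ⟨k, x, hx, rfl⟩ := exists_eq_mul_natCast_add ha
  obtain ⟨l, y, hy, rfl⟩ := exists_eq_mul_natCast_add hb
  calc naturalSum (o * k + x) (o * l + y)
    _ ≤ o * (k + l : ℕ) + naturalSum x y := naturalSum_mul_natCast_add_le ho hx hy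
    _ < o * (k + l + 1 : ℕ) + 0 := mul_natCast_add_lt (Nat.lt_succ_self _) (ho hx hy) 0
    _ ≤ o * ω := (add_zero _).trans_le (mul_le_mul_right (natCast_lt_omega0 _).le o)

theorem isPrincipal_naturalSum_omega0_opow (d : Ordinal.{u}) :
    IsPrincipal naturalSum (ω ^ d) := by
  induction d using Ordinal.limitRecOn with
  | zero =>
    rintro a b ha hb
    rw [opow_zero, Order.lt_one_iff] at *
    subst ha hb
    exact le_antisymm (naturalSum_le_iff.2 (by simp)) zero_le
  | add_one d ih =>
    rw [opow_add_one]
    exact isPrincipal_naturalSum_mul_omega0 ih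
  | limit d hd ih =>
    rintro a b ha hb
    obtain ⟨d₁, hd₁, ha⟩ := (lt_opow_of_isSuccLimit omega0_ne_zero hd).1 ha
    obtain ⟨d₂, hd₂, hb⟩ := (lt_opow_of_isSuccLimit omega0_ne_zero hd).1 hb
    have hmax : max d₁ d₂ < d := max_lt hd₁ hd₂
    have hle {e : Ordinal.{u}} (he : e ≤ max d₁ d₂) : ω ^ e ≤ ω ^ max d₁ d₂ :=
      opow_le_opow_right omega0_pos he
    exact (ih _ hmax (ha.trans_le (hle (le_max_left _ _)))
      (hb.trans_le (hle (le_max_right _ _)))).trans_le (opow_le_opow_right omega0_pos hmax.le)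

end NaturalSum

section MaxType

variable {α : Type u} [Preorder α] {X Y : Set α} {a b : Ordinal.{u}}

/-- An upper bound on maximal order types: if `MaxTypeLT X a` then every linear order extending the
given preorder on `X` has type less than `ω ^ a`. In the spirit of de Jongh and Parikh, the type
of `X` is at most `ω ^ b` as soon as all residuals `X \ Ici x` have type less than `ω ^ b`. -/
inductive MaxTypeLT : Set α → Ordinal.{u} → Prop
  | empty (a : Ordinal.{u}) : MaxTypeLT ∅ a
  | mono {X Y : Set α} {a : Ordinal.{u}} : MaxTypeLT X a → Y ⊆ X → MaxTypeLT Y a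
  | union {X Y : Set α} {a : Ordinal.{u}} :
      MaxTypeLT X a → MaxTypeLT Y a → MaxTypeLT (X ∪ Y) a
  | of_residuals {X : Set α} {a b : Ordinal.{u}} :
      b < a → (∀ x ∈ X, MaxTypeLT (X \ Set.Ici x) b) → MaxTypeLT X a

/-- The non-strict version of `MaxTypeLT`: the maximal order type is at most `ω ^ b`. -/
def MaxTypeLE (X : Set α) (b : Ordinal.{u}) : Prop := ∀ x ∈ X, MaxTypeLT (X \ Set.Ici x) b

theorem MaxTypeLE.maxTypeLT (h : MaxTypeLE X b) (hba : b < a) : MaxTypeLT X a :=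
  .of_residuals hba h

theorem maxTypeLT_singleton (x : α) (ha : 0 < a) : MaxTypeLT {x} a := by
  refine .of_residuals ha fun y hy => (MaxTypeLT.empty _).mono ?_
  rw [Set.mem_singleton_iff] at hy
  rintro z ⟨hz, hnot⟩
  exact hnot (hy.trans hz.symm).le

theorem MaxTypeLT.biUnion {ι : Type*} {t : Set ι} (ht : t.Finite) {X : ι → Set α}
    (h : ∀ i ∈ t, MaxTypeLT (X i) a) : MaxTypeLT (⋃ i ∈ t, X i) a := by
  induction t, ht using Set.Finite.induction_on with
  | empty => simpa using MaxTypeLT.empty a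
  | insert _ _ ih =>
    rw [Set.biUnion_insert]
    exact (h _ (Set.mem_insert _ _)).union (ih fun i hi => h i (Set.mem_insert_of_mem _ hi))

end MaxType

section MaxTypeMul

variable {M : Type u} [Monoid M] [Preorder M] {X Y : Set M} {a b c : Ordinal.{u}}

theorem MaxTypeLT.mul_of_forall_left (hX : MaxTypeLT X a)
    (h : ∀ a' < a, ∀ X', MaxTypeLE X' a' → MaxTypeLT (X' * Y) c) : MaxTypeLT (X * Y) c := by
  induction hX with
  | empty => simpa using MaxTypeLT.empty c
  | mono _ hsub ih => exact (ih h).mono (Set.mul_subset_mul_right hsub)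
  | union _ _ ih₁ ih₂ => simpa [Set.union_mul] using (ih₁ h).union (ih₂ h)
  | of_residuals hlt hres _ => exact h _ hlt _ hres

theorem MaxTypeLT.mul_of_forall_right (hY : MaxTypeLT Y b)
    (h : ∀ b' < b, ∀ Y', MaxTypeLE Y' b' → MaxTypeLT (X * Y') c) : MaxTypeLT (X * Y) c := by
  induction hY with
  | empty => simpa using MaxTypeLT.empty c
  | mono _ hsub ih => exact (ih h).mono (Set.mul_subset_mul_left hsub)
  | union _ _ ih₁ ih₂ => simpa [Set.mul_union] using (ih₁ h).union (ih₂ h)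
  | of_residuals hlt hres _ => exact h _ hlt _ hres

variable [MulLeftMono M] [MulRightMono M]

theorem mul_diff_Ici_subset (X Y : Set M) (x y : M) :
    (X * Y) \ Set.Ici (x * y) ⊆ (X \ Set.Ici x) * Y ∪ X * (Y \ Set.Ici y) := by
  rintro _ ⟨⟨u, hu, v, hv, rfl⟩, hnot⟩
  by_cases hxu : x ≤ u
  · exact .inr ⟨u, hu, v, ⟨hv, fun hyv => hnot (mul_le_mul' hxu hyv)⟩, rfl⟩
  · exact .inl ⟨u, ⟨hu, hxu⟩, v, hv, rfl⟩

theorem MaxTypeLE.mul (hX : MaxTypeLE X a) (hY : MaxTypeLE Y b) :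
    MaxTypeLE (X * Y) (naturalSum a b) := by
  induction a, b using Prod.GameAdd.recursion (rα := (· < ·)) (rβ := (· < ·)) lt_wf lt_wf
    generalizing X Y with | _ a b ih
  rintro _ ⟨x, hx, y, hy, rfl⟩
  refine .mono (.union ?_ ?_) (mul_diff_Ici_subset X Y x y)
  · exact (hX x hx).mul_of_forall_left fun a' ha' X' hX' =>
      (ih a' b (.fst ha') hX' hY).maxTypeLT (naturalSum_lt_naturalSum_left ha' b)
  · exact (hY y hy).mul_of_forall_right fun b' hb' Y' hY' =>
      (ih a b' (.snd hb') hX hY').maxTypeLT (naturalSum_lt_naturalSum_right hb' a)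

theorem MaxTypeLT.mul (ha : IsPrincipal naturalSum a) (hX : MaxTypeLT X a)
    (hY : MaxTypeLT Y a) : MaxTypeLT (X * Y) a :=
  hX.mul_of_forall_left fun _ hb _ hX' => hY.mul_of_forall_right fun _ hc _ hY' =>
    (hX'.mul hY').maxTypeLT (ha hb hc)

theorem MaxTypeLT.pow (ha : IsPrincipal naturalSum a) (hpos : 0 < a) (hX : MaxTypeLT X a)
    (m : ℕ) : MaxTypeLT (X ^ m) a := by
  induction m with
  | zero =>
    rw [pow_zero]
    exact maxTypeLT_singleton 1 hpos
  | succ m ih => simpa [pow_succ] using ih.mul ha hX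

end MaxTypeMul

section RankedBelow

variable {α : Type u} (r : α → α → Prop) {X Y : Set α} {c d : Ordinal.{u}}

/-- The relation `r` on `X` admits a strictly increasing rank function with values below `c`. -/
def RankedBelow (X : Set α) (c : Ordinal.{u}) : Prop :=
  ∃ f : α → Ordinal.{u}, (∀ x ∈ X, ∀ y ∈ X, r x y → f x < f y) ∧ ∀ x ∈ X, f x < c

variable {r}

theorem RankedBelow.mono (h : RankedBelow r X c) (hYX : Y ⊆ X) : RankedBelow r Y c := by
  obtain ⟨f, hf, hlt⟩ := h
  exact ⟨f, fun x hx y hy => hf x (hYX hx) y (hYX hy), fun x hx => hlt x (hYX hx)⟩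

variable [IsTrans α r]

theorem rankedBelow_of_initialSegments
    (h : ∀ x ∈ X, ∃ d < c, RankedBelow r {y ∈ X | r y x} d) : RankedBelow r X c := by
  let rank (x : α) : Ordinal.{u} := sInf {d | RankedBelow r {y ∈ X | r y x} d}
  refine ⟨rank, fun x hx y hy hxy => ?_, fun x hx => ?_⟩
  · obtain ⟨d, -, hd⟩ := h y hy
    obtain ⟨f, hf, hlt⟩ : RankedBelow r {z ∈ X | r z y} (rank y) :=
      csInf_mem (s := {d | RankedBelow r {z ∈ X | r z y} d}) ⟨d, hd⟩
    refine (csInf_le' (s := {d | RankedBelow r {z ∈ X | r z x} d}) ?_).trans_lt (hlt x ⟨hx, hxy⟩)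
    have hsegment {z : α} (hz : z ∈ {z ∈ X | r z x}) : z ∈ {z ∈ X | r z y} :=
      ⟨hz.1, _root_.trans hz.2 hxy⟩
    exact ⟨f, fun z hz w hw => hf z (hsegment hz) w (hsegment hw),
      fun z hz => hf z (hsegment hz) x ⟨hx, hxy⟩ hz.2⟩
  · obtain ⟨d, hdc, hd⟩ := h x hx
    exact (csInf_le' (s := {d | RankedBelow r {y ∈ X | r y x} d}) hd).trans_lt hdc

theorem rankedBelow_of_residuals [Preorder α] (hr : ∀ x y, x ≤ y → ¬r y x)
    (h : ∀ x ∈ X, ∃ d < c, RankedBelow r (X \ Set.Ici x) d) : RankedBelow r X c := by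
  refine rankedBelow_of_initialSegments fun x hx => ?_
  obtain ⟨d, hd, hX⟩ := h x hx
  exact ⟨d, hd, hX.mono fun y hy => ⟨hy.1, fun hxy => hr x y hxy hy.2⟩⟩

theorem RankedBelow.exists_monotone_extension (h : RankedBelow r X c) :
    ∃ F : α → Ordinal.{u}, (∀ z, F z ≤ c) ∧ (∀ z ∈ X, F z < c) ∧
      (∀ z w, r z w → F z ≤ F w) ∧ ∀ z ∈ X, ∀ w, r z w → F z < F w := by
  obtain ⟨f, hf, hlt⟩ := h
  let F (z : α) : Ordinal.{u} := ⨆ x : {x // x ∈ X ∧ r x z}, succ (f x.1)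
  have hlt_F {x z : α} (hx : x ∈ X) (hxz : r x z) : f x < F z :=
    succ_le_iff.1 (Ordinal.le_iSup (fun x : {x // x ∈ X ∧ r x z} => succ (f x.1)) ⟨x, hx, hxz⟩)
  have hF_le {z : α} {d : Ordinal.{u}} (hd : ∀ x ∈ X, r x z → f x < d) : F z ≤ d :=
    Ordinal.iSup_le fun x => succ_le_iff.2 (hd x.1 x.2.1 x.2.2)
  have hF_le_f {z : α} (hz : z ∈ X) : F z ≤ f z := hF_le fun x hx hxz => hf x hx z hz hxz
  exact ⟨F, fun z => hF_le fun x hx _ => hlt x hx, fun z hz => (hF_le_f hz).trans_lt (hlt z hz),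
    fun z w hzw => hF_le fun x hx hxz => hlt_F hx (_root_.trans hxz hzw),
    fun z hz w hzw => (hF_le_f hz).trans_lt (hlt_F hz hzw)⟩

theorem RankedBelow.union (hX : RankedBelow r X c) (hY : RankedBelow r Y d) :
    RankedBelow r (X ∪ Y) (naturalSum c d) := by
  obtain ⟨F, hFle, hFlt, hFmono, hFstrict⟩ := hX.exists_monotone_extension
  obtain ⟨G, hGle, hGlt, hGmono, hGstrict⟩ := hY.exists_monotone_extension
  refine ⟨fun z => naturalSum (F z) (G z), fun x hx y _ hxy => ?_, fun x hx => ?_⟩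
  · rcases hx with hx | hx
    · exact (naturalSum_lt_naturalSum_left (hFstrict x hx y hxy) _).trans_le
        (naturalSum_le_naturalSum le_rfl (hGmono x y hxy))
    · exact (naturalSum_lt_naturalSum_right (hGstrict x hx y hxy) _).trans_le
        (naturalSum_le_naturalSum (hFmono x y hxy) le_rfl)
  · rcases hx with hx | hx
    · exact (naturalSum_lt_naturalSum_left (hFlt x hx) _).trans_le
        (naturalSum_le_naturalSum le_rfl (hGle x))
    · exact (naturalSum_lt_naturalSum_right (hGlt x hx) _).trans_le
        (naturalSum_le_naturalSum (hFle x) le_rfl)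

theorem MaxTypeLT.exists_rankedBelow [Preorder α] (hr : ∀ x y, x ≤ y → ¬r y x)
    {a : Ordinal.{u}} (h : MaxTypeLT X a) : ∃ c < ω ^ a, RankedBelow r X c := by
  induction h with
  | empty a => exact ⟨0, opow_pos _ omega0_pos, fun _ => 0, by simp, by simp⟩
  | mono _ hsub ih =>
    obtain ⟨c, hc, hX⟩ := ih
    exact ⟨c, hc, hX.mono hsub⟩
  | union _ _ ih₁ ih₂ =>
    obtain ⟨c, hc, hX⟩ := ih₁
    obtain ⟨d, hd, hY⟩ := ih₂
    exact ⟨_, isPrincipal_naturalSum_omega0_opow _ hc hd, hX.union hY⟩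
  | of_residuals hlt _ ih =>
    exact ⟨_, (opow_lt_opow_iff_right one_lt_omega0).2 hlt, rankedBelow_of_residuals hr ih⟩

theorem MaxTypeLE.rankedBelow [Preorder α] (hr : ∀ x y, x ≤ y → ¬r y x) {a : Ordinal.{u}}
    (h : MaxTypeLE X a) : RankedBelow r X (ω ^ a) :=
  rankedBelow_of_residuals hr fun x hx => (h x hx).exists_rankedBelow hr

end RankedBelow

/-! ### The upper bound -/

section Letters

variable {M : Type u} [Monoid M] {X S T : Set M} {x p y : M} {a : Ordinal.{u}}

/-- The elements of `Submonoid.closure S` that are letters, or that can be written without using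
all letters of `S`. -/
def properFactors (S : Set M) : Set M := S ∪ ⋃ T ∈ {T | T ⊂ S}, Submonoid.closure T

theorem mem_properFactors_of_mem_closure (hTS : T ⊂ S) (hy : y ∈ Submonoid.closure T) :
    y ∈ properFactors S :=
  .inr (Set.mem_biUnion (x := T) hTS hy)

variable [Preorder M] [MulLeftMono M]

theorem properFactors_subset_oneLE (hS : S ⊆ Submonoid.oneLE M) :
    properFactors S ⊆ Submonoid.oneLE M :=
  Set.union_subset hS (Set.iUnion₂_subset fun _ hT =>
    Submonoid.closure_le.2 (hT.subset.trans hS))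

variable [MulRightMono M]

theorem pow_diff_Ici_subset (hX : X ⊆ Submonoid.oneLE M) (x : M) (k : ℕ) :
    X ^ k \ Set.Ici x ⊆ (X \ Set.Ici x) ^ k := by
  induction k with
  | zero => exact fun y hy => hy.1
  | succ k ih =>
    rw [pow_succ, pow_succ]
    rintro _ ⟨⟨u, hu, v, hv, rfl⟩, hnot⟩
    have hu₁ : 1 ≤ u := Submonoid.pow_subset hX hu
    exact Set.mul_mem_mul
      (ih ⟨hu, fun hxu => hnot (le_mul_of_le_of_one_le hxu (hX hv))⟩)
      ⟨hv, fun hxv => hnot (le_mul_of_one_le_of_le hu₁ hxv)⟩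

theorem mem_properFactors_or_exists_eq_mul (hS : S ⊆ Submonoid.oneLE M)
    (hy : y ∈ Submonoid.closure S) (hTS : T ⊂ S) (hpT : p ∈ Submonoid.closure T)
    (hp : p ∈ upperBounds T) :
    p * y ∈ properFactors S ∨ ∃ q ∈ properFactors S, ∃ e ∈ properFactors S,
      q * e ∈ upperBounds S ∧ ∃ z ∈ Submonoid.closure S, p * y = q * e * z := by
  induction hy using Submonoid.closure_induction_left generalizing T p with
  | one =>
    rw [mul_one]
    exact .inl (mem_properFactors_of_mem_closure hTS hpT)
  | mul_left e he y hy ih =>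
    have hp₁ : 1 ≤ p := Submonoid.closure_le.2 (hTS.subset.trans hS) hpT
    have hbound : p * e ∈ upperBounds (insert e T) := by
      rintro f (rfl | hf)
      · exact le_mul_of_one_le_left' hp₁
      · exact le_mul_of_le_of_one_le (hp hf) (hS he)
    rw [← mul_assoc]
    by_cases hall : insert e T = S
    · exact .inr ⟨p, mem_properFactors_of_mem_closure hTS hpT, e, .inl he, hall ▸ hbound, y, hy,
        rfl⟩
    · refine ih ((Set.insert_subset he hTS.subset).ssubset_of_ne hall) (mul_mem ?_ ?_) hbound
      · exact Submonoid.closure_mono (Set.subset_insert e T) hpT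
      · exact Submonoid.subset_closure (Set.mem_insert e T)

/-- Reading a word greedily, one cuts off a factor above all letters each time every letter has
been seen. -/
theorem mem_properFactors_pow_or_exists_le (hS : S ⊆ Submonoid.oneLE M) (hne : S.Nonempty)
    (hy : y ∈ Submonoid.closure S) (m : ℕ) :
    y ∈ properFactors S ^ (2 * m + 1) ∨ ∃ u ∈ upperBounds S ^ m, u ≤ y := by
  induction m generalizing y with
  | zero => exact .inr ⟨1, by simp, Submonoid.closure_le.2 hS hy⟩
  | succ m ih =>
    have hempty : ∅ ⊂ S := Set.empty_ssubset.2 hne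
    have hone : (1 : M) ∈ properFactors S := mem_properFactors_of_mem_closure hempty (one_mem _)
    have hfactor := mem_properFactors_or_exists_eq_mul hS hy hempty (one_mem _) (by simp)
    rw [one_mul] at hfactor
    rcases hfactor with hy | ⟨q, hq, e, he, hqe, z, hz, rfl⟩
    · refine .inl (Set.pow_subset_pow_right hone (show 1 ≤ 2 * (m + 1) + 1 by omega) ?_)
      rwa [pow_one]
    rcases ih hz with hz | ⟨u, hu, huz⟩
    · left
      rw [show 2 * (m + 1) + 1 = 2 + (2 * m + 1) by ring, pow_add, pow_two]
      exact Set.mul_mem_mul (Set.mul_mem_mul hq he) hz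
    · refine .inr ⟨q * e * u, ?_, mul_le_mul_right huz _⟩
      rw [pow_succ']
      exact Set.mul_mem_mul hqe hu

/-- The elements lying below all products of sufficiently many elements of `F`. -/
def boundedByPowers (F : Set M) : Submonoid M where
  carrier := {x | ∃ N : ℕ, x ∈ lowerBounds (F ^ N)}
  one_mem' := ⟨0, by simp [lowerBounds]⟩
  mul_mem' := by
    rintro x y ⟨N, hx⟩ ⟨N', hy⟩
    refine ⟨N + N', ?_⟩
    rw [pow_add]
    rintro _ ⟨u, hu, v, hv, rfl⟩
    exact mul_le_mul' (hx hu) (hy hv)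

theorem boundedByPowers_of_le {F : Set M} (hxy : x ≤ y) (hy : y ∈ boundedByPowers F) :
    x ∈ boundedByPowers F := by
  obtain ⟨N, hN⟩ := hy
  exact ⟨N, fun u hu => hxy.trans (hN hu)⟩

theorem MaxTypeLT.closure_diff_Ici (ha : IsPrincipal naturalSum a) (hpos : 0 < a)
    (hfin : S.Finite) (hS : S ⊆ Submonoid.oneLE M) (hx : x ∈ boundedByPowers (upperBounds S))
    (h : ∀ T ⊂ S, MaxTypeLT ((Submonoid.closure T : Set M) \ Set.Ici x) a) :
    MaxTypeLT ((Submonoid.closure S : Set M) \ Set.Ici x) a := by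
  rcases S.eq_empty_or_nonempty with rfl | hne
  · rw [Submonoid.closure_empty]
    exact (maxTypeLT_singleton 1 hpos).mono Set.sdiff_subset
  have hfactors : MaxTypeLT (properFactors S \ Set.Ici x) a := by
    have hletters : MaxTypeLT S a := by
      simpa using MaxTypeLT.biUnion hfin fun e _ => maxTypeLT_singleton e hpos
    have hproper := MaxTypeLT.biUnion (hfin.finite_subsets.subset fun T hT => hT.1) h
    refine (hletters.union hproper).mono ?_
    rintro y ⟨hy | hy, hxy⟩
    · exact .inl hy
    · simp only [Set.mem_iUnion] at hy
      obtain ⟨T, hT, hyT⟩ := hy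
      exact .inr (Set.mem_biUnion hT ⟨hyT, hxy⟩)
  obtain ⟨N, hN⟩ := hx
  refine (hfactors.pow ha hpos (2 * N + 1)).mono ?_
  rintro y ⟨hy, hxy⟩
  refine pow_diff_Ici_subset (properFactors_subset_oneLE hS) x _ ⟨?_, hxy⟩
  exact (mem_properFactors_pow_or_exists_le hS hne hy N).resolve_right
    fun ⟨u, hu, huy⟩ => hxy ((hN hu).trans huy)

end Letters

section TriangularFamily

variable {V : Type*} {M : Type u} [Monoid M]

/-- The submonoid generated by the letters `b i j` attached to the edges `(i, j) ∈ E`. -/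
def edgeMonoid (b : V → V → M) (E : Set (V × V)) : Submonoid M :=
  Submonoid.closure (Function.uncurry b '' E)

/-- The edges of the graph of an equivalence relation. -/
def edges (s : Setoid V) : Set (V × V) := {p | s p.1 p.2}

theorem edgeMonoid_mono (b : V → V → M) : Monotone (edgeMonoid b) :=
  fun _ _ h => Submonoid.closure_mono (Set.image_mono h)

/-- A family of elements `b i j ≥ 1` satisfying a noncommutative triangle inequality, such as the
band generators `a_{i,j}`. -/
structure TriangularFamily [Preorder M] (b : V → V → M) : Prop where
  self : ∀ i, b i i = 1
  comm : ∀ i j, b i j = b j i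
  one_le : ∀ i j, 1 ≤ b i j
  le_mul_mul : ∀ i j k, b i k ≤ b i j * b j k * b i j

variable [Preorder M] {b : V → V → M} {s : Setoid V}

theorem TriangularFamily.edgeMonoid_edges_bot (hb : TriangularFamily b) :
    edgeMonoid b (edges ⊥) = ⊥ := by
  refine le_bot_iff.1 (Submonoid.closure_le.2 ?_)
  rintro _ ⟨⟨i, j⟩, hij : i = j, rfl⟩
  rw [hij]
  exact hb.self j

variable [MulLeftMono M] [MulRightMono M]

theorem TriangularFamily.equivalence (hb : TriangularFamily b) (F : Set M) :
    Equivalence fun i j => b i j ∈ boundedByPowers F where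
  refl i := by
    rw [hb.self]
    exact one_mem _
  symm h := by rwa [hb.comm]
  trans hij hjk := boundedByPowers_of_le (hb.le_mul_mul _ _ _) (mul_mem (mul_mem hij hjk) hij)

theorem TriangularFamily.edgeMonoid_le_boundedByPowers (hb : TriangularFamily b)
    (E : Set (V × V)) :
    edgeMonoid b (edges (Relation.EqvGen.setoid fun i j => (i, j) ∈ E)) ≤
      boundedByPowers (upperBounds (Function.uncurry b '' E)) := by
  set F := upperBounds (Function.uncurry b '' E)
  have hle : Relation.EqvGen.setoid (fun i j => (i, j) ∈ E) ≤ ⟨_, hb.equivalence F⟩ :=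
    Setoid.eqvGen_le fun i j hij => ⟨1, fun y hy => by
      rw [pow_one] at hy
      exact hy ⟨(i, j), hij, rfl⟩⟩
  refine Submonoid.closure_le.2 ?_
  rintro _ ⟨p, hp, rfl⟩
  exact hle hp

variable [Finite V]

theorem TriangularFamily.maxTypeLE_edgeMonoid (hb : TriangularFamily b) {a : Ordinal.{u}}
    (ha : IsPrincipal naturalSum a) (hpos : 0 < a)
    (h : ∀ t < s, MaxTypeLT (edgeMonoid b (edges t) : Set M) a) :
    MaxTypeLE (edgeMonoid b (edges s) : Set M) a := by
  intro x hx
  suffices hE : ∀ E ⊆ edges s, MaxTypeLT ((edgeMonoid b E : Set M) \ Set.Ici x) a from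
    hE _ subset_rfl
  intro E
  induction E using WellFoundedLT.induction with | _ E ih
  intro hEs
  let t := Relation.EqvGen.setoid fun i j => (i, j) ∈ E
  have hts : t ≤ s := Setoid.eqvGen_le fun _ _ hij => hEs hij
  rcases hts.lt_or_eq with hts | hts
  · refine (h t hts).mono (Set.sdiff_subset.trans (edgeMonoid_mono b ?_))
    exact fun p hp => Relation.EqvGen.rel _ _ hp
  · refine MaxTypeLT.closure_diff_Ici ha hpos (E.toFinite.image _) ?_ ?_ fun T hT => ?_
    · rintro _ ⟨p, -, rfl⟩
      exact hb.one_le _ _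
    · refine hb.edgeMonoid_le_boundedByPowers E (?_ : x ∈ edgeMonoid b (edges t))
      rwa [hts]
    · obtain ⟨E', hE', rfl⟩ := Set.subset_image_iff.1 hT.1
      have hlt : E' < E := hE'.ssubset_of_ne (by rintro rfl; exact hT.2 subset_rfl)
      exact ih E' hlt (hE'.trans hEs)

theorem natCard_quotient_lt {s t : Setoid V} (hst : s < t) :
    Nat.card (Quotient t) < Nat.card (Quotient s) := by
  by_contra! hcard
  have hsurj : Function.Surjective (Setoid.map_of_le hst.le) := by
    rintro ⟨x⟩
    exact ⟨⟦x⟧, rfl⟩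
  refine hst.not_ge fun x y hxy => Quotient.exact (s := s) ?_
  exact (hsurj.bijective_of_nat_card_le hcard).injective (Quotient.sound (s := t) hxy)

theorem TriangularFamily.maxTypeLE_edgeMonoid_of_card_le (hb : TriangularFamily b) {r : ℕ}
    (hr : Nat.card V ≤ Nat.card (Quotient s) + (r + 1)) :
    MaxTypeLE (edgeMonoid b (edges s) : Set M) (ω ^ (r : Ordinal.{u})) := by
  have hpos (r : ℕ) : 0 < ω ^ (r : Ordinal.{u}) := opow_pos _ omega0_pos
  induction r generalizing s with
  | zero =>
    refine hb.maxTypeLE_edgeMonoid (isPrincipal_naturalSum_omega0_opow _) (hpos 0) fun t hts => ?_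
    have := natCard_quotient_lt hts
    have ht : t = ⊥ := by
      by_contra hne
      have := natCard_quotient_lt (bot_lt_iff_ne_bot.2 hne)
      rw [Nat.card_congr Setoid.quotientBotEquiv] at this
      omega
    rw [ht, hb.edgeMonoid_edges_bot]
    exact maxTypeLT_singleton 1 (hpos 0)
  | succ r ih =>
    refine hb.maxTypeLE_edgeMonoid (isPrincipal_naturalSum_omega0_opow _) (hpos _) fun t hts => ?_
    have := natCard_quotient_lt hts
    refine (ih (by omega)).maxTypeLT ?_
    exact (opow_lt_opow_iff_right one_lt_omega0).2 (by exact_mod_cast r.lt_succ_self)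

end TriangularFamily

section DualMonoid

variable {n : ℕ}

instance : IsTrans (Braid n) (dehornoyLt n) := ⟨fun _ _ _ => dehornoyLt_trans⟩

theorem triangularFamily_edgeBand (n : ℕ) : TriangularFamily (edgeBand (n := n)) where
  self := edgeBand_self
  comm := edgeBand_comm
  one_le := one_le_edgeBand
  le_mul_mul := edgeBand_le_mul_mul

theorem dualMonoid_le_edgeMonoid (n : ℕ) :
    dualMonoid n ≤ edgeMonoid edgeBand (edges (⊤ : Setoid (Fin n))) := by
  refine Submonoid.closure_mono ?_
  rintro _ ⟨i, j, hi, hij, hj, rfl⟩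
  refine ⟨(⟨i - 1, by omega⟩, ⟨j - 1, by omega⟩), trivial, ?_⟩
  rw [Function.uncurry_apply_pair, edgeBand_of_lt (Fin.mk_lt_mk.2 (by omega))]
  congr <;> simp <;> omega

theorem rankedBelow_dualMonoid (hn : 2 ≤ n) :
    RankedBelow (dehornoyLt n) (dualMonoid n : Set (Braid n))
      (ω ^ (ω ^ ((n - 2 : ℕ) : Ordinal.{0}))) := by
  have : NeZero n := ⟨by omega⟩
  have hcard : Nat.card (Fin n) ≤ Nat.card (Quotient (⊤ : Setoid (Fin n))) + (n - 2 + 1) := by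
    have : 0 < Nat.card (Quotient (⊤ : Setoid (Fin n))) := Nat.card_pos
    rw [Nat.card_fin]
    omega
  exact (((triangularFamily_edgeBand n).maxTypeLE_edgeMonoid_of_card_le hcard).rankedBelow
    fun _ _ => not_dehornoyLt_of_le).mono (dualMonoid_le_edgeMonoid n)

end DualMonoid

/-! ### The lower bound -/

section TwistWords

/-- `w` is empty or starts with a letter smaller than `m`. -/
def HeadBelow (m : ℕ) (w : List ℕ) : Prop := ∀ a ∈ w.head?, a < m

/-- The action of the positive braid word `w` on words: the letter `i` acts by
`twist i (i + 1)`. -/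
def twists (w x : List ℕ) : List ℕ := w.foldr (fun i => twist i (i + 1)) x

variable {m p l : ℕ} {u v w x y : List ℕ}

theorem headBelow_cons_iff {a : ℕ} : HeadBelow m (a :: w) ↔ a < m := by
  simp [HeadBelow]

theorem HeadBelow.headAvoids (hw : HeadBelow m w) (hp : m ≤ p) : HeadAvoids p w := fun a ha => by
  have := hw a ha
  omega

theorem HeadBelow.twist (hw : HeadBelow m w) (hred : Reduced w) (hp : m ≤ p) :
    HeadBelow m (twist p (p + 1) w) := by
  rwa [HeadBelow, (hw.headAvoids hp).head?_twist hred]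

theorem HeadBelow.headD_lt (hw : HeadBelow m w) (hm : 1 ≤ m) : w.headD 0 < m := by
  cases w with
  | nil => exact hm
  | cons a w => exact hw a rfl

theorem le_of_mem_twist (hp : m ≤ p) (hx : ∀ a ∈ x, m ≤ a) :
    ∀ a ∈ twist p (p + 1) x, m ≤ a := by
  induction x with
  | nil => exact hx
  | cons b x ih =>
    rw [List.forall_mem_cons] at hx
    have hcancel {c : ℕ} {z : List ℕ} (hc : m ≤ c) (hz : ∀ a ∈ z, m ≤ a) :
        ∀ a ∈ cancelCons c z, m ≤ a := fun a ha =>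
      (mem_of_mem_cancelCons ha).elim (fun h => h ▸ hc) (hz a)
    rw [twist_cons, twistLetter]
    split_ifs
    exacts [hcancel hp (hcancel (by omega) (hcancel hp (ih hx.2))), hcancel hp (ih hx.2),
      hcancel hx.1 (ih hx.2)]

theorem twist_append_of_headBelow (hv : HeadBelow m v) (hred : Reduced v) (hp : m ≤ p)
    (hx : ∀ a ∈ x, m ≤ a) :
    twist p (p + 1) (x ++ v) = twist p (p + 1) x ++ twist p (p + 1) v := by
  induction x with
  | nil => rfl
  | cons b x ih =>
    rw [List.forall_mem_cons] at hx
    have hne {a : ℕ} (ha : m ≤ a) : (twist p (p + 1) v).head? ≠ some a := fun h =>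
      absurd (hv.twist hred hp a h) (by omega)
    rw [List.cons_append, twist_cons, twist_cons, ih hx.2, twistLetter, twistLetter]
    split_ifs
    · rw [cancelCons_append (hne hp), cancelCons_append (hne (by omega)),
        cancelCons_append (hne hp)]
    · rw [cancelCons_append (hne hp)]
    · rw [cancelCons_append (hne hx.1)]

theorem twist_append_of_forall_lt (hu : ∀ a ∈ u, p + 1 < a) (hred : Reduced (u ++ x)) :
    twist p (p + 1) (u ++ x) = u ++ twist p (p + 1) x := by
  induction u with
  | nil => rfl
  | cons a u ih =>
    rw [List.forall_mem_cons] at hu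
    rw [List.cons_append] at hred ⊢
    rw [twist_cons_of_ne hred (by omega) (by omega), ih hu.2 hred.of_cons, List.cons_append]

theorem twist_succ_cons (hw : HeadAvoids p w) (hred : Reduced w) :
    twist p (p + 1) ((p + 1) :: w) = p :: twist p (p + 1) w :=
  twist_alternating_append (hw.twist hred) true 1

theorem twist_cons_succ_cons (hw : HeadAvoids p w) (hred : Reduced w) :
    twist p (p + 1) (p :: (p + 1) :: w) = p :: (p + 1) :: twist p (p + 1) w :=
  twist_alternating_append (hw.twist hred) false 2

theorem twists_nil (x : List ℕ) : twists [] x = x := rfl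

theorem twists_cons (i : ℕ) (w x : List ℕ) :
    twists (i :: w) x = twist i (i + 1) (twists w x) := rfl

theorem twists_append (u w x : List ℕ) : twists (u ++ w) x = twists u (twists w x) :=
  List.foldr_append

theorem twists_right_nil (w : List ℕ) : twists w [] = [] := by
  induction w with
  | nil => rfl
  | cons i w ih => rw [twists_cons, ih, twist_nil]

theorem Reduced.twists (hx : Reduced x) (w : List ℕ) : Reduced (twists w x) := by
  cases w with
  | nil => exact hx
  | cons i w => exact reduced_twist ..

theorem le_of_mem_twists (hw : ∀ i ∈ w, m ≤ i) (hx : ∀ a ∈ x, m ≤ a) :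
    ∀ a ∈ twists w x, m ≤ a := by
  induction w with
  | nil => exact hx
  | cons i w ih =>
    rw [List.forall_mem_cons] at hw
    exact le_of_mem_twist hw.1 (ih hw.2)

theorem HeadBelow.twists (hv : HeadBelow m v) (hred : Reduced v) (hw : ∀ i ∈ w, m ≤ i) :
    HeadBelow m (twists w v) := by
  induction w with
  | nil => exact hv
  | cons i w ih =>
    rw [List.forall_mem_cons] at hw
    exact (ih hw.2).twist (hred.twists w) hw.1

theorem twists_append_of_headBelow (hv : HeadBelow m v) (hred : Reduced v)
    (hw : ∀ i ∈ w, m ≤ i) (hx : ∀ a ∈ x, m ≤ a) :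
    twists w (x ++ v) = twists w x ++ twists w v := by
  induction w with
  | nil => rfl
  | cons i w ih =>
    rw [List.forall_mem_cons] at hw
    rw [twists_cons, ih hw.2, twist_append_of_headBelow (hv.twists hred hw.2) (hred.twists w)
      hw.1 (le_of_mem_twists hw.2 hx), ← twists_cons, ← twists_cons]

theorem twists_cons_of_forall_lt (hw : ∀ i ∈ w, l < i) (hred : Reduced (l :: x)) :
    twists w (l :: x) = l :: twists w x := by
  induction w with
  | nil => rfl
  | cons i w ih =>
    rw [List.forall_mem_cons] at hw
    have hred' := hred.twists w
    rw [ih hw.2] at hred'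
    rw [twists_cons, ih hw.2, twist_cons_of_ne hred' (by omega) (by omega), ← twists_cons]

theorem WordLT.twists (hw : ∀ i ∈ w, 1 ≤ i) (hx : Reduced x) (hy : Reduced y)
    (h : WordLT 0 x y) : WordLT 0 (twists w x) (twists w y) := by
  induction w with
  | nil => exact h
  | cons i w ih =>
    rw [List.forall_mem_cons] at hw
    exact (wordLT_twist_iff hw.1 (by omega) (by omega) (hx.twists w) (hy.twists w)).2 (ih hw.2)

theorem wordLT_append_cons_iff {e d : ℕ} :
    WordLT e (u ++ d :: x) (u ++ d :: y) ↔ WordLT d x y := by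
  induction u generalizing e with
  | nil => exact wordLT_cons_cons_self
  | cons a u ih => exact wordLT_cons_cons_self.trans ih

theorem WordLT.append_of_headBelow {e : ℕ} (h : WordLT e u v) (hm : 1 ≤ m) (he : m ≤ e)
    (hu : ∀ a ∈ u, m ≤ a) (hv : ∀ a ∈ v, m ≤ a) (hx : HeadBelow m x) (hy : HeadBelow m y) :
    WordLT e (u ++ x) (v ++ y) := by
  have hx0 := hx.headD_lt hm
  have hy0 := hy.headD_lt hm
  induction u generalizing e v with
  | nil =>
    cases v with
    | nil => exact h.elim
    | cons b v =>
      rw [List.forall_mem_cons] at hv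
      rw [List.nil_append, List.cons_append,
        wordLT_iff_of_headD_ne (by rw [List.headD_cons]; omega)]
      simp only [WordLT, CyclicLT, List.headD_cons] at h ⊢
      omega
  | cons a u ih =>
    rw [List.forall_mem_cons] at hu
    cases v with
    | nil =>
      rw [List.nil_append, List.cons_append,
        wordLT_iff_of_headD_ne (by rw [List.headD_cons]; omega)]
      simp only [WordLT, CyclicLT, List.headD_cons] at h ⊢
      omega
    | cons b v =>
      rw [List.forall_mem_cons] at hv
      simp only [List.cons_append, WordLT] at h ⊢
      split_ifs at h ⊢
      exacts [ih h hu.1 hu.2 hv.2, h]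

end TwistWords

section Delta

/-- The word `l, l + 1, …, n`. -/
def delta (n l : ℕ) : List ℕ := List.Ico l (n + 1)

/-- The `k`-fold repetition of the word `l, l + 1, …, n`. -/
def deltaPow (n l k : ℕ) : List ℕ := (List.replicate k (delta n l)).flatten

variable {n l m k : ℕ} {w x : List ℕ}

theorem delta_eq_cons (h : l ≤ n) : delta n l = l :: delta n (l + 1) :=
  List.Ico.eq_cons (Nat.lt_succ_of_le h)

theorem delta_eq_concat (h : l ≤ n) : delta n l = List.Ico l n ++ [n] := List.Ico.succ_top h

theorem le_of_mem_delta {a : ℕ} (h : a ∈ delta n l) : l ≤ a := (List.Ico.mem.1 h).1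

theorem reduced_delta (n l : ℕ) : Reduced (delta n l) :=
  ((List.Ico.pairwise_lt l (n + 1)).imp ne_of_lt).isChain

theorem deltaPow_zero (n l : ℕ) : deltaPow n l 0 = [] := rfl

theorem deltaPow_succ (n l k : ℕ) : deltaPow n l (k + 1) = delta n l ++ deltaPow n l k := rfl

theorem deltaPow_add (n l k j : ℕ) : deltaPow n l (k + j) = deltaPow n l k ++ deltaPow n l j := by
  rw [deltaPow, List.replicate_add, List.flatten_append, deltaPow, deltaPow]

theorem deltaPow_succ' (n l k : ℕ) : deltaPow n l (k + 1) = deltaPow n l k ++ delta n l := by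
  rw [deltaPow_add, deltaPow_succ, deltaPow_zero, List.append_nil]

theorem exists_deltaPow_append_cons (h : l ≤ n) (k : ℕ) (x : List ℕ) :
    ∃ t, deltaPow n l k ++ l :: x = l :: t := by
  cases k with
  | zero => exact ⟨x, rfl⟩
  | succ k => exact ⟨_, by rw [deltaPow_succ, delta_eq_cons h]; rfl⟩

theorem exists_deltaPow_append_cons_cons (h : l + 1 ≤ n) (k : ℕ) (x : List ℕ) :
    ∃ t, deltaPow n l k ++ l :: (l + 1) :: x = l :: (l + 1) :: t := by
  cases k with
  | zero => exact ⟨x, rfl⟩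
  | succ k => exact ⟨_, by rw [deltaPow_succ, delta_eq_cons (by omega), delta_eq_cons h]; rfl⟩

theorem headAvoids_delta_append (h : l + 2 ≤ n) (x : List ℕ) :
    HeadAvoids l (delta n (l + 2) ++ x) := by
  rw [delta_eq_cons h, List.cons_append, headAvoids_cons_iff]
  omega

theorem twist_delta_add_two_append (hred : Reduced (delta n (l + 2) ++ x)) :
    twist l (l + 1) (delta n (l + 2) ++ x) = delta n (l + 2) ++ twist l (l + 1) x :=
  twist_append_of_forall_lt (fun _ ha => le_of_mem_delta ha) hred

theorem twist_delta_succ_append (h : l + 2 ≤ n) (hred : Reduced (delta n (l + 1) ++ x)) :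
    twist l (l + 1) (delta n (l + 1) ++ x) = l :: (delta n (l + 2) ++ twist l (l + 1) x) := by
  rw [delta_eq_cons (by omega), List.cons_append] at hred ⊢
  rw [twist_succ_cons (headAvoids_delta_append h x) hred.of_cons,
    twist_delta_add_two_append hred.of_cons]

theorem twist_delta_append (h : l + 2 ≤ n) (hred : Reduced (delta n l ++ x)) :
    twist l (l + 1) (delta n l ++ x) = delta n l ++ twist l (l + 1) x := by
  rw [delta_eq_cons (by omega), delta_eq_cons (by omega), List.cons_append, List.cons_append]
    at hred ⊢
  rw [twist_cons_succ_cons (headAvoids_delta_append h x) hred.of_cons.of_cons,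
    twist_delta_add_two_append hred.of_cons.of_cons, List.cons_append, List.cons_append]

theorem twist_deltaPow_append (h : l + 2 ≤ n) (hred : Reduced (deltaPow n l k ++ x)) :
    twist l (l + 1) (deltaPow n l k ++ x) = deltaPow n l k ++ twist l (l + 1) x := by
  induction k with
  | zero => rfl
  | succ k ih =>
    rw [deltaPow_succ, List.append_assoc] at hred ⊢
    rw [twist_delta_append h hred, ih hred.of_append, List.append_assoc]

theorem twist_delta_eq_self {p : ℕ} (hmp : m ≤ p) (hpn : p < n) :
    twist p (p + 1) (delta n m) = delta n m := by
  induction hmp using Nat.decreasingInduction with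
  | self =>
    have havoid : HeadAvoids p (delta n (p + 2)) := fun a ha => by
      have := le_of_mem_delta (List.mem_of_head? ha)
      omega
    have htail : twist p (p + 1) (delta n (p + 2)) = delta n (p + 2) := by
      have := twist_delta_add_two_append (l := p) (x := [])
        (by rw [List.append_nil]; exact reduced_delta n (p + 2))
      rwa [twist_nil, List.append_nil] at this
    rw [delta_eq_cons (by omega), delta_eq_cons (by omega),
      twist_cons_succ_cons havoid (reduced_delta n (p + 2)), htail]
  | of_succ m hmp ih =>
    have hred := reduced_delta n m
    rw [delta_eq_cons (by omega)] at hred ⊢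
    rw [twist_cons_of_ne hred (by omega) (by omega), ih]

theorem twists_delta_eq_self (hw : ∀ i ∈ w, m ≤ i ∧ i < n) :
    twists w (delta n m) = delta n m := by
  induction w with
  | nil => rfl
  | cons i w ih =>
    rw [List.forall_mem_cons] at hw
    rw [twists_cons, ih hw.2, twist_delta_eq_self hw.1.1 hw.1.2]

theorem twists_deltaPow_append_cons (hl : l ≤ n) (hw : ∀ i ∈ w, l + 1 ≤ i ∧ i < n)
    (hred : Reduced (deltaPow n l k ++ l :: x)) :
    twists w (deltaPow n l k ++ l :: x) = deltaPow n l k ++ l :: twists w x := by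
  have hlw : ∀ i ∈ w, l + 1 ≤ i := fun i hi => (hw i hi).1
  induction k with
  | zero => exact twists_cons_of_forall_lt hlw hred
  | succ k ih =>
    obtain ⟨t, ht⟩ := exists_deltaPow_append_cons hl k x
    have hbelow : HeadBelow (l + 1) (deltaPow n l k ++ l :: x) := by
      rw [ht, headBelow_cons_iff]
      exact l.lt_succ_self
    rw [deltaPow_succ, delta_eq_cons hl, List.append_assoc, List.cons_append] at hred ⊢
    rw [twists_cons_of_forall_lt hlw hred,
      twists_append_of_headBelow hbelow hred.of_cons.of_append hlw fun _ => le_of_mem_delta,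
      twists_delta_eq_self hw, ih hred.of_cons.of_append, List.append_assoc, List.cons_append]

end Delta

section Ladder

/-- The two words on which the words of a ladder at level `m` are evaluated. -/
def IsTestWord (n m : ℕ) (y : List ℕ) : Prop := y = delta n (m + 1) ∨ y = [m]

/-- A family of positive braid words in the letters `m, …, n - 1` whose actions on the test words
are strictly decreasing along the ordinals below `τ`. The common prefix of their values is what
allows one to pass from level `m` to level `m - 1`. -/
structure IsLadder (n m : ℕ) (τ : Ordinal.{u}) (F : Ordinal.{u} → List ℕ) : Prop where
  letters : ∀ o, ∀ i ∈ F o, m ≤ i ∧ i < n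
  prefix_eq : ∀ o < τ, ∀ y, IsTestWord n m y →
    ∃ g, twists (F o) y = delta n m ++ (delta n m ++ m :: (m + 1) :: g)
  wordLT : ∀ o o', o < o' → o' < τ → ∀ y, IsTestWord n m y →
    WordLT 0 (twists (F o') y) (twists (F o) y)

theorem IsTestWord.reduced {n m : ℕ} {y : List ℕ} (h : IsTestWord n m y) : Reduced y := by
  rcases h with rfl | rfl
  exacts [reduced_delta n (m + 1), List.isChain_singleton m]

theorem IsTestWord.le_of_mem {n m : ℕ} {y : List ℕ} (h : IsTestWord n m y) :
    ∀ a ∈ y, m ≤ a := by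
  rcases h with rfl | rfl
  exacts [fun a ha => (Nat.le_succ m).trans (le_of_mem_delta ha), by simp]

theorem twist_alternating_odd (m k : ℕ) :
    twist m (m + 1) (alternating m false (2 * k + 1)) = alternating m false (2 * k + 3) := by
  simpa [twist_nil, twistBlock, Nat.add_mod] using
    twist_alternating_append (p := m) (w := []) headAvoids_nil false (2 * k + 1)

theorem twists_replicate_alternating (m j k : ℕ) :
    twists (List.replicate k m) (alternating m false (2 * j + 1)) =
      alternating m false (2 * (k + j) + 1) := by
  induction k with
  | zero => rw [List.replicate_zero, twists_nil, zero_add]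
  | succ k ih =>
    rw [List.replicate_succ, twists_cons, ih, twist_alternating_odd]
    congr 1
    omega

theorem IsTestWord.exists_twists_replicate {m : ℕ} {y : List ℕ} (hy : IsTestWord (m + 1) m y) :
    ∃ c, ∀ k, twists (List.replicate (k + 4) m) y = alternating m false (2 * (k + c) + 7) := by
  rcases hy with rfl | rfl
  · refine ⟨0, fun k => ?_⟩
    have hdelta : twist m (m + 1) (delta (m + 1) (m + 1)) = alternating m false 1 := by
      rw [delta, List.Ico.succ_singleton, twist_succ_cons headAvoids_nil reduced_nil]
      rfl
    rw [show k + 4 = (k + 3) + 1 from rfl, List.replicate_succ', twists_append, twists_cons,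
      twists_nil, hdelta]
    exact twists_replicate_alternating m 0 (k + 3)
  · exact ⟨1, fun k => twists_replicate_alternating m 0 (k + 4)⟩

theorem isLadder_replicate {m : ℕ} (hm : 1 ≤ m) :
    IsLadder (m + 1) m (ω : Ordinal.{u})
      fun o => List.replicate (Cardinal.toNat o.card + 4) m where
  letters o i hi := by
    have := List.eq_of_mem_replicate hi
    omega
  prefix_eq o _ y hy := by
    obtain ⟨c, hc⟩ := hy.exists_twists_replicate
    have hdelta : delta (m + 1) m = [m, m + 1] := by
      rw [delta_eq_cons (Nat.le_succ m), delta, List.Ico.succ_singleton]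
    rw [hc, hdelta]
    exact ⟨_, rfl⟩
  wordLT o o' hlt ho' y hy := by
    obtain ⟨c, hc⟩ := hy.exists_twists_replicate
    obtain ⟨k', rfl⟩ := lt_omega0.1 ho'
    obtain ⟨k, rfl⟩ := lt_omega0.1 (hlt.trans ho')
    have hkk' : k < k' := Nat.cast_lt.1 hlt
    simp only [hc, card_nat, Cardinal.toNat_natCast]
    have := wordLT_alternating_append_same_iff (e := 0) hm headAvoids_nil headAvoids_nil false
      (2 * (k' + c) + 6) (2 * (k + c) + 6)
    rw [List.append_nil, List.append_nil] at this
    rw [this]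
    left
    simp [blockKey, Prod.Lex.toLex_lt_toLex, Nat.add_mod]
    omega

/-- The word obtained from the base-`τ` expansion with `r` digits of the ordinal `a` by replacing
each digit `d` by the word `F d`, followed by the letter `l`. -/
noncomputable def digitWord (F : Ordinal.{u} → List ℕ) (τ : Ordinal.{u}) (l : ℕ) :
    ℕ → Ordinal.{u} → List ℕ
  | 0, _ => []
  | r + 1, a => F (a / τ ^ r) ++ l :: digitWord F τ l r (a % τ ^ r)

variable {n l : ℕ} {τ : Ordinal.{u}} {F : Ordinal.{u} → List ℕ} {y : List ℕ}

theorem twists_digitWord_succ (F : Ordinal.{u} → List ℕ) (τ : Ordinal.{u}) (l r : ℕ)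
    (a : Ordinal.{u}) (y : List ℕ) :
    twists (digitWord F τ l (r + 1) a) y =
      twists (F (a / τ ^ r)) (twist l (l + 1) (twists (digitWord F τ l r (a % τ ^ r)) y)) := by
  rw [digitWord, twists_append, twists_cons]

theorem div_pow_lt (hτ : 0 < τ) {r : ℕ} {a : Ordinal.{u}} (h : a < τ ^ (r + 1)) :
    a / τ ^ r < τ := by
  rwa [← Ordinal.lt_mul_iff_div_lt (pow_pos hτ r).ne', ← pow_succ]

namespace IsLadder

theorem le_of_mem {m : ℕ} (H : IsLadder n m τ F) (o : Ordinal.{u}) : ∀ i ∈ F o, m ≤ i :=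
  fun i hi => (H.letters o i hi).1

theorem wordLT_of_base {m : ℕ} (hm : m ≤ n) (H : IsLadder n m τ F) (e : ℕ) {o o' : Ordinal.{u}}
    (hlt : o < o') (ho' : o' < τ) (hy : IsTestWord n m y) :
    WordLT e (twists (F o') y) (twists (F o) y) := by
  have h := H.wordLT o o' hlt ho' y hy
  obtain ⟨g, hg⟩ := H.prefix_eq o (hlt.trans ho') y hy
  obtain ⟨g', hg'⟩ := H.prefix_eq o' ho' y hy
  rw [hg, hg', delta_eq_cons hm] at h ⊢
  exact wordLT_cons_cons_self.2 (wordLT_cons_cons_self.1 h)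

theorem letters_digitWord (hl : l + 2 ≤ n) (H : IsLadder n (l + 1) τ F) (r : ℕ)
    (a : Ordinal.{u}) : ∀ i ∈ digitWord F τ l r a, l ≤ i ∧ i < n := by
  induction r generalizing a with
  | zero => simp [digitWord]
  | succ r ih =>
    intro i hi
    rw [digitWord, List.mem_append, List.mem_cons] at hi
    rcases hi with hi | rfl | hi
    · have := H.letters _ i hi
      omega
    · omega
    · exact ih _ i hi

theorem exists_twists_digitWord_one (hl : l + 2 ≤ n) (H : IsLadder n (l + 1) τ F)
    (hy : IsTestWord n l y) :
    ∃ y₁, IsTestWord n (l + 1) y₁ ∧ ∀ o, ∃ f, HeadBelow (l + 1) f ∧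
      twists (F o) (twist l (l + 1) y) = l :: (twists (F o) y₁ ++ f) := by
  rcases hy with rfl | rfl
  · refine ⟨delta n (l + 2), .inl rfl, fun o => ⟨[], by simp [HeadBelow], ?_⟩⟩
    have htwist := twist_delta_succ_append (x := []) hl
      (by rw [List.append_nil]; exact reduced_delta n (l + 1))
    rw [List.append_nil, twist_nil, List.append_nil] at htwist
    have hred : Reduced (l :: delta n (l + 2)) := htwist ▸ reduced_twist ..
    rw [htwist, twists_cons_of_forall_lt (H.le_of_mem o) hred, List.append_nil]
  · refine ⟨[l + 1], .inr rfl, fun o => ⟨[l], headBelow_cons_iff.2 l.lt_succ_self, ?_⟩⟩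
    have htwist : twist l (l + 1) [l] = l :: ([l + 1] ++ [l]) := twist_alternating_odd l 0
    have hred : Reduced (l :: ([l + 1] ++ [l])) := htwist ▸ reduced_twist ..
    rw [htwist, twists_cons_of_forall_lt (H.le_of_mem o) hred,
      twists_append_of_headBelow (headBelow_cons_iff.2 l.lt_succ_self) hred.of_cons.of_cons
        (H.le_of_mem o) (by simp),
      twists_cons_of_forall_lt (H.le_of_mem o) hred.of_cons.of_cons, twists_right_nil]

theorem twist_deltaPow_append_prefix (hl : l + 2 ≤ n) {k : ℕ} {g : List ℕ}
    (hred : Reduced (deltaPow n l k ++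
      l :: (delta n (l + 1) ++ (delta n (l + 1) ++ (l + 1) :: (l + 2) :: g)))) :
    twist l (l + 1) (deltaPow n l k ++
        l :: (delta n (l + 1) ++ (delta n (l + 1) ++ (l + 1) :: (l + 2) :: g))) =
      deltaPow n l (k + 1) ++
        l :: (delta n (l + 2) ++ l :: (l + 2) :: twist l (l + 1) g) := by
  rw [← List.cons_append, ← delta_eq_cons (by omega), ← List.append_assoc,
    ← deltaPow_succ'] at hred ⊢
  have hg : Reduced ((l + 2) :: g) := hred.of_append.of_append.of_cons
  rw [twist_deltaPow_append hl hred, twist_delta_succ_append hl hred.of_append,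
    twist_succ_cons (headAvoids_cons_iff.2 (by omega)) hg,
    twist_cons_of_ne hg (by omega) (by omega)]

theorem exists_twists_digitWord (hl : l + 2 ≤ n) (hτ : 0 < τ) (H : IsLadder n (l + 1) τ F)
    (hy : IsTestWord n l y) (r : ℕ) :
    ∃ y₁, IsTestWord n (l + 1) y₁ ∧ ∀ a < τ ^ (r + 1), ∃ f, HeadBelow (l + 1) f ∧
      twists (digitWord F τ l (r + 1) a) y =
        deltaPow n l r ++ l :: (twists (F (a / τ ^ r)) y₁ ++ f) := by
  induction r with
  | zero =>
    obtain ⟨y₁, hy₁, h⟩ := H.exists_twists_digitWord_one hl hy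
    exact ⟨y₁, hy₁, fun a _ => by rw [twists_digitWord_succ]; exact h _⟩
  | succ r ih =>
    obtain ⟨y₁, hy₁, ih⟩ := ih
    refine ⟨delta n (l + 2), .inl rfl, fun a _ => ?_⟩
    have hmod : a % τ ^ (r + 1) < τ ^ (r + 1) := mod_lt _ (pow_pos hτ _).ne'
    obtain ⟨f, -, hf⟩ := ih _ hmod
    obtain ⟨g, hg⟩ := H.prefix_eq _ (div_pow_lt hτ hmod) y₁ hy₁
    have hred := hy.reduced.twists (digitWord F τ l (r + 1) (a % τ ^ (r + 1)))
    rw [hf, hg, List.append_assoc, List.append_assoc, List.cons_append, List.cons_append]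
      at hred
    have htwist := twist_deltaPow_append_prefix hl hred
    have hred' := htwist ▸ reduced_twist l (l + 1) _
    have hbelow : HeadBelow (l + 1) (l :: (l + 2) :: twist l (l + 1) (g ++ f)) :=
      headBelow_cons_iff.2 l.lt_succ_self
    have htail := hred'.of_append.of_cons.of_append
    refine ⟨_, hbelow.twists htail (H.le_of_mem (a / τ ^ (r + 1))), ?_⟩
    rw [twists_digitWord_succ, hf, hg, List.append_assoc, List.append_assoc, List.cons_append,
      List.cons_append, htwist, twists_deltaPow_append_cons (by omega) (H.letters _) hred',
      twists_append_of_headBelow hbelow htail (H.le_of_mem _) fun _ ha =>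
        (Nat.le_succ _).trans (le_of_mem_delta ha)]

theorem wordLT_digitWord (hl₁ : 1 ≤ l) (hl : l + 2 ≤ n) (hτ : 0 < τ)
    (H : IsLadder n (l + 1) τ F) (hy : IsTestWord n l y) {r : ℕ} {a a' : Ordinal.{u}}
    (hlt : a < a') (ha' : a' < τ ^ r) :
    WordLT 0 (twists (digitWord F τ l r a') y) (twists (digitWord F τ l r a) y) := by
  induction r generalizing a a' with
  | zero =>
    rw [pow_zero, Order.lt_one_iff] at ha'
    exact absurd (ha' ▸ hlt) not_lt_zero
  | succ r ih =>
    rcases (Ordinal.div_le_left hlt.le (τ ^ r)).eq_or_lt with hdiv | hdiv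
    · have hmod : a % τ ^ r < a' % τ ^ r := by
        rw [← Ordinal.div_add_mod a (τ ^ r), ← Ordinal.div_add_mod a' (τ ^ r), hdiv] at hlt
        exact lt_of_add_lt_add_left hlt
      have hlt' := ih hmod (mod_lt _ (pow_pos hτ r).ne')
      rw [twists_digitWord_succ, twists_digitWord_succ, hdiv]
      exact ((wordLT_twist_iff hl₁ (by omega) (by omega) (hy.reduced.twists _)
        (hy.reduced.twists _)).2 hlt').twists
          (fun i hi => (Nat.le_add_left 1 l).trans (H.le_of_mem _ i hi)) (reduced_twist ..)
          (reduced_twist ..)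
    · obtain ⟨y₁, hy₁, h⟩ := H.exists_twists_digitWord hl hτ hy r
      obtain ⟨f, hf, hfa⟩ := h a (hlt.trans ha')
      obtain ⟨f', hf', hfa'⟩ := h a' ha'
      have hle (o : Ordinal.{u}) : ∀ i ∈ twists (F o) y₁, l + 1 ≤ i :=
        le_of_mem_twists (H.le_of_mem o) hy₁.le_of_mem
      have hF := (H.wordLT_of_base (by omega) (l + 1) hdiv (div_pow_lt hτ ha')
        hy₁).append_of_headBelow (by omega) le_rfl (hle _) (hle _) hf' hf
      obtain ⟨g, hg⟩ := H.prefix_eq _ (div_pow_lt hτ (hlt.trans ha')) y₁ hy₁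
      obtain ⟨g', hg'⟩ := H.prefix_eq _ (div_pow_lt hτ ha') y₁ hy₁
      rw [hfa, hfa', wordLT_append_cons_iff]
      rw [hg, hg', delta_eq_cons (by omega)] at hF ⊢
      exact wordLT_cons_cons_self.2 (wordLT_cons_cons_self.1 hF)

theorem exists_twists_digitWord_eq_deltaPow_append (hl : l + 2 ≤ n) (hτ : 0 < τ)
    (H : IsLadder n (l + 1) τ F) (hy : IsTestWord n l y) {r : ℕ} {a : Ordinal.{u}}
    (ha : a < τ ^ (r + 1)) :
    ∃ t, twists (digitWord F τ l (r + 1) a) y = deltaPow n l (r + 1) ++ (l + 1) :: t := by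
  obtain ⟨y₁, hy₁, h⟩ := H.exists_twists_digitWord hl hτ hy r
  obtain ⟨f, -, hf⟩ := h a ha
  obtain ⟨g, hg⟩ := H.prefix_eq _ (div_pow_lt hτ ha) y₁ hy₁
  rw [hf, hg, List.append_assoc, ← List.cons_append, ← delta_eq_cons (by omega),
    ← List.append_assoc, ← deltaPow_succ', delta_eq_cons (by omega)]
  exact ⟨_, rfl⟩

theorem wordLT_digitWord_of_lt (hl : l + 2 ≤ n) (hτ : 0 < τ) (H : IsLadder n (l + 1) τ F)
    (hy : IsTestWord n l y) {r r' : ℕ} (hrr' : r < r') {a a' : Ordinal.{u}}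
    (ha : a < τ ^ (r + 1)) (ha' : a' < τ ^ (r' + 1)) :
    WordLT 0 (twists (digitWord F τ l (r' + 1) a') y)
      (twists (digitWord F τ l (r + 1) a) y) := by
  obtain ⟨s, rfl⟩ := Nat.exists_eq_add_of_lt hrr'
  obtain ⟨t, ht⟩ := H.exists_twists_digitWord_eq_deltaPow_append hl hτ hy ha
  obtain ⟨t', ht'⟩ := H.exists_twists_digitWord_eq_deltaPow_append hl hτ hy ha'
  obtain ⟨p, hp⟩ : ∃ p, deltaPow n l (r + 1) = p ++ [n] :=
    ⟨deltaPow n l r ++ List.Ico l n, by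
      rw [deltaPow_succ', delta_eq_concat (by omega), List.append_assoc]⟩
  have hsplit : deltaPow n l (r + s + 1 + 1) =
      deltaPow n l (r + 1) ++ l :: (delta n (l + 1) ++ deltaPow n l s) := by
    rw [← List.cons_append, ← delta_eq_cons (by omega), ← deltaPow_succ, ← deltaPow_add]
    congr 1
    omega
  simp only [ht, ht', hsplit, hp, List.append_assoc, List.cons_append, List.nil_append]
  rw [wordLT_append_cons_iff, wordLT_iff_of_headD_ne] <;>
    simp only [List.headD_cons, CyclicLT] <;> omega

end IsLadder

/-- The number of digits used for `o`: enough for its base-`τ` expansion, and at least three in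
order to produce the prefix required of a ladder. -/
noncomputable def numDigits (τ o : Ordinal.{u}) : ℕ := max 3 (sInf {r : ℕ | o < τ ^ r})

theorem lt_pow_numDigits (hτ : 0 < τ) {o : Ordinal.{u}} (ho : ∃ r : ℕ, o < τ ^ r) :
    o < τ ^ numDigits τ o :=
  lt_of_lt_of_le (Nat.sInf_mem (s := {r : ℕ | o < τ ^ r}) ho)
    (pow_le_pow_right₀ (Order.one_le_iff_pos.2 hτ) (le_max_right _ _))

theorem numDigits_mono {o o' : Ordinal.{u}} (h : o ≤ o') (ho' : ∃ r : ℕ, o' < τ ^ r) :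
    numDigits τ o ≤ numDigits τ o' :=
  max_le_max_left 3 (Nat.sInf_le (h.trans_lt (Nat.sInf_mem ho')))

theorem exists_numDigits_eq (τ o : Ordinal.{u}) : ∃ k, numDigits τ o = k + 2 + 1 :=
  ⟨numDigits τ o - 3, (Nat.sub_add_cancel (le_max_left _ _)).symm⟩

theorem IsLadder.digitWord (hl₁ : 1 ≤ l) (hl : l + 2 ≤ n) (hτ : 0 < τ)
    (H : IsLadder n (l + 1) τ F) {τ' : Ordinal.{u}} (hτ' : ∀ o < τ', ∃ r : ℕ, o < τ ^ r) :
    IsLadder n l τ' fun o => digitWord F τ l (numDigits τ o) o where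
  letters o := H.letters_digitWord hl _ o
  prefix_eq o ho y hy := by
    obtain ⟨k, hk⟩ := exists_numDigits_eq τ o
    have hlt := lt_pow_numDigits hτ (hτ' o ho)
    rw [hk] at hlt ⊢
    obtain ⟨t, ht⟩ := H.exists_twists_digitWord_eq_deltaPow_append hl hτ hy hlt
    obtain ⟨g, hg⟩ : ∃ g, deltaPow n l (k + 1) ++ (l + 1) :: t = l :: (l + 1) :: g := by
      rw [deltaPow_succ', delta_eq_cons (by omega), delta_eq_cons (by omega), List.append_assoc]
      exact exists_deltaPow_append_cons_cons (by omega) k _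
    exact ⟨g, by rw [ht, deltaPow_succ, deltaPow_succ, List.append_assoc, List.append_assoc, hg]⟩
  wordLT o o' hlt ho' y hy := by
    have ho := lt_pow_numDigits hτ (hτ' o (hlt.trans ho'))
    have ho' := lt_pow_numDigits hτ (hτ' o' ho')
    rcases (numDigits_mono hlt.le (hτ' o' ‹_›)).eq_or_lt with heq | hnum
    · rw [← heq] at ho' ⊢
      exact H.wordLT_digitWord hl₁ hl hτ hy hlt ho'
    · obtain ⟨k, hk⟩ := exists_numDigits_eq τ o
      obtain ⟨k', hk'⟩ := exists_numDigits_eq τ o'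
      rw [hk] at ho hnum ⊢
      rw [hk'] at ho' hnum ⊢
      exact H.wordLT_digitWord_of_lt hl hτ hy (by omega) ho ho'

theorem exists_isLadder {n k : ℕ} (h : k + 2 ≤ n) :
    ∃ F, IsLadder n (n - 1 - k) (ω ^ (ω ^ (k : Ordinal.{u}))) F := by
  induction k with
  | zero =>
    obtain ⟨m, rfl⟩ := Nat.exists_eq_add_of_le' (Nat.one_le_of_lt h)
    exact ⟨_, by simpa using isLadder_replicate (m := m) (by omega)⟩
  | succ k ih =>
    obtain ⟨F, hF⟩ := ih (by omega)
    rw [show n - 1 - k = n - 1 - (k + 1) + 1 by omega] at hF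
    refine ⟨_, hF.digitWord (by omega) (by omega) (opow_pos _ omega0_pos) fun o ho => ?_⟩
    rw [Nat.cast_succ, opow_add, opow_one, opow_mul,
      lt_opow_of_isSuccLimit (opow_pos _ omega0_pos).ne' isSuccLimit_omega0] at ho
    obtain ⟨c, hc, hoc⟩ := ho
    obtain ⟨r, rfl⟩ := lt_omega0.1 hc
    exact ⟨r, by rwa [opow_natCast] at hoc⟩

end Ladder

/-! ### The order type -/

section OrderType

variable {α : Type u} (r : α → α → Prop) [IsWellOrder α r] {τ : Ordinal.{u}}

theorem type_le_of_strictMono {f : α → Ordinal.{u}} (hf : ∀ x y, r x y → f x < f y)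
    (hτ : ∀ x, f x < τ) : type r ≤ τ := by
  rw [← type_toType τ, type_le_iff']
  exact ⟨.ofMonotone (fun x => ToType.mk ⟨f x, hτ x⟩) fun x y h => ToType.mk.lt_iff_lt.2 (hf x y h)⟩

theorem le_type_of_strictMonoOn {g : Ordinal.{u} → α}
    (hg : ∀ o o', o < o' → o' < τ → r (g o) (g o')) : τ ≤ type r := by
  rw [← type_toType τ, type_le_iff']
  exact ⟨.ofMonotone (fun o => g (ToType.mk.symm o)) fun o o' h =>
    hg _ _ (by simpa using h) (ToType.mk.symm o').2⟩

end OrderType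

section LowerBound

variable {n : ℕ} {w : List ℕ}

theorem word_braidAction_prod_genσ (hw : ∀ i ∈ w, 1 ≤ i ∧ i < n) (x : ReducedWord ℕ) :
    (braidAction n (w.map (genσ n)).prod x).word = twists w x.word := by
  induction w with
  | nil => simp [twists_nil]
  | cons i w ih =>
    rw [List.forall_mem_cons] at hw
    rw [List.map_cons, List.prod_cons, map_mul, Equiv.Perm.mul_apply,
      word_braidAction_genσ hw.1.1 hw.1.2, ih hw.2, twists_cons]

theorem prod_genσ_mem_dualMonoid (hw : ∀ i ∈ w, 1 ≤ i ∧ i < n) :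
    (w.map (genσ n)).prod ∈ dualMonoid n := by
  refine Submonoid.list_prod_mem _ (List.forall_mem_map.2 fun i hi => ?_)
  obtain ⟨hi, hin⟩ := hw i hi
  exact Submonoid.subset_closure ⟨i, i + 1, hi, i.lt_succ_self, hin, (band_self_succ n i).symm⟩

theorem braidAction_basePoint_le_of_dehornoyLt {α β : Braid n} (h : dehornoyLt n α β) :
    braidAction n β (basePoint 1) ≤ braidAction n α (basePoint 1) := by
  obtain ⟨i, hi, -, hpos⟩ := h
  have hnonneg : α⁻¹ * β ∈ sigmaNonneg n 1 := by
    rcases hi.eq_or_lt with rfl | hi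
    exacts [mem_sigmaNonneg_of_sigmaPositive hpos, mem_sigmaNonneg_of_sigmaPositive_of_lt hi hpos]
  have := (braidAction_strictMono α).monotone (braidAction_basePoint_le hnonneg)
  rwa [← Equiv.Perm.mul_apply, ← map_mul, mul_inv_cancel_left] at this

theorem dehornoyLt_of_braidAction_basePoint_lt {α β : Braid n}
    (h : braidAction n β (basePoint 1) < braidAction n α (basePoint 1)) : dehornoyLt n α β := by
  rcases dehornoyLt_trichotomous α β with hlt | rfl | hgt
  · exact hlt
  · exact absurd h (lt_irrefl _)
  · exact absurd (braidAction_basePoint_le_of_dehornoyLt hgt) h.not_ge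

theorem exists_strictMonoOn_dualMonoid (hn : 2 ≤ n) :
    ∃ g : Ordinal.{0} → dualMonoid n, ∀ o o', o < o' →
      o' < ω ^ (ω ^ ((n - 2 : ℕ) : Ordinal.{0})) → dehornoyLt n (g o) (g o') := by
  obtain ⟨F, hF⟩ := exists_isLadder (show n - 2 + 2 ≤ n by omega)
  rw [show n - 1 - (n - 2) = 1 by omega] at hF
  refine ⟨fun o => ⟨_, prod_genσ_mem_dualMonoid (hF.letters o)⟩, fun o o' hlt ho' =>
    dehornoyLt_of_braidAction_basePoint_lt ?_⟩
  rw [ReducedWord.lt_iff, word_braidAction_prod_genσ (hF.letters o'),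
    word_braidAction_prod_genσ (hF.letters o)]
  exact hF.wordLT o o' hlt ho' [1] (.inr rfl)

end LowerBound

end Dehornoy

/-- Theorem (order type of the Dehornoy ordering on the dual braid monoid):
for every `n ≥ 2`, the restriction of `<_D` to `B_n^{+*}` is trichotomous, transitive
and well-founded, and its order type is `ω ^ (ω ^ (n - 2))`. -/
theorem dehornoy_dualMonoid_wellOrder_orderType (n : ℕ) (hn : 2 ≤ n) :
    IsTrichotomous (dualMonoid n) (fun a b => dehornoyLt n a.1 b.1) ∧
    Transitive (fun a b : dualMonoid n => dehornoyLt n a.1 b.1) ∧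
    WellFounded (fun a b : dualMonoid n => dehornoyLt n a.1 b.1) ∧
    ∃ hwo : IsWellOrder (dualMonoid n) (fun a b => dehornoyLt n a.1 b.1),
      @Ordinal.type (dualMonoid n) (fun a b => dehornoyLt n a.1 b.1) hwo =
        Ordinal.omega0 ^ (Ordinal.omega0 ^ ((n - 2 : ℕ) : Ordinal)) := by
  obtain ⟨f, hf, hfτ⟩ := Dehornoy.rankedBelow_dualMonoid hn
  obtain ⟨g, hg⟩ := Dehornoy.exists_strictMonoOn_dualMonoid hn
  have htri : Std.Trichotomous fun a b : dualMonoid n => dehornoyLt n a.1 b.1 :=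
    ⟨fun a b hab hba => Subtype.ext <|
      ((Dehornoy.dehornoyLt_trichotomous a.1 b.1).resolve_left hab).resolve_right hba⟩
  have hwf : WellFounded fun a b : dualMonoid n => dehornoyLt n a.1 b.1 :=
    Subrelation.wf (fun {a b} h => hf a.1 a.2 b.1 b.2 h)
      (InvImage.wf (fun a : dualMonoid n => f a.1) Ordinal.lt_wf)
  have hwo : IsWellOrder (dualMonoid n) (fun a b => dehornoyLt n a.1 b.1) :=
    { wf := hwf, trichotomous := htri.trichotomous }
  refine ⟨htri, fun a b c => Dehornoy.dehornoyLt_trans, hwf, hwo, le_antisymm ?_ ?_⟩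
  · exact Dehornoy.type_le_of_strictMono _ (fun x y => hf x.1 x.2 y.1 y.2) fun x => hfτ x.1 x.2
  · exact Dehornoy.le_type_of_strictMonoOn _ hg
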